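/- Let r,s ∈ (4/3,∞] with 1 < 2/r + 3/s < 3/2. Suppose that for some ν > 0 the set of data u₀ ∈ L²_σ admitting a weak solution u ∈ W_ν(u₀) with ‖u‖_{L^r(0,∞;L^s)} < ∞ is non-meagre in L²_σ. Then there exists C > 0 such that for every ν > 0 and every u₀ ∈ L²_σ there exists a weak solution u^ν ∈ W_ν(u₀) with ‖u^ν‖_{L^∞(0,∞;L²)} + √ν ‖∇u^ν‖_{L²(0,∞;L²)} ≤ C ‖u₀‖_{L²} and ‖u^ν‖_{L^r(0,∞;L^s)} ≤ C ν^{−3(5/(3r)+2/s−1)} ‖u₀‖_{L²}^{2(2/r+3/s−1)}. (This is the implication (i) ⇒ (ii) of the main theorem in the case X = L^s(ℝ³;ℝ³), Z = L²_σ.) -/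

import Mathlib

open MeasureTheory ENNReal Set Filter

noncomputable section

abbrev E3 : Type := EuclideanSpace ℝ (Fin 3)

/-- Spatial partial derivative of a scalar function in the `j`-th coordinate direction. -/
def pd (f : E3 → ℝ) (j : Fin 3) (x : E3) : ℝ :=
  fderiv ℝ f x (EuclideanSpace.single j 1)

/-- Divergence-free in the sense of distributions. -/
def IsDivFree (v : E3 → E3) : Prop :=
  ∀ φ : E3 → ℝ, ContDiff ℝ (⊤ : ℕ∞) φ → HasCompactSupport φ →
    ∫ x : E3, ∑ i, v x i * pd φ i x = 0

/-- The space-time measure on `(0,∞) × ℝ³`. -/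
def μST : Measure (ℝ × E3) := (volume.restrict (Ioi (0:ℝ))).prod volume

/-- Mixed norm `L^r(I; L^s)`. -/
def mixedNorm (r s : ℝ≥0∞) (I : Set ℝ) (u : ℝ → E3 → E3) : ℝ≥0∞ :=
  if r = ∞ then essSup (fun t => eLpNorm (u t) s volume) (volume.restrict I)
  else (∫⁻ t in I, (eLpNorm (u t) s volume) ^ r.toReal) ^ (1 / r.toReal)

/-- Squared spatial `L²` norm of the (matrix-valued) gradient at time `t`. -/
def gradSq (G : ℝ → E3 → Fin 3 → Fin 3 → ℝ) (t : ℝ) : ℝ≥0∞ :=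
  ∫⁻ x : E3, ∑ i, ∑ j, ENNReal.ofReal ((G t x i j) ^ 2)

/-- `L²((0,∞); L²)` norm of the gradient. -/
def gradL2 (G : ℝ → E3 → Fin 3 → Fin 3 → ℝ) : ℝ≥0∞ :=
  (∫⁻ t in Ioi (0:ℝ), gradSq G t) ^ (1/2 : ℝ)

/-- `G` is the distributional spatial gradient of `u` on `ℝ³ × (0,∞)`. -/
def IsDistGrad (u : ℝ → E3 → E3) (G : ℝ → E3 → Fin 3 → Fin 3 → ℝ) : Prop :=
  ∀ ψ : ℝ × E3 → ℝ, ContDiff ℝ (⊤ : ℕ∞) ψ → HasCompactSupport ψ →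
    tsupport ψ ⊆ {p | 0 < p.1} → ∀ i j,
    (∫ p, u p.1 p.2 i * pd (fun y => ψ (p.1, y)) j p.2 ∂μST)
      = - ∫ p, G p.1 p.2 i j * ψ p ∂μST

/-- Admissible space-time test function: smooth, compactly supported in `ℝ³ × [0,∞)`
and divergence-free. -/
def IsTest (φ : ℝ × E3 → E3) : Prop :=
  ContDiff ℝ (⊤ : ℕ∞) φ ∧ HasCompactSupport φ ∧
    ∀ p : ℝ × E3, ∑ i, pd (fun y => φ (p.1, y) i) i p.2 = 0

def timeDeriv (φ : ℝ × E3 → E3) (p : ℝ × E3) (i : Fin 3) : ℝ :=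
  deriv (fun τ => φ (τ, p.2) i) p.1

def spaceLap (φ : ℝ × E3 → E3) (p : ℝ × E3) (i : Fin 3) : ℝ :=
  ∑ j, pd (fun y => pd (fun z => φ (p.1, z) i) j y) j p.2

def spaceGrad (φ : ℝ × E3 → E3) (p : ℝ × E3) (i j : Fin 3) : ℝ :=
  pd (fun y => φ (p.1, y) i) j p.2

/-- Weak solution of the Navier–Stokes equations on `ℝ³ × (0,∞)` with viscosity `ν`,
datum `u₀` and distributional spatial gradient `G`. -/
def IsWeakNS (ν : ℝ) (u₀ : E3 → E3) (u : ℝ → E3 → E3)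
    (G : ℝ → E3 → Fin 3 → Fin 3 → ℝ) : Prop :=
  AEStronglyMeasurable (Function.uncurry u) μST ∧
  mixedNorm ∞ 2 (Ioi 0) u < ∞ ∧
  (∀ᵐ t ∂(volume.restrict (Ioi (0:ℝ))), IsDivFree (u t)) ∧
  AEStronglyMeasurable (Function.uncurry G) μST ∧
  (∫⁻ t in Ioi (0:ℝ), gradSq G t) < ∞ ∧
  IsDistGrad u G ∧
  ∀ φ : ℝ × E3 → E3, IsTest φ →
    (∫ p,
        ((∑ i, u p.1 p.2 i * (timeDeriv φ p i + ν * spaceLap φ p i)) +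
         ∑ i, ∑ j, u p.1 p.2 i * u p.1 p.2 j * spaceGrad φ p i j) ∂μST)
      = - ∫ x : E3, ∑ i, u₀ x i * φ (0, x) i

/-- Leray–Hopf solution: weak solution satisfying the energy inequality. -/
def IsLerayHopf (ν : ℝ) (u₀ : E3 → E3) (u : ℝ → E3 → E3)
    (G : ℝ → E3 → Fin 3 → Fin 3 → ℝ) : Prop :=
  IsWeakNS ν u₀ u G ∧
  ∀ᵐ t ∂(volume.restrict (Ioi (0:ℝ))),
    ENNReal.ofReal (1/2) * (eLpNorm (u t) 2 volume) ^ (2:ℕ)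
        + ENNReal.ofReal ν * ∫⁻ τ in Ioc (0:ℝ) t, gradSq G τ
      ≤ ENNReal.ofReal (1/2) * (eLpNorm u₀ 2 volume) ^ (2:ℕ)

/-- `L²_σ`: divergence-free fields in `L²(ℝ³;ℝ³)`, as a subset of `L²`. -/
def L2σ : Set (Lp E3 2 (volume : Measure E3)) := {v | IsDivFree ⇑v}

open scoped Topology

theorem hasFDerivAt_comp_norm_sq {q : ℝ → ℝ} (hq : Differentiable ℝ q) (x : E3) :
    HasFDerivAt (fun y : E3 => q (‖y‖ ^ 2))
      (deriv q (‖x‖ ^ 2) • ((2 : ℕ) • innerSL ℝ x)) x :=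
  (hq (‖x‖ ^ 2)).hasDerivAt.comp_hasFDerivAt x (hasStrictFDerivAt_norm_sq x).hasFDerivAt

theorem pd_comp_norm_sq {q : ℝ → ℝ} (hq : Differentiable ℝ q) (j : Fin 3) (x : E3) :
    pd (fun y : E3 => q (‖y‖ ^ 2)) j x = 2 * deriv q (‖x‖ ^ 2) * x j := by
  rw [pd, (hasFDerivAt_comp_norm_sq hq x).fderiv]
  simp [EuclideanSpace.inner_single_right]
  ring

theorem pd_comp_norm_sq_mul_coord {q : ℝ → ℝ} (hq : Differentiable ℝ q) (j : Fin 3) (x : E3) :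
    pd (fun y : E3 => q (‖y‖ ^ 2) * y j) j x
      = 2 * deriv q (‖x‖ ^ 2) * x j ^ 2 + q (‖x‖ ^ 2) := by
  have hj : HasFDerivAt (fun y : E3 => y j) (EuclideanSpace.proj j : E3 →L[ℝ] ℝ) x :=
    (EuclideanSpace.proj j : E3 →L[ℝ] ℝ).hasFDerivAt
  have h : HasFDerivAt (fun y : E3 => q (‖y‖ ^ 2) * y j) _ x :=
    (hasFDerivAt_comp_norm_sq hq x).mul hj
  rw [pd, h.fderiv]
  simp [EuclideanSpace.inner_single_right]
  ring

theorem pd_const_mul (c : ℝ) {f : E3 → ℝ} (j : Fin 3) (x : E3) :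
    pd (fun y => c * f y) j x = c * pd f j x := by
  simp only [pd]
  rw [show (fun y => c * f y) = c • f from rfl, fderiv_const_smul_field]
  simp

theorem pd_sub {f g : E3 → ℝ} {j : Fin 3} {x : E3} (hf : DifferentiableAt ℝ f x)
    (hg : DifferentiableAt ℝ g x) :
    pd (fun y => f y - g y) j x = pd f j x - pd g j x := by
  simp only [pd]
  rw [show (fun y => f y - g y) = f - g from rfl, fderiv_sub hf hg]
  simp

theorem pd_comp_smul_add (c : ℝ) (z : E3) {f : E3 → ℝ} (hf : Differentiable ℝ f)
    (j : Fin 3) (x : E3) :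
    pd (fun y => f (c • y + z)) j x = c * pd f j (c • x + z) := by
  have h1 : HasFDerivAt (fun y : E3 => c • y + z) (c • ContinuousLinearMap.id ℝ E3) x :=
    ((hasFDerivAt_id x).const_smul c).add_const z
  have h2 : HasFDerivAt (fun y : E3 => f (c • y + z)) _ x :=
    (hf (c • x + z)).hasFDerivAt.comp x h1
  rw [pd, h2.fderiv]
  simp [pd]

theorem contDiff_pd {f : E3 → ℝ} (hf : ContDiff ℝ (⊤ : ℕ∞) f) (j : Fin 3) :
    ContDiff ℝ (⊤ : ℕ∞) (pd f j) :=
  (hf.fderiv_right (m := (⊤ : ℕ∞)) (by simp)).clm_apply contDiff_const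

theorem exists_contDiff_eq_inv_sqrt :
    ∃ f : ℝ → ℝ, ContDiff ℝ (⊤ : ℕ∞) f ∧ ∀ s, 1 ≤ s → f s = s ^ (-(1 / 2) : ℝ) := by
  refine ⟨fun s => Real.smoothTransition (2 * s - 1) * s ^ (-(1 / 2) : ℝ), ?_, ?_⟩
  · rw [contDiff_iff_contDiffAt]
    intro s
    by_cases hs : s < 1 / 2
    · refine (contDiffAt_const (c := (0 : ℝ))).congr_of_eventuallyEq ?_
      filter_upwards [Iio_mem_nhds hs] with y hy
      have hy' : y < 1 / 2 := hy
      rw [Real.smoothTransition.zero_of_nonpos (by linarith)]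
      simp
    · have hs0 : s ≠ 0 := by intro h; apply hs; rw [h]; norm_num
      have h1 : ContDiffAt ℝ (⊤ : ℕ∞) (fun s : ℝ => 2 * s - 1) s := by fun_prop
      exact (Real.smoothTransition.contDiff.contDiffAt.comp s h1).mul
        (Real.contDiffAt_rpow_const_of_ne hs0)
  · intro s hs
    simp only
    rw [Real.smoothTransition.one_of_one_le (by linarith), one_mul]

theorem lintegral_ball_inv_norm_sq_le :
    ∃ C : ℝ, 0 ≤ C ∧ ∀ R : ℝ, 0 < R →
      ∫⁻ x : E3, (Metric.ball (0 : E3) R).indicator (fun x => ENNReal.ofReal ((‖x‖ ^ 2)⁻¹)) x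
        ≤ ENNReal.ofReal (C * R) := by
  refine ⟨3 * (volume : Measure E3).real (Metric.ball 0 1), by positivity, fun R hR => ?_⟩
  let f : ℝ → ℝ := (Iio R).indicator fun r => (r ^ 2)⁻¹
  have hfun : (fun y : ℝ => y ^ (Module.finrank ℝ E3 - 1) • f y)
      =ᵐ[volume.restrict (Ioi 0)] (Iio R).indicator fun _ => (1 : ℝ) := by
    filter_upwards [ae_restrict_mem measurableSet_Ioi] with y hy
    have hy' : y ≠ 0 := ne_of_gt hy
    by_cases h : y < R <;> simp [f, h]
    field_simp
  have hint : Integrable (fun x : E3 => f ‖x‖) := by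
    rw [integrable_fun_norm_addHaar, IntegrableOn, integrable_congr hfun,
      integrable_indicator_iff measurableSet_Iio, IntegrableOn,
      Measure.restrict_restrict measurableSet_Iio]
    refine integrableOn_const ?_
    rw [Iio_inter_Ioi]
    simp
  have hval : ∫ x : E3, f ‖x‖ = 3 * (volume : Measure E3).real (Metric.ball 0 1) * R := by
    rw [integral_fun_norm_addHaar, integral_congr_ae hfun, integral_indicator measurableSet_Iio,
      Measure.restrict_restrict measurableSet_Iio, Iio_inter_Ioi]
    simp [hR.le]
    ring
  have hnn : ∀ x : E3, 0 ≤ f ‖x‖ := fun x => indicator_nonneg (fun r _ => by positivity) _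
  rw [← hval, ofReal_integral_eq_lintegral_ofReal hint (.of_forall hnn)]
  refine le_of_eq (lintegral_congr fun x => ?_)
  by_cases h : ‖x‖ < R <;> simp [f, h]

theorem sum_pd_pd_comp_norm_sq {f : ℝ → ℝ} (hf : ContDiff ℝ (⊤ : ℕ∞) f) (x : E3) :
    ∑ j, pd (pd (fun y : E3 => f (‖y‖ ^ 2)) j) j x
      = 4 * ‖x‖ ^ 2 * deriv (deriv f) (‖x‖ ^ 2) + 6 * deriv f (‖x‖ ^ 2) := by
  have hd : Differentiable ℝ f := hf.differentiable (by simp)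
  have hf' : ContDiff ℝ (⊤ : ℕ∞) (deriv f) := (contDiff_infty_iff_deriv.1 hf).2
  have hd' : Differentiable ℝ (deriv f) := hf'.differentiable (by simp)
  have h : ∀ j, pd (pd (fun y : E3 => f (‖y‖ ^ 2)) j) j x
      = 4 * deriv (deriv f) (‖x‖ ^ 2) * x j ^ 2 + 2 * deriv f (‖x‖ ^ 2) := by
    intro j
    have : pd (fun y : E3 => f (‖y‖ ^ 2)) j
        = fun y => 2 * (deriv f (‖y‖ ^ 2) * y j) := by
      ext y; rw [pd_comp_norm_sq hd]; ring
    rw [this, pd_const_mul, pd_comp_norm_sq_mul_coord hd']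
    ring
  simp_rw [h]
  rw [EuclideanSpace.norm_sq_eq x]
  simp only [Fin.sum_univ_three, Real.norm_eq_abs, sq_abs]
  ring

theorem deriv_eq_of_eq_inv_sqrt {f : ℝ → ℝ} (hf : ∀ s, 1 ≤ s → f s = s ^ (-(1 / 2) : ℝ))
    {s : ℝ} (hs : 1 < s) :
    deriv f s = -(1 / 2) * s ^ (-(3 / 2) : ℝ) ∧
      deriv (deriv f) s = (3 / 4) * s ^ (-(5 / 2) : ℝ) := by
  have h1 : ∀ s : ℝ, 1 < s → deriv f s = -(1 / 2) * s ^ (-(3 / 2) : ℝ) := by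
    intro s hs
    have he : f =ᶠ[𝓝 s] fun s => s ^ (-(1 / 2) : ℝ) := by
      filter_upwards [Ioi_mem_nhds hs] with y hy using hf y (le_of_lt hy)
    rw [he.deriv_eq, Real.deriv_rpow_const]
    norm_num
  refine ⟨h1 s hs, ?_⟩
  have he : deriv f =ᶠ[𝓝 s] fun s => -(1 / 2) * s ^ (-(3 / 2) : ℝ) := by
    filter_upwards [Ioi_mem_nhds hs] with y hy using h1 y hy
  rw [he.deriv_eq, deriv_const_mul_field, Real.deriv_rpow_const]
  norm_num
  ring

theorem radial_laplacian_eq_zero {f : ℝ → ℝ} (hf : ∀ s, 1 ≤ s → f s = s ^ (-(1 / 2) : ℝ))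
    {s : ℝ} (hs : 1 < s) : 4 * s * deriv (deriv f) s + 6 * deriv f s = 0 := by
  obtain ⟨h1, h2⟩ := deriv_eq_of_eq_inv_sqrt hf hs
  have : s * s ^ (-(5 / 2) : ℝ) = s ^ (-(3 / 2) : ℝ) := by
    rw [← Real.rpow_one_add' (by linarith) (by norm_num)]
    norm_num
  rw [h1, h2]
  linear_combination 3 * this

theorem integral_radial_laplacian {f : ℝ → ℝ} (hfc : ContDiff ℝ (⊤ : ℕ∞) f)
    (hf : ∀ s, 1 ≤ s → f s = s ^ (-(1 / 2) : ℝ)) :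
    ∫ x : E3, (4 * ‖x‖ ^ 2 * deriv (deriv f) (‖x‖ ^ 2) + 6 * deriv f (‖x‖ ^ 2)) ≠ 0 := by
  have hf' : ContDiff ℝ (⊤ : ℕ∞) (deriv f) := (contDiff_infty_iff_deriv.1 hfc).2
  have hf'' : ContDiff ℝ (⊤ : ℕ∞) (deriv (deriv f)) := (contDiff_infty_iff_deriv.1 hf').2
  have hd' : Differentiable ℝ (deriv f) := hf'.differentiable (by simp)
  rw [integral_fun_norm_addHaar volume
    (fun r : ℝ => 4 * r ^ 2 * deriv (deriv f) (r ^ 2) + 6 * deriv f (r ^ 2))]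
  let F : ℝ → ℝ := fun r => 2 * r ^ 3 * deriv f (r ^ 2)
  have hF : ∀ r, HasDerivAt F
      (r ^ 2 * (4 * r ^ 2 * deriv (deriv f) (r ^ 2) + 6 * deriv f (r ^ 2))) r := by
    intro r
    have ha : HasDerivAt (fun r : ℝ => 2 * r ^ 3) (2 * (3 * r ^ 2)) r := by
      simpa using (hasDerivAt_pow 3 r).const_mul 2
    have hb : HasDerivAt (fun r : ℝ => deriv f (r ^ 2)) (deriv (deriv f) (r ^ 2) * (2 * r)) r := by
      have h2 : HasDerivAt (fun r : ℝ => r ^ 2) (2 * r) r := by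
        simpa using hasDerivAt_pow 2 r
      exact (hd' (r ^ 2)).hasDerivAt.comp r h2
    exact (ha.mul hb).congr_deriv (by ring)
  have hFone : ∀ r, 1 < r → F r = -1 := by
    intro r hr
    have hr2 : 1 < r ^ 2 := by nlinarith
    simp only [F]
    rw [(deriv_eq_of_eq_inv_sqrt hf hr2).1, ← Real.rpow_natCast r 2, ← Real.rpow_mul (by linarith),
      ← Real.rpow_natCast r 3]
    have : r ^ ((3 : ℕ) : ℝ) * r ^ (((2 : ℕ) : ℝ) * -(3 / 2)) = 1 := by
      rw [← Real.rpow_add (by linarith)]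
      norm_num
    linear_combination -this
  have hcont : Continuous fun r : ℝ =>
      r ^ 2 * (4 * r ^ 2 * deriv (deriv f) (r ^ 2) + 6 * deriv f (r ^ 2)) := by
    have := hf'.continuous
    have := hf''.continuous
    fun_prop
  have hcs : IntegrableOn (fun r : ℝ =>
      r ^ 2 * (4 * r ^ 2 * deriv (deriv f) (r ^ 2) + 6 * deriv f (r ^ 2))) (Ioi 0) := by
    rw [← Ioc_union_Ioi_eq_Ioi (zero_le_one (α := ℝ))]
    refine (hcont.integrableOn_Icc.mono_set Ioc_subset_Icc_self).union ?_
    refine IntegrableOn.congr_fun (f := fun _ => (0 : ℝ)) integrableOn_zero ?_ measurableSet_Ioi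
    intro r hr
    have hr' : 1 < r := hr
    simp only
    rw [radial_laplacian_eq_zero hf (by nlinarith : 1 < r ^ 2), mul_zero]
  have hint := integral_Ioi_of_hasDerivAt_of_tendsto' (a := 0) (m := -1) (fun r _ => hF r) hcs
    (tendsto_const_nhds.congr' (by
      filter_upwards [Ioi_mem_atTop 1] with r hr using (hFone r hr).symm))
  simp only [finrank_euclideanSpace, Fintype.card_fin, smul_eq_mul, Nat.reduceSub]
  rw [hint]
  have : (volume : Measure E3).real (Metric.ball 0 1) ≠ 0 := by
    have := Metric.measure_ball_pos (volume : Measure E3) 0 one_pos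
    exact (ENNReal.toReal_pos this.ne' measure_ball_lt_top.ne).ne'
  simp [F, this]

theorem norm_sq_mul_pd_le {f : ℝ → ℝ} (hfc : ContDiff ℝ (⊤ : ℕ∞) f)
    (hf : ∀ s, 1 ≤ s → f s = s ^ (-(1 / 2) : ℝ)) :
    ∃ M : ℝ, 0 ≤ M ∧ ∀ (x : E3) (j : Fin 3),
      ‖x‖ ^ 2 * |pd (fun y : E3 => f (‖y‖ ^ 2)) j x| ≤ M := by
  have hd : Differentiable ℝ f := hfc.differentiable (by simp)
  have hf' : ContDiff ℝ (⊤ : ℕ∞) (deriv f) := (contDiff_infty_iff_deriv.1 hfc).2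
  have hc : Continuous fun s : ℝ => deriv f s := hf'.continuous
  obtain ⟨A, hA⟩ := (isCompact_Icc (a := (0 : ℝ)) (b := 1)).exists_bound_of_continuousOn
    hc.continuousOn
  have hA0 : 0 ≤ A := (norm_nonneg _).trans (hA 0 (by simp))
  refine ⟨2 * A + 1, by positivity, fun x j => ?_⟩
  rw [pd_comp_norm_sq hd, abs_mul, abs_mul, abs_two]
  have hxj : |x j| ≤ ‖x‖ := by simpa using PiLp.norm_apply_le x j
  by_cases hx : ‖x‖ ≤ 1
  · have h1 := hA (‖x‖ ^ 2) ⟨by positivity, by nlinarith [norm_nonneg x]⟩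
    rw [Real.norm_eq_abs] at h1
    have h2 : ‖x‖ ^ 2 ≤ 1 := by nlinarith [norm_nonneg x]
    have h3 : |x j| ≤ 1 := hxj.trans hx
    have h4 : |deriv f (‖x‖ ^ 2)| * |x j| ≤ A * 1 :=
      mul_le_mul h1 h3 (abs_nonneg _) hA0
    have h5 : ‖x‖ ^ 2 * (|deriv f (‖x‖ ^ 2)| * |x j|) ≤ 1 * (A * 1) :=
      mul_le_mul h2 h4 (by positivity) (by positivity)
    linarith
  · push Not at hx
    have hr2 : 1 < ‖x‖ ^ 2 := by nlinarith
    have h0 : 0 < ‖x‖ := by linarith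
    have h3 : (‖x‖ ^ 2) ^ (-(3 / 2) : ℝ) = (‖x‖ ^ 3)⁻¹ := by
      rw [← Real.rpow_natCast ‖x‖ 2, ← Real.rpow_mul h0.le, ← Real.rpow_natCast ‖x‖ 3,
        ← Real.rpow_neg h0.le]
      norm_num
    rw [(deriv_eq_of_eq_inv_sqrt hf hr2).1, h3, abs_mul, abs_inv, abs_pow, abs_norm]
    have : ‖x‖ ^ 2 * (2 * (|(-(1 / 2) : ℝ)| * (‖x‖ ^ 3)⁻¹) * |x j|) = |x j| / ‖x‖ := by
      rw [abs_of_neg (by norm_num)]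
      field_simp
    rw [this]
    have : |x j| / ‖x‖ ≤ 1 := (div_le_one h0).2 hxj
    linarith

/-- A mollifier `ρ` with integral one such that differences of its rescalings are Laplacians of
compactly supported smooth functions whose gradients are small in `L¹`. -/
theorem exists_laplacian_mollifier :
    ∃ (ρ : E3 → ℝ) (C : ℝ), Continuous ρ ∧ (∀ x, 1 < ‖x‖ → ρ x = 0) ∧ ∫ x, ρ x = 1 ∧ 0 ≤ C ∧
      ∀ ε R : ℝ, 0 < ε → ε ≤ R → ∃ η : E3 → ℝ, ContDiff ℝ (⊤ : ℕ∞) η ∧ HasCompactSupport η ∧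
        (∀ x, ∑ j, pd (pd η j) j x = ε⁻¹ ^ 3 * ρ (ε⁻¹ • x) - R⁻¹ ^ 3 * ρ (R⁻¹ • x)) ∧
        ∀ j, ∫⁻ x, ‖pd η j x‖ₑ ≤ ENNReal.ofReal (C * R) := by
  obtain ⟨f, hfc, hf⟩ := exists_contDiff_eq_inv_sqrt
  obtain ⟨M, hM0, hM⟩ := norm_sq_mul_pd_le hfc hf
  obtain ⟨A, hA0, hA⟩ := lintegral_ball_inv_norm_sq_le
  have hf' : ContDiff ℝ (⊤ : ℕ∞) (deriv f) := (contDiff_infty_iff_deriv.1 hfc).2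
  have hf'' : ContDiff ℝ (⊤ : ℕ∞) (deriv (deriv f)) := (contDiff_infty_iff_deriv.1 hf').2
  have hc' := hf'.continuous
  have hc'' := hf''.continuous
  set ρ₀ : E3 → ℝ := fun x => 4 * ‖x‖ ^ 2 * deriv (deriv f) (‖x‖ ^ 2) + 6 * deriv f (‖x‖ ^ 2)
    with hρ₀
  have hI : ∫ x, ρ₀ x ≠ 0 := integral_radial_laplacian hfc hf
  set c : ℝ := (∫ x, ρ₀ x)⁻¹ with hcdef
  set Φ : E3 → ℝ := fun x => f (‖x‖ ^ 2) with hΦ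
  have hΦc : ContDiff ℝ (⊤ : ℕ∞) Φ := hfc.comp (contDiff_norm_sq ℝ)
  have hΦd : Differentiable ℝ Φ := hΦc.differentiable (by simp)
  refine ⟨fun x => c * ρ₀ x, |c| * (2 * M * A * 2), ?_, ?_, ?_, by positivity, ?_⟩
  · fun_prop
  · intro x hx
    simp only [hρ₀]
    rw [radial_laplacian_eq_zero hf (by nlinarith : 1 < ‖x‖ ^ 2), mul_zero]
  · rw [integral_const_mul, hcdef, inv_mul_cancel₀ hI]
  intro ε R hε hεR
  have hR : 0 < R := hε.trans_le hεR
  let Φs : ℝ → E3 → ℝ := fun a x => c * a * Φ (a • x + 0)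
  have hΦs : ∀ a, ContDiff ℝ (⊤ : ℕ∞) (Φs a) := fun a =>
    contDiff_const.mul (hΦc.comp ((contDiff_id.const_smul a).add contDiff_const))
  have hΦsd : ∀ a, Differentiable ℝ (Φs a) := fun a => (hΦs a).differentiable (by simp)
  have hpd : ∀ a j, pd (Φs a) j = fun x => c * a ^ 2 * pd Φ j (a • x + 0) := by
    intro a j; ext x
    simp only [Φs]
    rw [pd_const_mul, pd_comp_smul_add a 0 hΦd]
    ring
  have hpd2 : ∀ a x, ∑ j, pd (pd (Φs a) j) j x = a ^ 3 * (c * ρ₀ (a • x)) := by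
    intro a x
    have : ∀ j, pd (pd (Φs a) j) j x = c * a ^ 3 * pd (pd Φ j) j (a • x) := by
      intro j
      rw [hpd, pd_const_mul, pd_comp_smul_add a 0 ((contDiff_pd hΦc j).differentiable (by simp)),
        add_zero]
      ring
    simp_rw [this]
    rw [← Finset.mul_sum, sum_pd_pd_comp_norm_sq hfc]
    ring
  have hout : ∀ x : E3, R ≤ ‖x‖ → Φs ε⁻¹ x - Φs R⁻¹ x = 0 := by
    have key : ∀ a : ℝ, 0 < a → ∀ x : E3, a ≤ ‖x‖ → Φs a⁻¹ x = c * ‖x‖⁻¹ := by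
      intro a ha x hx
      have h1 : 1 ≤ ‖a⁻¹ • x‖ := by
        rw [norm_smul, norm_inv, Real.norm_of_nonneg ha.le, ← div_eq_inv_mul]
        exact (one_le_div ha).2 hx
      simp only [Φs, hΦ, add_zero]
      rw [hf _ (by nlinarith), ← Real.rpow_natCast, ← Real.rpow_mul (norm_nonneg _), norm_smul,
        norm_inv, Real.norm_of_nonneg ha.le]
      norm_num
      rw [Real.rpow_neg_one, mul_inv, inv_inv]
      field_simp
    intro x hx
    rw [key ε hε x (hεR.trans hx), key R hR x hx, sub_self]
  refine ⟨fun x => Φs ε⁻¹ x - Φs R⁻¹ x, (hΦs _).sub (hΦs _), ?_, ?_, ?_⟩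
  · refine HasCompactSupport.intro (isCompact_closedBall (0 : E3) R) fun x hx => ?_
    exact hout x (by simpa using (not_le.1 (by simpa using hx)).le)
  · intro x
    have h1 : ∀ j, pd (fun x => Φs ε⁻¹ x - Φs R⁻¹ x) j
        = fun x => pd (Φs ε⁻¹) j x - pd (Φs R⁻¹) j x := by
      intro j; ext x; exact pd_sub (hΦsd _ x) (hΦsd _ x)
    have h2 : ∀ a j, Differentiable ℝ (pd (Φs a) j) := fun a j =>
      (contDiff_pd (hΦs a) j).differentiable (by simp)
    simp_rw [h1, pd_sub (h2 ε⁻¹ _ x) (h2 R⁻¹ _ x)]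
    rw [Finset.sum_sub_distrib, hpd2, hpd2]
  · intro j
    have hone : ∀ a : ℝ, 0 < a → ∀ x : E3, |pd (Φs a) j x| ≤ |c| * M * (‖x‖ ^ 2)⁻¹ := by
      intro a ha x
      rw [hpd]
      by_cases hx : x = 0
      · subst hx
        have : pd Φ j 0 = 0 := by rw [hΦ, pd_comp_norm_sq (hfc.differentiable (by simp))]; simp
        simp [this]
      have hx0 : 0 < ‖x‖ := norm_pos_iff.2 hx
      have h := hM (a • x) j
      rw [norm_smul, Real.norm_of_nonneg ha.le] at h
      simp only [add_zero, abs_mul, abs_pow, abs_of_pos ha]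
      rw [← div_eq_mul_inv, le_div_iff₀ (by positivity)]
      calc |c| * a ^ 2 * |pd Φ j (a • x)| * ‖x‖ ^ 2
          = |c| * ((a * ‖x‖) ^ 2 * |pd Φ j (a • x)|) := by ring
        _ ≤ |c| * M := mul_le_mul_of_nonneg_left h (abs_nonneg c)
    calc ∫⁻ x, ‖pd (fun x => Φs ε⁻¹ x - Φs R⁻¹ x) j x‖ₑ
        ≤ ∫⁻ x, ENNReal.ofReal (2 * (|c| * M)) *
            (Metric.ball (0 : E3) (2 * R)).indicator (fun x => ENNReal.ofReal ((‖x‖ ^ 2)⁻¹)) x := by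
          refine lintegral_mono fun x => ?_
          by_cases h : ‖x‖ < 2 * R
          · rw [indicator_of_mem (by simpa using h), ← ENNReal.ofReal_mul (by positivity),
              pd_sub (hΦsd _ x) (hΦsd _ x), Real.enorm_eq_ofReal_abs]
            have h1 := hone ε⁻¹ (inv_pos.2 hε) x
            have h2 := hone R⁻¹ (inv_pos.2 hR) x
            have h3 : |pd (Φs ε⁻¹) j x - pd (Φs R⁻¹) j x|
                ≤ |pd (Φs ε⁻¹) j x| + |pd (Φs R⁻¹) j x| := by
              simpa only [Real.norm_eq_abs] using norm_sub_le (pd (Φs ε⁻¹) j x) (pd (Φs R⁻¹) j x)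
            refine ENNReal.ofReal_le_ofReal (h3.trans ?_)
            linarith only [h1, h2]
          · have hlt : R < ‖x‖ := by linarith [not_lt.1 h]
            have : (fun x => Φs ε⁻¹ x - Φs R⁻¹ x) =ᶠ[𝓝 x] fun _ => (0 : ℝ) := by
              filter_upwards [(isOpen_lt continuous_const continuous_norm).mem_nhds hlt] with y hy
              exact hout y (le_of_lt hy)
            rw [pd, this.fderiv_eq]
            simp
      _ ≤ ENNReal.ofReal (2 * (|c| * M)) * ENNReal.ofReal (A * (2 * R)) := by
          rw [lintegral_const_mul' _ _ ENNReal.ofReal_ne_top]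
          gcongr
          exact hA (2 * R) (by positivity)
      _ = ENNReal.ofReal (|c| * (2 * M * A * 2) * R) := by
          rw [← ENNReal.ofReal_mul (by positivity)]
          congr 1
          ring

theorem ContDiffBump.exists_antideriv (φ : ContDiffBump (0 : ℝ)) :
    ∃ K : ℝ → ℝ, ContDiff ℝ (⊤ : ℕ∞) K ∧ (∀ x, HasDerivAt K (φ.normed volume x) x) ∧
      (∀ x, x ≤ -φ.rOut → K x = 0) ∧ (∀ x, φ.rOut ≤ x → K x = 1) ∧
      (∀ x, 0 ≤ K x ∧ K x ≤ 1) := by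
  have hc : Continuous (φ.normed volume) := φ.continuous_normed
  have hz : ∀ x, φ.rOut ≤ |x| → φ.normed volume x = 0 := by
    intro x hx
    have : x ∉ Function.support (φ.normed (volume : Measure ℝ)) := by
      rw [φ.support_normed_eq]
      simpa using hx
    simpa using this
  have hder : ∀ x, HasDerivAt (fun x => ∫ y in (-φ.rOut)..x, φ.normed volume y)
      (φ.normed volume x) x := fun x =>
    intervalIntegral.integral_hasDerivAt_right (hc.intervalIntegrable _ _)
      (hc.stronglyMeasurableAtFilter _ _) hc.continuousAt
  have hmono : Monotone (fun x => ∫ y in (-φ.rOut)..x, φ.normed volume y) :=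
    monotone_of_hasDerivAt_nonneg hder fun x => φ.nonneg_normed x
  have h0 : ∀ x, x ≤ -φ.rOut → ∫ y in (-φ.rOut)..x, φ.normed volume y = 0 := by
    intro x hx
    rw [intervalIntegral.integral_symm, intervalIntegral.integral_of_le hx,
      setIntegral_congr_fun (g := fun _ => (0 : ℝ)) measurableSet_Ioc, integral_zero, neg_zero]
    intro y hy
    refine hz y ?_
    rw [abs_of_nonpos (hy.2.trans (by linarith [φ.rOut_pos]))]
    linarith [hy.2]
  have h1 : ∀ x, φ.rOut ≤ x → ∫ y in (-φ.rOut)..x, φ.normed volume y = 1 := by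
    intro x hx
    rw [intervalIntegral.integral_of_le (by linarith [φ.rOut_pos]),
      setIntegral_eq_integral_of_forall_compl_eq_zero, φ.integral_normed]
    intro y hy
    refine hz y ?_
    rw [mem_Ioc, not_and_or] at hy
    rcases hy with hy | hy
    · rw [abs_of_nonpos (by linarith [φ.rOut_pos])]; linarith
    · rw [abs_of_nonneg (by linarith [φ.rOut_pos])]; linarith
  refine ⟨_, ?_, hder, h0, h1, fun x => ⟨?_, ?_⟩⟩
  · rw [contDiff_infty_iff_deriv]
    refine ⟨fun x => (hder x).differentiableAt, ?_⟩
    rw [show deriv (fun x => ∫ y in (-φ.rOut)..x, φ.normed volume y) = φ.normed volume from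
      funext fun x => (hder x).deriv]
    exact φ.contDiff_normed
  · rcases le_total x (-φ.rOut) with h | h
    · exact (h0 x h).ge
    · exact (h0 _ le_rfl).ge.trans (hmono h)
  · rcases le_total φ.rOut x with h | h
    · exact (h1 x h).le
    · exact (hmono h).trans (h1 _ le_rfl).le

/-- A bounded function on the half-line with distributional derivative bounded by `B` is
`B`-Lipschitz on a set of full measure. -/
theorem exists_lipschitz_of_bounded_weak_deriv {g b : ℝ → ℝ} {M B : ℝ}
    (hg : StronglyMeasurable g) (hgM : ∀ t, |g t| ≤ M)
    (hbB : ∀ t, |b t| ≤ B)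
    (h : ∀ θ : ℝ → ℝ, ContDiff ℝ (⊤ : ℕ∞) θ → HasCompactSupport θ → tsupport θ ⊆ Ioi 0 →
      ∫ t in Ioi 0, g t * deriv θ t = - ∫ t in Ioi 0, b t * θ t) :
    ∃ S : Set ℝ, (∀ᵐ t, t ∈ S) ∧ ∀ s ∈ S, ∀ t ∈ S, 0 < s → s < t → |g t - g s| ≤ B * (t - s) := by
  have hB0 : 0 ≤ B := (abs_nonneg _).trans (hbB 0)
  let φ : ℕ → ContDiffBump (0 : ℝ) := fun n =>
    ⟨(1 / ((n : ℝ) + 1)) / 2, 1 / ((n : ℝ) + 1), by positivity, half_lt_self (by positivity)⟩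
  have hφ : Tendsto (fun n => (φ n).rOut) atTop (𝓝 0) := tendsto_one_div_add_atTop_nhds_zero_nat
  have hloc : LocallyIntegrable g := by
    intro x
    refine ⟨Metric.ball x 1, Metric.ball_mem_nhds x one_pos, ?_⟩
    exact Measure.integrableOn_of_bounded (M := M) measure_ball_lt_top.ne
      hg.aestronglyMeasurable (.of_forall fun t => hgM t)
  refine ⟨{s | Tendsto (fun n => ∫ τ, (φ n).normed volume (s - τ) * g τ) atTop (𝓝 (g s))}, ?_, ?_⟩
  · filter_upwards [ContDiffBump.ae_convolution_tendsto_right_of_locallyIntegrable (K := 2) hφ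
      (.of_forall fun n => by simp [φ]; linarith) hloc] with s hs
    simpa only [convolution_eq_swap, ContinuousLinearMap.lsmul_apply, smul_eq_mul] using hs
  intro s hs t ht hs0 hst
  replace hs : Tendsto (fun n => ∫ τ, (φ n).normed volume (s - τ) * g τ) atTop (𝓝 (g s)) := hs
  replace ht : Tendsto (fun n => ∫ τ, (φ n).normed volume (t - τ) * g τ) atTop (𝓝 (g t)) := ht
  have hlim := (ht.sub hs).abs
  have hlim2 : Tendsto (fun n => B * (t - s + 2 * (φ n).rOut)) atTop (𝓝 (B * (t - s + 2 * 0))) :=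
    (tendsto_const_nhds.add (hφ.const_mul 2)).const_mul B
  rw [mul_zero, add_zero] at hlim2
  refine le_of_tendsto_of_tendsto hlim hlim2 ?_
  filter_upwards [hφ.eventually (Iio_mem_nhds hs0)] with n hn
  have hn : (φ n).rOut < s := hn
  have hr0 := (φ n).rOut_pos
  obtain ⟨K, hKc, hKd, hK0, hK1, hK01⟩ := (φ n).exists_antideriv
  set δ := (φ n).rOut with hδ
  have hKc' : ∀ a : ℝ, ContDiff ℝ (⊤ : ℕ∞) fun τ => K (τ - a) := fun a =>
    hKc.comp (contDiff_id.sub contDiff_const)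
  have hzero : ∀ τ, τ ∉ Icc (s - δ) (t + δ) → K (τ - s) - K (τ - t) = 0 := by
    intro τ hτ
    rw [mem_Icc, not_and_or] at hτ
    rcases hτ with hτ | hτ
    · rw [hK0 _ (by linarith), hK0 _ (by linarith), sub_zero]
    · rw [hK1 _ (by linarith), hK1 _ (by linarith), sub_self]
  have hsupp : tsupport (fun τ => K (τ - s) - K (τ - t)) ⊆ Icc (s - δ) (t + δ) :=
    closure_minimal (fun τ hτ => by_contra fun hc => hτ (hzero τ hc)) isClosed_Icc
  have hpos : ∀ τ ∈ Icc (s - δ) (t + δ), 0 < τ := fun τ hτ => by linarith [hτ.1]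
  have key := h (fun τ => K (τ - s) - K (τ - t)) ((hKc' s).sub (hKc' t))
    (HasCompactSupport.intro isCompact_Icc hzero) (hsupp.trans hpos)
  have hder : ∀ τ, deriv (fun τ => K (τ - s) - K (τ - t)) τ
      = (φ n).normed volume (s - τ) - (φ n).normed volume (t - τ) := by
    intro τ
    have h1 : ∀ a, HasDerivAt (fun τ => K (τ - a)) ((φ n).normed volume (τ - a)) τ := fun a =>
      (hKd (τ - a)).comp_sub_const τ a
    have h2 : HasDerivAt (fun τ => K (τ - s) - K (τ - t)) _ τ := (h1 s).sub (h1 t)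
    rw [h2.deriv, ← (φ n).normed_neg (τ - s), ← (φ n).normed_neg (τ - t),
      neg_sub, neg_sub]
  have hi : ∀ a, Integrable fun τ => (φ n).normed volume (a - τ) * g τ := by
    intro a
    refine Integrable.mul_bdd (c := M) ?_ hg.aestronglyMeasurable (.of_forall hgM)
    exact (φ n).integrable_normed.comp_sub_left a
  have hL : ∫ τ in Ioi 0, g τ * deriv (fun τ => K (τ - s) - K (τ - t)) τ
      = (∫ τ, (φ n).normed volume (s - τ) * g τ) - ∫ τ, (φ n).normed volume (t - τ) * g τ := by
    rw [← integral_sub (hi s) (hi t), setIntegral_eq_integral_of_forall_compl_eq_zero]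
    · refine integral_congr_ae (.of_forall fun τ => ?_)
      simp only [hder]
      ring
    · intro τ hτ
      have : τ ∉ tsupport (deriv fun τ => K (τ - s) - K (τ - t)) := fun hc =>
        hτ (hpos τ (hsupp (tsupport_deriv_subset hc)))
      rw [image_eq_zero_of_notMem_tsupport this, mul_zero]
  have hR : |∫ τ in Ioi 0, b τ * (K (τ - s) - K (τ - t))| ≤ B * (t - s + 2 * δ) := by
    have h1 : ∫ τ in Ioi 0, b τ * (K (τ - s) - K (τ - t))
        = ∫ τ in Icc (s - δ) (t + δ), b τ * (K (τ - s) - K (τ - t)) := by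
      refine (setIntegral_eq_of_subset_of_forall_sdiff_eq_zero measurableSet_Ioi hpos ?_)
      intro τ hτ
      rw [hzero τ hτ.2, mul_zero]
    have h2 := norm_setIntegral_le_of_norm_le_const (μ := volume) (C := B)
      (s := Icc (s - δ) (t + δ)) (f := fun τ => b τ * (K (τ - s) - K (τ - t)))
      (by simp) (fun τ _ => by
        have := hK01 (τ - s)
        have := hK01 (τ - t)
        rw [norm_mul, Real.norm_eq_abs, Real.norm_eq_abs]
        calc |b τ| * |K (τ - s) - K (τ - t)| ≤ B * 1 :=
              mul_le_mul (hbB τ) (abs_le.2 ⟨by linarith, by linarith⟩) (abs_nonneg _) hB0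
          _ = B := mul_one B)
    rw [h1]
    refine h2.trans (le_of_eq ?_)
    rw [Real.volume_real_Icc_of_le (by linarith)]
    ring
  rw [hL] at key
  rw [abs_sub_comm, key, abs_neg]
  exact hR

theorem abs_sub_average_le_of_bounded_weak_deriv {g b : ℝ → ℝ} {M B : ℝ}
    (hg : StronglyMeasurable g) (hgM : ∀ t, |g t| ≤ M)
    (hbB : ∀ t, |b t| ≤ B)
    (h : ∀ θ : ℝ → ℝ, ContDiff ℝ (⊤ : ℕ∞) θ → HasCompactSupport θ → tsupport θ ⊆ Ioi 0 →
      ∫ t in Ioi 0, g t * deriv θ t = - ∫ t in Ioi 0, b t * θ t) :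
    ∀ᵐ t, 0 < t → ∀ a, 0 < a → |g t - a⁻¹ * ∫ s in Ioc t (t + a), g s| ≤ B * a := by
  obtain ⟨S, hS, hL⟩ := exists_lipschitz_of_bounded_weak_deriv hg hgM hbB h
  have hB0 : 0 ≤ B := (abs_nonneg _).trans (hbB 0)
  filter_upwards [hS] with t ht ht0 a ha
  have hi : IntegrableOn g (Ioc t (t + a)) :=
    Measure.integrableOn_of_bounded (M := M) (by simp) hg.aestronglyMeasurable
      (.of_forall fun t => hgM t)
  have hc : ∫ s in Ioc t (t + a), g t = a * g t := by
    simp [ha.le]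
  have h1 : g t - a⁻¹ * ∫ s in Ioc t (t + a), g s = a⁻¹ * ∫ s in Ioc t (t + a), (g t - g s) := by
    rw [integral_sub (by simp) hi, hc]
    field_simp
  have h2 : ‖∫ s in Ioc t (t + a), (g t - g s)‖ ≤ B * a * volume.real (Ioc t (t + a)) := by
    refine norm_setIntegral_le_of_norm_le_const_ae (by simp) ?_
    filter_upwards [ae_restrict_of_ae hS, ae_restrict_mem measurableSet_Ioc] with s hs hst
    rw [Real.norm_eq_abs, abs_sub_comm]
    refine (hL t ht s hs ht0 hst.1).trans ?_
    gcongr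
    linarith [hst.2]
  rw [h1, abs_mul, abs_of_pos (inv_pos.2 ha)]
  rw [Real.norm_eq_abs, Real.volume_real_Ioc_of_le (by linarith)] at h2
  calc a⁻¹ * |∫ s in Ioc t (t + a), (g t - g s)| ≤ a⁻¹ * (B * a * (t + a - t)) := by gcongr
    _ = B * a := by field_simp; ring

/-- Convolution at scale `ε` of a scalar function with the mollifier `ρ`. -/
def mollify (ρ : E3 → ℝ) (ε : ℝ) (f : E3 → ℝ) (x : E3) : ℝ :=
  ∫ y, (ε⁻¹ ^ 3 * ρ (ε⁻¹ • (x - y))) * f y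

theorem lintegral_sq_le {α : Type*} [MeasurableSpace α] (μ : Measure α) {g : α → ℝ≥0∞}
    (hg : AEMeasurable g μ) : (∫⁻ x, g x ∂μ) ^ 2 ≤ μ univ * ∫⁻ x, g x ^ 2 ∂μ := by
  have h := ENNReal.lintegral_mul_le_Lp_mul_Lq μ (p := 2) (q := 2)
    (by constructor <;> norm_num) (f := fun _ => 1) (g := g) aemeasurable_const hg
  have h' := ENNReal.pow_le_pow_left h (n := 2)
  simp only [Pi.mul_apply, one_mul, ENNReal.one_rpow, lintegral_const] at h'
  refine h'.trans (le_of_eq ?_)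
  rw [mul_pow, ← ENNReal.rpow_natCast, ← ENNReal.rpow_mul, ← ENNReal.rpow_natCast,
    ← ENNReal.rpow_mul]
  norm_num

theorem lintegral_mul_sq_le {α : Type*} [MeasurableSpace α] (μ : Measure α) {K g : α → ℝ≥0∞}
    (hK : Measurable K) (hg : Measurable g) :
    (∫⁻ x, K x * g x ∂μ) ^ 2 ≤ (∫⁻ x, K x ∂μ) * ∫⁻ x, K x * g x ^ 2 ∂μ := by
  have h := lintegral_sq_le (μ.withDensity K) (g := g) hg.aemeasurable
  rw [lintegral_withDensity_eq_lintegral_mul _ hK hg,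
    lintegral_withDensity_eq_lintegral_mul _ hK (hg.pow_const 2),
    withDensity_apply _ MeasurableSet.univ] at h
  simpa using h

theorem lintegral_convolution_sq_le {K g : E3 → ℝ≥0∞} (hK : Measurable K) (hg : Measurable g) :
    ∫⁻ x, (∫⁻ y, K (x - y) * g y) ^ 2 ≤ (∫⁻ x, K x) ^ 2 * ∫⁻ y, g y ^ 2 := by
  have h1 : ∀ x, ∫⁻ y, K (x - y) = ∫⁻ y, K y := fun x =>
    lintegral_sub_left_eq_self (μ := (volume : Measure E3)) K x
  have h2 : ∀ y, ∫⁻ x, K (x - y) = ∫⁻ y, K y := fun y =>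
    lintegral_sub_right_eq_self (μ := (volume : Measure E3)) K y
  calc ∫⁻ x, (∫⁻ y, K (x - y) * g y) ^ 2
      ≤ ∫⁻ x, (∫⁻ y, K y) * ∫⁻ y, K (x - y) * g y ^ 2 := by
        refine lintegral_mono fun x => ?_
        rw [← h1 x]
        exact lintegral_mul_sq_le volume (hK.comp (measurable_const.sub measurable_id)) hg
    _ = (∫⁻ y, K y) * ∫⁻ x, ∫⁻ y, K (x - y) * g y ^ 2 := by
        rw [lintegral_const_mul]
        refine Measurable.lintegral_prod_right'
          (f := fun p : E3 × E3 => K (p.1 - p.2) * g p.2 ^ 2) ?_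
        fun_prop
    _ = (∫⁻ y, K y) * ∫⁻ y, ∫⁻ x, K (x - y) * g y ^ 2 := by
        rw [lintegral_lintegral_swap]
        exact (by fun_prop : Measurable fun p : E3 × E3 => K (p.1 - p.2) * g p.2 ^ 2).aemeasurable
    _ = (∫⁻ x, K x) ^ 2 * ∫⁻ y, g y ^ 2 := by
        have : ∀ y, ∫⁻ x, K (x - y) * g y ^ 2 = (∫⁻ y, K y) * g y ^ 2 := fun y => by
          rw [lintegral_mul_const, h2]
          exact hK.comp (measurable_id.sub measurable_const)
        simp_rw [this]
        rw [lintegral_const_mul _ (hg.pow_const 2), sq, mul_assoc]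

theorem ae_tendsto_mollify {ρ : E3 → ℝ} (hρ : Continuous ρ) (hρ1 : ∀ x, 1 < ‖x‖ → ρ x = 0)
    (hρi : ∫ x, ρ x = 1) {ε : ℕ → ℝ} (hε : ∀ n, 0 < ε n) (hε0 : Tendsto ε atTop (𝓝 0))
    {f : E3 → ℝ} (hf : LocallyIntegrable f) :
    ∀ᵐ x, Tendsto (fun n => mollify ρ (ε n) f x) atTop (𝓝 (f x)) := by
  obtain ⟨M, hM⟩ : ∃ M, ∀ x, |ρ x| ≤ M := by
    have hc : HasCompactSupport ρ := by
      refine HasCompactSupport.intro (isCompact_closedBall (0 : E3) 1) fun x hx => hρ1 x ?_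
      simpa using hx
    obtain ⟨M, hM⟩ := hρ.bounded_above_of_compact_support hc
    exact ⟨M, hM⟩
  filter_upwards [(Besicovitch.vitaliFamily (volume : Measure E3)).ae_tendsto_average_norm_sub hf]
    with x hx
  have hε' : Tendsto ε atTop (𝓝[>] 0) :=
    tendsto_nhdsWithin_iff.2 ⟨hε0, Eventually.of_forall hε⟩
  have := (hx.comp (Besicovitch.tendsto_filterAt volume x)).comp hε'
  have hfr : Module.finrank ℝ E3 = 3 := by simp
  refine tendsto_integral_smul_of_tendsto_average_norm_sub
    (M * volume.real (Metric.closedBall (0 : E3) 1)) this ?_ ?_ ?_ ?_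
  · filter_upwards with i using hf.integrableOn_isCompact (isCompact_closedBall _ _)
  · refine tendsto_const_nhds.congr fun i => ?_
    have hp := hε i
    rw [integral_sub_left_eq_self (fun y => (ε i)⁻¹ ^ 3 * ρ ((ε i)⁻¹ • y)), integral_const_mul,
      Measure.integral_comp_smul, hρi, hfr, abs_of_pos (by positivity)]
    field_simp
    simp
  · filter_upwards with i y hy
    have hp := hε i
    by_contra h
    refine hy ?_
    simp only [Metric.mem_closedBall, not_le, dist_eq_norm] at h
    dsimp only
    rw [hρ1, mul_zero]
    rw [norm_smul, norm_inv, Real.norm_of_nonneg hp.le, ← norm_neg, neg_sub, lt_inv_mul_iff₀ hp,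
      mul_one]
    exact h
  · filter_upwards with i y
    have hp := hε i
    rw [Measure.addHaar_real_closedBall' _ _ hp.le, hfr, abs_mul, abs_of_pos (by positivity)]
    have hv : 0 < volume.real (Metric.closedBall (0 : E3) 1) := by
      rw [measureReal_def]
      exact ENNReal.toReal_pos (Metric.measure_closedBall_pos _ _ one_pos).ne'
        (measure_closedBall_lt_top).ne
    have hm := hM ((ε i)⁻¹ • (x - y))
    rw [mul_div_mul_right _ _ hv.ne', inv_pow, div_eq_inv_mul]
    exact mul_le_mul_of_nonneg_left hm (by positivity)

/-- An integrable, positive, continuous weight on space-time, bounded by `1`. -/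
def wt (p : ℝ × E3) : ℝ := Real.exp (-|p.1|) * (1 + ‖p.2‖) ^ (-4 : ℝ)

theorem wt_pos (p : ℝ × E3) : 0 < wt p := by unfold wt; positivity

theorem wt_le_one (p : ℝ × E3) : wt p ≤ 1 := by
  unfold wt
  have h1 : Real.exp (-|p.1|) ≤ 1 := Real.exp_le_one_iff.2 (by simp)
  have h2 : (1 + ‖p.2‖) ^ (-4 : ℝ) ≤ 1 :=
    Real.rpow_le_one_of_one_le_of_nonpos (by simp) (by norm_num)
  exact mul_le_one₀ h1 (by positivity) h2

theorem continuous_wt : Continuous wt := by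
  unfold wt
  refine Continuous.mul (by fun_prop) ?_
  refine Continuous.rpow_const (by fun_prop) fun p => Or.inl ?_
  positivity

/-- The weighted, finite space-time measure. -/
def μW : Measure (ℝ × E3) := μST.withDensity fun p => ENNReal.ofReal (wt p)

theorem measurable_ofReal_wt : Measurable fun p => ENNReal.ofReal (wt p) :=
  continuous_wt.measurable.ennreal_ofReal

instance : SFinite μST := by unfold μST; infer_instance

instance : IsFiniteMeasure μW := by
  refine isFiniteMeasure_withDensity_ofReal (Integrable.hasFiniteIntegral ?_)
  have h1 : Integrable (fun t : ℝ => Real.exp (-|t|)) (volume.restrict (Ioi (0 : ℝ))) := by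
    have := exp_neg_integrableOn_Ioi 0 one_pos
    refine this.congr ?_
    filter_upwards [ae_restrict_mem measurableSet_Ioi] with t ht
    rw [abs_of_pos ht]; simp
  have h2 : Integrable (fun x : E3 => (1 + ‖x‖) ^ (-4 : ℝ)) :=
    integrable_one_add_norm (by simp; norm_num)
  exact h1.mul_prod h2

theorem μW_le : μW ≤ μST := by
  have : μST.withDensity (fun p => ENNReal.ofReal (wt p)) ≤ μST.withDensity 1 :=
    withDensity_mono (Eventually.of_forall fun p => by
      simpa using wt_le_one p)
  rwa [withDensity_one] at this

theorem ae_μW_iff {P : ℝ × E3 → Prop} : (∀ᵐ p ∂μW, P p) ↔ ∀ᵐ p ∂μST, P p := by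
  unfold μW
  rw [ae_withDensity_iff measurable_ofReal_wt]
  refine eventually_congr (Eventually.of_forall fun p => ?_)
  simp [wt_pos p]

theorem integral_μW (f : ℝ × E3 → ℝ) : ∫ p, f p ∂μW = ∫ p, wt p * f p ∂μST := by
  unfold μW
  rw [integral_withDensity_eq_integral_toReal_smul measurable_ofReal_wt (by simp)]
  simp [ENNReal.toReal_ofReal (wt_pos _).le]

theorem integrable_μW {f : ℝ × E3 → ℝ} :
    Integrable f μW ↔ Integrable (fun p => wt p * f p) μST := by
  unfold μW
  rw [integrable_withDensity_iff_integrable_smul' measurable_ofReal_wt (by simp)]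
  simp [ENNReal.toReal_ofReal (wt_pos _).le]

theorem exists_eq_wt_mul {b : ℝ × E3 → ℝ} (hb : Continuous b) (hbc : HasCompactSupport b) :
    ∃ c : ℝ × E3 → ℝ, Continuous c ∧ (∃ M, ∀ p, |c p| ≤ M) ∧ ∀ p, b p = wt p * c p := by
  have hc : Continuous fun p => b p / wt p := hb.div continuous_wt fun p => (wt_pos p).ne'
  refine ⟨fun p => b p / wt p, hc, ?_, fun p => ?_⟩
  · have : HasCompactSupport fun p => b p / wt p := by
      simp_rw [div_eq_mul_inv]
      exact hbc.mul_right
    exact hc.bounded_above_of_compact_support this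
  · field_simp [(wt_pos p).ne']

theorem integrable_mul_of_hasCompactSupport {f b : ℝ × E3 → ℝ} (hf : Integrable f μW)
    (hb : Continuous b) (hbc : HasCompactSupport b) : Integrable (fun p => f p * b p) μST := by
  obtain ⟨c, hc, ⟨M, hM⟩, hbw⟩ := exists_eq_wt_mul hb hbc
  have : Integrable (fun p => f p * c p) μW :=
    hf.mul_bdd (c := M) hc.aestronglyMeasurable (Eventually.of_forall hM)
  rw [integrable_μW] at this
  refine this.congr (Eventually.of_forall fun p => ?_)
  simp only [hbw]; ring

theorem MemLp.integrable_mul_of_hasCompactSupport {f g b : ℝ × E3 → ℝ} (hf : MemLp f 2 μW)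
    (hg : MemLp g 2 μW) (hb : Continuous b) (hbc : HasCompactSupport b) :
    Integrable (fun p => f p * g p * b p) μST :=
  _root_.integrable_mul_of_hasCompactSupport (hf.integrable_mul hg) hb hbc

theorem MemLp.integrable_mul_of_hasCompactSupport' {f b : ℝ × E3 → ℝ} (hf : MemLp f 2 μW)
    (hb : Continuous b) (hbc : HasCompactSupport b) :
    Integrable (fun p => f p * b p) μST :=
  _root_.integrable_mul_of_hasCompactSupport (hf.integrable (by norm_num)) hb hbc

theorem tendsto_integral_mul_mul {α : Type*} [MeasurableSpace α] {μ : Measure α}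
    {f g : α → ℝ} {fk gk : ℕ → α → ℝ} {c : α → ℝ} {M : ℝ}
    (hf : MemLp f 2 μ) (hg : MemLp g 2 μ) (hfk : ∀ k, MemLp (fk k) 2 μ)
    (hgk : ∀ k, MemLp (gk k) 2 μ) (hc : AEStronglyMeasurable c μ) (hM : ∀ x, |c x| ≤ M)
    (hft : Tendsto (fun k => eLpNorm (fk k - f) 2 μ) atTop (𝓝 0))
    (hgt : Tendsto (fun k => eLpNorm (gk k - g) 2 μ) atTop (𝓝 0)) :
    Tendsto (fun k => ∫ x, fk k x * gk k x * c x ∂μ) atTop (𝓝 (∫ x, f x * g x * c x ∂μ)) := by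
  have hmul : ∀ u : α → ℝ, MemLp u 2 μ → MemLp (fun x => u x * c x) 2 μ := fun u hu => by
    refine (hu.const_mul M).mono (hu.1.mul hc) (Eventually.of_forall fun x => ?_)
    simp only [norm_mul, Real.norm_eq_abs]
    rw [mul_comm]
    exact mul_le_mul_of_nonneg_right ((hM x).trans (le_abs_self M)) (abs_nonneg _)
  have key : ∀ u v : α → ℝ, ∀ (hu : MemLp u 2 μ) (hv : MemLp v 2 μ),
      ∫ x, u x * v x * c x ∂μ = inner ℝ (hv.toLp v) ((hmul u hu).toLp _) := by
    intro u v hu hv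
    rw [L2.inner_def]
    refine integral_congr_ae ?_
    filter_upwards [hv.coeFn_toLp, (hmul u hu).coeFn_toLp] with x h1 h2
    rw [h1, h2]
    simp; ring
  rw [key f g hf hg]
  simp_rw [fun k => key _ _ (hfk k) (hgk k)]
  refine Tendsto.inner (𝕜 := ℝ) ?_ ?_
  · rw [Lp.tendsto_Lp_iff_tendsto_eLpNorm'']
    exact hgt
  · rw [Lp.tendsto_Lp_iff_tendsto_eLpNorm'']
    have h0 : Tendsto (fun k => ENNReal.ofReal M * eLpNorm (fk k - f) 2 μ) atTop (𝓝 0) := by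
      simpa using ENNReal.Tendsto.const_mul hft (Or.inr ENNReal.ofReal_ne_top)
    refine tendsto_of_tendsto_of_tendsto_of_le_of_le tendsto_const_nhds h0 (fun _ => zero_le)
      fun k => ?_
    refine eLpNorm_le_mul_eLpNorm_of_ae_le_mul (Eventually.of_forall fun x => ?_) 2
    simp only [Pi.sub_apply, ← sub_mul, norm_mul, Real.norm_eq_abs]
    rw [mul_comm]
    exact mul_le_mul_of_nonneg_right (hM x) (abs_nonneg _)

/-- The weak formulation of the Navier–Stokes equations. -/
def WeakEq (ν : ℝ) (u₀ : E3 → E3) (u : ℝ → E3 → E3) : Prop :=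
  ∀ φ : ℝ × E3 → E3, IsTest φ →
    (∫ p,
        ((∑ i, u p.1 p.2 i * (timeDeriv φ p i + ν * spaceLap φ p i)) +
         ∑ i, ∑ j, u p.1 p.2 i * u p.1 p.2 j * spaceGrad φ p i j) ∂μST)
      = - ∫ x : E3, ∑ i, u₀ x i * φ (0, x) i

/-- A strongly measurable representative with bounds that hold at every time. -/
structure IsRegularPair (n : ℝ≥0∞) (u : ℝ → E3 → E3) (G : ℝ → E3 → Fin 3 → Fin 3 → ℝ) :
    Prop where
  stronglyMeasurable : StronglyMeasurable (Function.uncurry u)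
  stronglyMeasurable_grad : StronglyMeasurable (Function.uncurry G)
  eLpNorm_le : ∀ t, eLpNorm (u t) 2 volume ≤ n
  isDivFree : ∀ t, IsDivFree (u t)
  lintegral_grad_le : ∫⁻ p, ∑ i, ∑ j, ENNReal.ofReal (G p.1 p.2 i j ^ 2) ∂μST ≤ n
  isDistGrad : IsDistGrad u G

theorem mixedNorm_congr {r s : ℝ≥0∞} {I : Set ℝ} {u v : ℝ → E3 → E3}
    (h : ∀ᵐ t ∂(volume.restrict I), u t =ᵐ[volume] v t) :
    mixedNorm r s I u = mixedNorm r s I v := by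
  have h' : (fun t => eLpNorm (u t) s volume) =ᵐ[volume.restrict I]
      fun t => eLpNorm (v t) s volume := by
    filter_upwards [h] with t ht using eLpNorm_congr_ae ht
  unfold mixedNorm
  split_ifs
  · exact essSup_congr_ae h'
  · congr 1
    refine lintegral_congr_ae ?_
    filter_upwards [h'] with t ht
    simp only [ht]

theorem lintegral_gradSq {G : ℝ → E3 → Fin 3 → Fin 3 → ℝ}
    (hG : AEStronglyMeasurable (Function.uncurry G) μST) :
    ∫⁻ t in Ioi (0 : ℝ), gradSq G t
      = ∫⁻ p, ∑ i, ∑ j, ENNReal.ofReal (G p.1 p.2 i j ^ 2) ∂μST := by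
  have hm : AEMeasurable
      (fun p : ℝ × E3 => ∑ i, ∑ j, ENNReal.ofReal (G p.1 p.2 i j ^ 2)) μST := by
    have h0 : AEMeasurable (Function.uncurry G) μST := hG.aemeasurable
    refine Finset.aemeasurable_fun_sum _ fun i _ => Finset.aemeasurable_fun_sum _ fun j _ => ?_
    have h1 : AEMeasurable (fun p : ℝ × E3 => Function.uncurry G p i j) μST :=
      (measurable_pi_apply j).comp_aemeasurable ((measurable_pi_apply i).comp_aemeasurable h0)
    exact (h1.pow_const 2).ennreal_ofReal
  unfold μST at hm ⊢
  rw [lintegral_prod _ hm]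
  rfl

theorem mixedNorm_top_le_iff {s n : ℝ≥0∞} {I : Set ℝ} {u : ℝ → E3 → E3} :
    mixedNorm ∞ s I u ≤ n ↔ ∀ᵐ t ∂(volume.restrict I), eLpNorm (u t) s volume ≤ n := by
  unfold mixedNorm
  rw [if_pos rfl]
  constructor
  · intro h
    filter_upwards [ENNReal.ae_le_essSup fun t => eLpNorm (u t) s volume] with t ht
    exact ht.trans h
  · intro h
    exact essSup_le_of_ae_le _ h

theorem IsDistGrad.congr {u v : ℝ → E3 → E3} {G H : ℝ → E3 → Fin 3 → Fin 3 → ℝ}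
    (h : IsDistGrad u G) (hu : ∀ᵐ p ∂μST, u p.1 p.2 = v p.1 p.2)
    (hG : ∀ᵐ p ∂μST, G p.1 p.2 = H p.1 p.2) : IsDistGrad v H := by
  intro ψ h1 h2 h3 i j
  have e1 : ∫ p, v p.1 p.2 i * pd (fun y => ψ (p.1, y)) j p.2 ∂μST
      = ∫ p, u p.1 p.2 i * pd (fun y => ψ (p.1, y)) j p.2 ∂μST := by
    refine integral_congr_ae ?_
    filter_upwards [hu] with p hp
    simp only [hp]
  have e2 : ∫ p, H p.1 p.2 i j * ψ p ∂μST = ∫ p, G p.1 p.2 i j * ψ p ∂μST := by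
    refine integral_congr_ae ?_
    filter_upwards [hG] with p hp
    simp only [hp]
  rw [e1, e2]
  exact h ψ h1 h2 h3 i j

theorem WeakEq.congr {ν : ℝ} {u₀ v₀ : E3 → E3} {u v : ℝ → E3 → E3} (h : WeakEq ν u₀ u)
    (hu : ∀ᵐ p ∂μST, u p.1 p.2 = v p.1 p.2) (h0 : u₀ =ᵐ[volume] v₀) : WeakEq ν v₀ v := by
  intro φ hφ
  have e1 : ∫ x : E3, ∑ i, v₀ x i * φ (0, x) i = ∫ x : E3, ∑ i, u₀ x i * φ (0, x) i := by
    refine integral_congr_ae ?_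
    filter_upwards [h0] with p hp
    simp only [hp]
  rw [e1, ← h φ hφ]
  refine integral_congr_ae ?_
  filter_upwards [hu] with p hp
  simp only [hp]

theorem IsDivFree.congr {u v : E3 → E3} (h : IsDivFree u) (huv : u =ᵐ[volume] v) :
    IsDivFree v := by
  intro φ h1 h2
  rw [← h φ h1 h2]
  refine integral_congr_ae ?_
  filter_upwards [huv] with x hx
  simp only [hx]

theorem isDivFree_zero : IsDivFree (0 : E3 → E3) := fun φ _ _ => by simp

theorem IsWeakNS.exists_isRegularPair {ν : ℝ} {u₀ : E3 → E3} {u : ℝ → E3 → E3}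
    {G : ℝ → E3 → Fin 3 → Fin 3 → ℝ} (h : IsWeakNS ν u₀ u G) {n : ℝ≥0∞}
    (hn : mixedNorm ∞ 2 (Ioi 0) u ≤ n) (hG : ∫⁻ t in Ioi (0 : ℝ), gradSq G t ≤ n)
    (r s : ℝ≥0∞) :
    ∃ v H, IsRegularPair n v H ∧ WeakEq ν u₀ v ∧
      mixedNorm r s (Ioi 0) v = mixedNorm r s (Ioi 0) u := by
  obtain ⟨hum, -, hdiv, hGm, -, hgrad, heq⟩ := h
  rw [mixedNorm_top_le_iff] at hn
  have hae : ∀ᵐ t ∂(volume.restrict (Ioi (0 : ℝ))), u t =ᵐ[volume] fun x => hum.mk _ (t, x) :=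
    Measure.ae_ae_of_ae_prod hum.ae_eq_mk
  have hall : ∀ᵐ t ∂(volume.restrict (Ioi (0 : ℝ))), u t =ᵐ[volume] (fun x => hum.mk _ (t, x)) ∧
      eLpNorm (u t) 2 volume ≤ n ∧ IsDivFree (u t) := by
    filter_upwards [hae, hn, hdiv] with t h1 h2 h3 using ⟨h1, h2, h3⟩
  obtain ⟨T, hT, hTae⟩ := eventually_iff_exists_mem.1 hall
  set T' := (toMeasurable (volume.restrict (Ioi (0 : ℝ))) Tᶜ)ᶜ with hT'
  have hT'm : MeasurableSet T' := (measurableSet_toMeasurable _ _).compl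
  have hT'T : T' ⊆ T := by
    rw [hT', compl_subset_comm]
    exact subset_toMeasurable _ _
  have hT'ae : ∀ᵐ t ∂(volume.restrict (Ioi (0 : ℝ))), t ∈ T' := by
    rw [ae_iff]
    change (volume.restrict (Ioi (0 : ℝ))) (T'ᶜ) = 0
    rw [hT', compl_compl, measure_toMeasurable]
    exact hT
  set v : ℝ → E3 → E3 := fun t x => (T' ×ˢ univ).indicator (hum.mk _) (t, x) with hv
  have hvT : ∀ t ∈ T', v t =ᵐ[volume] u t := fun t ht => by
    have : v t = fun x => hum.mk _ (t, x) := by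
      funext x
      simp [hv, indicator, ht]
    rw [this]
    exact (hTae t (hT'T ht)).1.symm
  have hvT' : ∀ t ∉ T', v t = 0 := fun t ht => by
    funext x
    simp [hv, indicator, ht]
  have hvu : ∀ᵐ t ∂(volume.restrict (Ioi (0 : ℝ))), v t =ᵐ[volume] u t := by
    filter_upwards [hT'ae] with t ht using hvT t ht
  have hvm : StronglyMeasurable (Function.uncurry v) :=
    hum.stronglyMeasurable_mk.indicator (hT'm.prod MeasurableSet.univ)
  have hvup : ∀ᵐ p ∂μST, u p.1 p.2 = v p.1 p.2 := by
    have h1 : ∀ᵐ p : ℝ × E3 ∂μST, p.1 ∈ T' :=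
      Measure.quasiMeasurePreserving_fst.ae hT'ae
    filter_upwards [h1, hum.ae_eq_mk] with p h1 h2
    rw [← Function.uncurry_apply_pair u, h2]
    simp [hv, indicator, h1]
  have hGp : ∀ᵐ p ∂μST, G p.1 p.2 = hGm.mk _ (p.1, p.2) := by
    filter_upwards [hGm.ae_eq_mk] with p hp using hp
  refine ⟨v, fun t x => hGm.mk _ (t, x), ⟨hvm, hGm.stronglyMeasurable_mk, fun t => ?_,
    fun t => ?_, ?_, hgrad.congr hvup hGp⟩, WeakEq.congr heq hvup ae_eq_rfl,
    mixedNorm_congr hvu⟩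
  · by_cases ht : t ∈ T'
    · rw [eLpNorm_congr_ae (hvT t ht)]
      exact (hTae t (hT'T ht)).2.1
    · rw [hvT' t ht]; simp
  · by_cases ht : t ∈ T'
    · exact (hTae t (hT'T ht)).2.2.congr (hvT t ht).symm
    · rw [hvT' t ht]; exact isDivFree_zero
  · rw [lintegral_gradSq hGm] at hG
    refine le_trans (le_of_eq (lintegral_congr_ae ?_)) hG
    filter_upwards [hGp] with p hp
    rw [hp]

theorem eLpNorm_two_sq {α F : Type*} [MeasurableSpace α] [NormedAddCommGroup F]
    (f : α → F) (μ : Measure α) : eLpNorm f 2 μ ^ 2 = ∫⁻ x, ‖f x‖ₑ ^ 2 ∂μ := by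
  have := eLpNorm_nnreal_pow_eq_lintegral (f := f) (μ := μ) (p := 2) (by norm_num)
  simpa using this

theorem eLpNorm_two_le_iff {α F : Type*} [MeasurableSpace α] [NormedAddCommGroup F]
    {f : α → F} {μ : Measure α} {n : ℝ≥0∞} :
    eLpNorm f 2 μ ≤ n ↔ ∫⁻ x, ‖f x‖ₑ ^ 2 ∂μ ≤ n ^ 2 := by
  rw [← eLpNorm_two_sq]
  exact (ENNReal.pow_le_pow_left_iff two_ne_zero).symm

theorem enorm_integral_mul_le {α : Type*} [MeasurableSpace α] {μ : Measure α} {f g : α → ℝ}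
    (hf : AEStronglyMeasurable f μ) (hg : AEStronglyMeasurable g μ) :
    ‖∫ x, f x * g x ∂μ‖ₑ ≤ eLpNorm f 2 μ * eLpNorm g 2 μ := by
  refine (enorm_integral_le_lintegral_enorm _).trans ?_
  have := eLpNorm_smul_le_mul_eLpNorm (p := 2) (q := 2) (r := 1) hg hf
  rwa [eLpNorm_one_eq_lintegral_enorm] at this

theorem enorm_sq_eq_ofReal (a : ℝ) : ‖a‖ₑ ^ 2 = ENNReal.ofReal (a ^ 2) := by
  rw [← ofReal_norm, ← ENNReal.ofReal_pow (norm_nonneg a), Real.norm_eq_abs, sq_abs]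

theorem enorm_coord_le (v : E3) (i : Fin 3) : ‖v i‖ₑ ≤ ‖v‖ₑ := by
  rw [enorm_le_iff_norm_le]
  exact PiLp.norm_apply_le v i

namespace IsRegularPair

variable {n : ℝ≥0∞} {u : ℝ → E3 → E3} {G : ℝ → E3 → Fin 3 → Fin 3 → ℝ}

theorem stronglyMeasurable_coord (h : IsRegularPair n u G) (i : Fin 3) :
    StronglyMeasurable fun p : ℝ × E3 => u p.1 p.2 i :=
  (EuclideanSpace.proj (𝕜 := ℝ) i).continuous.comp_stronglyMeasurable h.stronglyMeasurable

theorem stronglyMeasurable_grad_coord (h : IsRegularPair n u G) (i j : Fin 3) :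
    StronglyMeasurable fun p : ℝ × E3 => G p.1 p.2 i j :=
  (show Continuous fun g : Fin 3 → Fin 3 → ℝ => g i j by fun_prop).comp_stronglyMeasurable
    h.stronglyMeasurable_grad

theorem stronglyMeasurable_slice (h : IsRegularPair n u G) (t : ℝ) (i : Fin 3) :
    StronglyMeasurable fun x => u t x i :=
  (h.stronglyMeasurable_coord i).comp_measurable measurable_prodMk_left

theorem eLpNorm_coord_le (h : IsRegularPair n u G) (t : ℝ) (i : Fin 3) :
    eLpNorm (fun x => u t x i) 2 volume ≤ n :=
  (eLpNorm_mono_enorm fun x => enorm_coord_le (u t x) i).trans (h.eLpNorm_le t)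

theorem lintegral_coord_sq_le (h : IsRegularPair n u G) (t : ℝ) (i : Fin 3) :
    ∫⁻ x, ‖u t x i‖ₑ ^ 2 ≤ n ^ 2 :=
  eLpNorm_two_le_iff.1 (h.eLpNorm_coord_le t i)

theorem memLp_coord (h : IsRegularPair n u G) (hn : n ≠ ∞) (t : ℝ) (i : Fin 3) :
    MemLp (fun x => u t x i) 2 volume :=
  ⟨(h.stronglyMeasurable_slice t i).aestronglyMeasurable,
    (h.eLpNorm_coord_le t i).trans_lt hn.lt_top⟩

theorem eLpNorm_coord_μW_le (h : IsRegularPair n u G) (i : Fin 3) :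
    eLpNorm (fun p : ℝ × E3 => u p.1 p.2 i) 2 μW ≤ n := by
  rw [eLpNorm_two_le_iff]
  have hm : Measurable fun p : ℝ × E3 => ‖u p.1 p.2 i‖ₑ ^ 2 :=
    (h.stronglyMeasurable_coord i).measurable.enorm.pow_const 2
  have hm' : Measurable fun p : ℝ × E3 => ENNReal.ofReal (wt p) * ‖u p.1 p.2 i‖ₑ ^ 2 :=
    measurable_ofReal_wt.mul hm
  have hint : Integrable (fun t : ℝ => Real.exp (-t)) (volume.restrict (Ioi 0)) := by
    simpa [IntegrableOn] using exp_neg_integrableOn_Ioi 0 one_pos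
  unfold μW
  rw [lintegral_withDensity_eq_lintegral_mul _ measurable_ofReal_wt hm]
  simp only [Pi.mul_apply]
  unfold μST
  rw [lintegral_prod _ hm'.aemeasurable]
  calc _ ≤ ∫⁻ t in Ioi (0 : ℝ), ENNReal.ofReal (Real.exp (-t)) * n ^ 2 := by
        refine lintegral_mono_ae ?_
        filter_upwards [ae_restrict_mem measurableSet_Ioi] with t ht
        refine le_trans ?_ (mul_le_mul_right (h.lintegral_coord_sq_le t i) _)
        rw [← lintegral_const_mul _
          ((h.stronglyMeasurable_slice t i).measurable.enorm.pow_const 2)]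
        refine lintegral_mono fun x => ?_
        refine mul_le_mul_left (ENNReal.ofReal_le_ofReal ?_) _
        unfold wt
        rw [abs_of_pos ht]
        refine mul_le_of_le_one_right (Real.exp_pos _).le ?_
        exact Real.rpow_le_one_of_one_le_of_nonpos (by simp) (by norm_num)
    _ = n ^ 2 := by
        rw [lintegral_mul_const _ (by fun_prop), ← ofReal_integral_eq_lintegral_ofReal hint
          (Eventually.of_forall fun t => (Real.exp_pos _).le), integral_exp_neg_Ioi_zero]
        simp

theorem memLp_coord_μW (h : IsRegularPair n u G) (hn : n ≠ ∞) (i : Fin 3) :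
    MemLp (fun p : ℝ × E3 => u p.1 p.2 i) 2 μW :=
  ⟨(h.stronglyMeasurable_coord i).aestronglyMeasurable,
    (h.eLpNorm_coord_μW_le i).trans_lt hn.lt_top⟩

theorem lintegral_grad_sq_le (h : IsRegularPair n u G) (i : Fin 3) :
    ∑ j, ∫⁻ p, ‖G p.1 p.2 i j‖ₑ ^ 2 ∂μST ≤ n := by
  rw [← lintegral_finsetSum _ fun j _ =>
    (h.stronglyMeasurable_grad_coord i j).measurable.enorm.pow_const 2]
  refine le_trans (lintegral_mono fun p => ?_) h.lintegral_grad_le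
  simp_rw [enorm_sq_eq_ofReal]
  exact Finset.single_le_sum (f := fun i => ∑ j, ENNReal.ofReal (G p.1 p.2 i j ^ 2))
    (fun _ _ => zero_le) (Finset.mem_univ i)

theorem memLp_grad (h : IsRegularPair n u G) (hn : n ≠ ∞) (i j : Fin 3) :
    MemLp (fun p : ℝ × E3 => G p.1 p.2 i j) 2 μST := by
  refine ⟨(h.stronglyMeasurable_grad_coord i j).aestronglyMeasurable, ?_⟩
  have h1 : eLpNorm (fun p : ℝ × E3 => G p.1 p.2 i j) 2 μST ^ 2 < ∞ := by
    rw [eLpNorm_two_sq]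
    refine lt_of_le_of_lt ?_ ((h.lintegral_grad_sq_le i).trans_lt hn.lt_top)
    exact Finset.single_le_sum (f := fun j => ∫⁻ p, ‖G p.1 p.2 i j‖ₑ ^ 2 ∂μST)
      (fun _ _ => zero_le) (Finset.mem_univ j)
  by_contra hc
  rw [not_lt, top_le_iff] at hc
  simp [hc] at h1

theorem memLp_grad_μW (h : IsRegularPair n u G) (hn : n ≠ ∞) (i j : Fin 3) :
    MemLp (fun p : ℝ × E3 => G p.1 p.2 i j) 2 μW :=
  (h.memLp_grad hn i j).mono_measure μW_le

end IsRegularPair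

theorem integrable_exp_mul {f : ℝ × E3 → ℝ} (hf : Integrable f μW) {χ : E3 → ℝ}
    (hχ : Continuous χ) (hχc : HasCompactSupport χ) :
    Integrable (fun p : ℝ × E3 => Real.exp (-|p.1|) * (f p * χ p.2)) μST := by
  have hc : Continuous fun x : E3 => χ x * (1 + ‖x‖) ^ (4 : ℝ) := by
    refine hχ.mul (Continuous.rpow_const (by fun_prop) fun x => Or.inl ?_)
    positivity
  obtain ⟨M, hM⟩ := hc.bounded_above_of_compact_support hχc.mul_right
  have : Integrable (fun p : ℝ × E3 => f p * (χ p.2 * (1 + ‖p.2‖) ^ (4 : ℝ))) μW :=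
    hf.mul_bdd (c := M) (hc.comp continuous_snd).aestronglyMeasurable
      (Eventually.of_forall fun p => hM p.2)
  rw [integrable_μW] at this
  refine this.congr (Eventually.of_forall fun p => ?_)
  have h1 : (1 + ‖p.2‖) ^ (-4 : ℝ) * (1 + ‖p.2‖) ^ (4 : ℝ) = 1 := by
    rw [← Real.rpow_add (by positivity)]; simp
  simp only [wt]
  calc _ = Real.exp (-|p.1|) * (f p * χ p.2) *
        ((1 + ‖p.2‖) ^ (-4 : ℝ) * (1 + ‖p.2‖) ^ (4 : ℝ)) := by ring
    _ = _ := by rw [h1, mul_one]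

theorem hasCompactSupport_prod_mul {θ : ℝ → ℝ} {χ : E3 → ℝ} (hθ : HasCompactSupport θ)
    (hχ : HasCompactSupport χ) : HasCompactSupport fun p : ℝ × E3 => θ p.1 * χ p.2 := by
  refine HasCompactSupport.intro (hθ.isCompact.prod hχ.isCompact) fun p hp => ?_
  by_cases h : p.1 ∈ tsupport θ
  · rw [image_eq_zero_of_notMem_tsupport (f := χ) fun h' => hp ⟨h, h'⟩, mul_zero]
  · rw [image_eq_zero_of_notMem_tsupport h, zero_mul]

theorem tsupport_prod_mul_subset {θ : ℝ → ℝ} {χ : E3 → ℝ} (hθ : tsupport θ ⊆ Ioi 0) :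
    tsupport (fun p : ℝ × E3 => θ p.1 * χ p.2) ⊆ {p | 0 < p.1} := by
  have h1 : tsupport (fun p : ℝ × E3 => θ p.1 * χ p.2) ⊆ Prod.fst ⁻¹' tsupport θ := by
    refine closure_minimal (fun p hp => subset_tsupport θ ?_)
      ((isClosed_tsupport θ).preimage continuous_fst)
    intro h
    refine hp ?_
    simp only [h, zero_mul]
  exact h1.trans fun p hp => hθ hp

theorem HasCompactSupport.pd {f : E3 → ℝ} (hf : HasCompactSupport f) (j : Fin 3) :
    HasCompactSupport (_root_.pd f j) := by
  unfold _root_.pd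
  exact hf.fderiv_apply ℝ (EuclideanSpace.single j (1 : ℝ))

theorem integral_μST_mul {f : ℝ × E3 → ℝ} (hf : Integrable f μW) {θ : ℝ → ℝ} {χ : E3 → ℝ}
    (hθ : Continuous θ) (hθc : HasCompactSupport θ) (hχ : Continuous χ)
    (hχc : HasCompactSupport χ) :
    ∫ p, f p * (θ p.1 * χ p.2) ∂μST = ∫ t in Ioi 0, θ t * ∫ y, f (t, y) * χ y := by
  have hi := integrable_mul_of_hasCompactSupport hf
    (b := fun p : ℝ × E3 => θ p.1 * χ p.2) (by fun_prop) (hasCompactSupport_prod_mul hθc hχc)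
  unfold μST at hi ⊢
  rw [integral_prod _ hi]
  refine integral_congr_ae (Eventually.of_forall fun t => ?_)
  simp only
  rw [← integral_const_mul]
  congr 1
  funext y
  ring

theorem ae_eq_zero_of_integral_test {H : ℝ → ℝ}
    (hHi : Integrable (fun t => Real.exp (-|t|) * H t) (volume.restrict (Ioi 0)))
    (h : ∀ θ : ℝ → ℝ, ContDiff ℝ (⊤ : ℕ∞) θ → HasCompactSupport θ → tsupport θ ⊆ Ioi 0 →
      ∫ t in Ioi 0, θ t * H t = 0) :
    ∀ᵐ t ∂(volume.restrict (Ioi (0 : ℝ))), H t = 0 := by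
  have hl : LocallyIntegrableOn (fun t => Real.exp (-|t|) * H t) (Ioi 0) volume :=
    (show IntegrableOn _ _ _ from hHi).locallyIntegrableOn
  have ho : IsOpen (Ioi (0 : ℝ)) := isOpen_Ioi
  have := ho.ae_eq_zero_of_integral_contDiff_smul_eq_zero hl fun g hg hgc hgs => by
    have hg2 : ContDiff ℝ (⊤ : ℕ∞) fun t => g t * Real.exp (-t) := by fun_prop
    have h2 := h _ hg2 hgc.mul_right ((tsupport_mul_subset_left).trans hgs)
    have hz : ∀ t, t ∉ Ioi (0 : ℝ) → g t • (Real.exp (-|t|) * H t) = 0 := fun t ht => by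
      rw [image_eq_zero_of_notMem_tsupport fun h2 => ht (hgs h2), zero_smul]
    rw [← setIntegral_eq_integral_of_forall_compl_eq_zero hz]
    refine Eq.trans ?_ h2
    refine setIntegral_congr_fun measurableSet_Ioi fun t ht => ?_
    simp only [abs_of_pos (show (0 : ℝ) < t from ht), smul_eq_mul]
    ring
  rw [ae_restrict_iff' measurableSet_Ioi]
  filter_upwards [this] with t ht h0
  have := ht h0
  simpa using this

namespace IsRegularPair

variable {n : ℝ≥0∞} {u : ℝ → E3 → E3} {G : ℝ → E3 → Fin 3 → Fin 3 → ℝ}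

theorem ae_integral_mul_pd (h : IsRegularPair n u G) (hn : n ≠ ∞) {χ : E3 → ℝ}
    (hχ : ContDiff ℝ (⊤ : ℕ∞) χ) (hχc : HasCompactSupport χ) (i j : Fin 3) :
    ∀ᵐ t ∂(volume.restrict (Ioi (0 : ℝ))),
      ∫ y, u t y i * pd χ j y = - ∫ y, G t y i j * χ y := by
  have hu : Integrable (fun p : ℝ × E3 => u p.1 p.2 i) μW :=
    (h.memLp_coord_μW hn i).integrable (by norm_num)
  have hG : Integrable (fun p : ℝ × E3 => G p.1 p.2 i j) μW :=
    (h.memLp_grad_μW hn i j).integrable (by norm_num)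
  have hpd : Continuous (pd χ j) := (contDiff_pd hχ j).continuous
  have i1 := (integrable_exp_mul hu hpd (hχc.pd j)).integral_prod_left
  have i2 := (integrable_exp_mul hG hχ.continuous hχc).integral_prod_left
  simp only [integral_const_mul] at i1 i2
  have key := ae_eq_zero_of_integral_test
    (H := fun t => (∫ y, u t y i * pd χ j y) + ∫ y, G t y i j * χ y)
    (by simp only [mul_add]; exact i1.add i2) fun θ hθ hθc hθs => by
      have e := h.isDistGrad (fun p => θ p.1 * χ p.2)
        ((hθ.comp contDiff_fst).mul (hχ.comp contDiff_snd))
        (hasCompactSupport_prod_mul hθc hχc) (tsupport_prod_mul_subset hθs) i j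
      simp only [pd_const_mul] at e
      rw [integral_μST_mul hu hθ.continuous hθc hpd (hχc.pd j),
        integral_μST_mul hG hθ.continuous hθc hχ.continuous hχc] at e
      have j1 := (integrable_mul_of_hasCompactSupport hu
        (b := fun p : ℝ × E3 => θ p.1 * pd χ j p.2) (by have := hθ.continuous; fun_prop)
        (hasCompactSupport_prod_mul hθc (hχc.pd j))).integral_prod_left
      have j2 := (integrable_mul_of_hasCompactSupport hG
        (b := fun p : ℝ × E3 => θ p.1 * χ p.2) (by
          have := hθ.continuous; have := hχ.continuous; fun_prop)
        (hasCompactSupport_prod_mul hθc hχc)).integral_prod_left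
      have hr : ∀ (f b : E3 → ℝ) (c : ℝ), ∫ y, f y * (c * b y) = c * ∫ y, f y * b y :=
        fun f b c => by
          rw [← integral_const_mul]; congr 1; funext y; ring
      simp only [hr] at j1 j2
      simp only [mul_add]
      rw [integral_add j1 j2, e]
      ring
  filter_upwards [key] with t ht
  linarith

theorem ae_integral_mul_laplacian (h : IsRegularPair n u G) (hn : n ≠ ∞) {η : E3 → ℝ}
    (hη : ContDiff ℝ (⊤ : ℕ∞) η) (hηc : HasCompactSupport η) (i : Fin 3) (x : E3) :
    ∀ᵐ t ∂(volume.restrict (Ioi (0 : ℝ))),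
      ∫ y, u t y i * ∑ j, pd (pd η j) j (x - y) = ∑ j, ∫ y, G t y i j * pd η j (x - y) := by
  have hcs : ∀ f : E3 → ℝ, HasCompactSupport f → HasCompactSupport fun y => f (x - y) :=
    fun f hf => hf.comp_homeomorph (Homeomorph.subLeft x)
  have hsm : ∀ f : E3 → ℝ, ContDiff ℝ (⊤ : ℕ∞) f → ContDiff ℝ (⊤ : ℕ∞) fun y => f (x - y) :=
    fun f hf => hf.comp (contDiff_const.sub contDiff_id)
  have h1 : ∀ j, ∀ᵐ t ∂(volume.restrict (Ioi (0 : ℝ))),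
      ∫ y, u t y i * pd (pd η j) j (x - y) = ∫ y, G t y i j * pd η j (x - y) := fun j => by
    filter_upwards [h.ae_integral_mul_pd hn (hsm _ (contDiff_pd hη j)) (hcs _ (hηc.pd j)) i j]
      with t ht
    have e : ∀ y, pd (fun y => pd η j (x - y)) j y = - pd (pd η j) j (x - y) := fun y => by
      have := pd_comp_smul_add (-1) x ((contDiff_pd hη j).differentiable (by simp)) j y
      simpa [← sub_eq_neg_add] using this
    simp only [e, mul_neg, integral_neg, neg_inj] at ht
    exact ht
  filter_upwards [ae_all_iff.2 h1] with t ht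
  rw [← Finset.sum_congr rfl fun j _ => ht j, ← integral_finsetSum]
  · simp only [Finset.mul_sum]
  · intro j _
    refine (h.memLp_coord hn t i).integrable_mul (q := 2) ?_
    exact (hsm _ (contDiff_pd (contDiff_pd hη j) j)).continuous.memLp_of_hasCompactSupport
      (hcs _ ((hηc.pd j).pd j))

end IsRegularPair

theorem stronglyMeasurable_convolution {f : ℝ × E3 → ℝ} (hf : StronglyMeasurable f) {k : E3 → ℝ}
    (hk : StronglyMeasurable k) :
    StronglyMeasurable fun p : ℝ × E3 => ∫ y, f (p.1, y) * k (p.2 - y) := by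
  refine StronglyMeasurable.integral_prod_right'
    (f := fun q : (ℝ × E3) × E3 => f (q.1.1, q.2) * k (q.1.2 - q.2)) ?_
  refine (hf.comp_measurable ?_).mul (hk.comp_measurable ?_) <;> fun_prop

theorem ae_μST_of_forall_ae {P : ℝ × E3 → Prop} (hP : MeasurableSet {p | P p})
    (h : ∀ x, ∀ᵐ t ∂(volume.restrict (Ioi (0 : ℝ))), P (t, x)) : ∀ᵐ p ∂μST, P p := by
  unfold μST
  have h1 : ∀ᵐ x : E3, ∀ᵐ t ∂(volume.restrict (Ioi (0 : ℝ))), P (t, x) :=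
    Eventually.of_forall h
  have h2 := (Measure.ae_ae_comm (μ := volume.restrict (Ioi (0 : ℝ))) (ν := (volume : Measure E3))
    (p := fun t x => P (t, x)) hP).2 h1
  exact (Measure.ae_prod_mem_iff_ae_ae_mem hP).2 h2

theorem sum_fin_three_sq_le (a : Fin 3 → ℝ≥0∞) : (∑ j, a j) ^ 2 ≤ 3 * ∑ j, a j ^ 2 := by
  have := ENNReal.rpow_sum_le_const_mul_sum_rpow (Finset.univ) a (p := 2) (by norm_num)
  norm_num at this
  exact this

/-- The mollifier at scale `ε`. -/
def scaled (ρ : E3 → ℝ) (ε : ℝ) (x : E3) : ℝ := ε⁻¹ ^ 3 * ρ (ε⁻¹ • x)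

theorem continuous_scaled {ρ : E3 → ℝ} (hρ : Continuous ρ) (ε : ℝ) : Continuous (scaled ρ ε) := by
  unfold scaled; fun_prop

theorem hasCompactSupport_scaled {ρ : E3 → ℝ} (hρ1 : ∀ x, 1 < ‖x‖ → ρ x = 0) {ε : ℝ}
    (hε : 0 < ε) : HasCompactSupport (scaled ρ ε) := by
  refine HasCompactSupport.intro (isCompact_closedBall (0 : E3) ε) fun x hx => ?_
  unfold scaled
  rw [hρ1, mul_zero]
  rw [norm_smul, norm_inv, Real.norm_of_nonneg hε.le, lt_inv_mul_iff₀ hε, mul_one]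
  simpa using hx

theorem mollify_eq (ρ : E3 → ℝ) (ε : ℝ) (f : E3 → ℝ) (x : E3) :
    mollify ρ ε f x = ∫ y, f y * scaled ρ ε (x - y) := by
  unfold mollify scaled
  congr 1; funext y; ring

theorem memLp_comp_sub {k : E3 → ℝ} (hk : Continuous k) (hkc : HasCompactSupport k) (x : E3) :
    MemLp (fun y => k (x - y)) 2 volume :=
  (show Continuous fun y => k (x - y) by fun_prop).memLp_of_hasCompactSupport
    (hkc.comp_homeomorph (Homeomorph.subLeft x))

namespace IsRegularPair

variable {n : ℝ≥0∞} {u : ℝ → E3 → E3} {G : ℝ → E3 → Fin 3 → Fin 3 → ℝ}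

theorem lintegral_laplacian_sq_le (h : IsRegularPair n u G) (hn : n ≠ ∞) {η : E3 → ℝ}
    (hη : ContDiff ℝ (⊤ : ℕ∞) η) (hηc : HasCompactSupport η) {A : ℝ≥0∞}
    (hA : ∀ j, ∫⁻ x, ‖pd η j x‖ₑ ≤ A) (i : Fin 3) :
    ∫⁻ p, ‖∫ y, u p.1 y i * ∑ j, pd (pd η j) j (p.2 - y)‖ₑ ^ 2 ∂μST ≤ 3 * A ^ 2 * n := by
  have hpd : ∀ j, Continuous (pd η j) := fun j => (contDiff_pd hη j).continuous
  have hpd2 : ∀ j, Continuous (pd (pd η j) j) := fun j =>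
    (contDiff_pd (contDiff_pd hη j) j).continuous
  have m1 : StronglyMeasurable fun p : ℝ × E3 =>
      ∫ y, u p.1 y i * ∑ j, pd (pd η j) j (p.2 - y) :=
    stronglyMeasurable_convolution (h.stronglyMeasurable_coord i)
      (k := fun x => ∑ j, pd (pd η j) j x)
      (continuous_finsetSum _ fun j _ => hpd2 j).stronglyMeasurable
  have m2 : ∀ j, StronglyMeasurable fun p : ℝ × E3 => ∫ y, G p.1 y i j * pd η j (p.2 - y) :=
    fun j => stronglyMeasurable_convolution (h.stronglyMeasurable_grad_coord i j)
      (hpd j).stronglyMeasurable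
  have hae : ∀ᵐ p ∂μST, ∫ y, u p.1 y i * ∑ j, pd (pd η j) j (p.2 - y)
      = ∑ j, ∫ y, G p.1 y i j * pd η j (p.2 - y) :=
    ae_μST_of_forall_ae (m1.measurableSet_eq_fun (Finset.stronglyMeasurable_fun_sum _ fun j _ => m2 j))
      fun x => h.ae_integral_mul_laplacian hn hη hηc i x
  have mK : ∀ j, Measurable fun p : ℝ × E3 =>
      (∫⁻ y, ‖pd η j (p.2 - y)‖ₑ * ‖G p.1 y i j‖ₑ) ^ 2 := fun j => by
    refine Measurable.pow_const (Measurable.lintegral_prod_right'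
      (f := fun q : (ℝ × E3) × E3 => ‖pd η j (q.1.2 - q.2)‖ₑ * ‖G q.1.1 q.2 i j‖ₑ) ?_) 2
    have a1 : Measurable fun q : (ℝ × E3) × E3 => G q.1.1 q.2 i j :=
      (h.stronglyMeasurable_grad_coord i j).measurable.comp
        (measurable_fst.fst.prodMk measurable_snd)
    have a2 : Measurable fun q : (ℝ × E3) × E3 => pd η j (q.1.2 - q.2) :=
      (hpd j).measurable.comp (by fun_prop)
    exact a2.enorm.mul a1.enorm
  calc _ = ∫⁻ p, ‖∑ j, ∫ y, G p.1 y i j * pd η j (p.2 - y)‖ₑ ^ 2 ∂μST := by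
        refine lintegral_congr_ae ?_
        filter_upwards [hae] with p hp
        rw [hp]
    _ ≤ ∫⁻ p, 3 * ∑ j, (∫⁻ y, ‖pd η j (p.2 - y)‖ₑ * ‖G p.1 y i j‖ₑ) ^ 2 ∂μST := by
        refine lintegral_mono fun p => ?_
        refine le_trans (ENNReal.pow_le_pow_left (enorm_sum_le _ _)) ?_
        refine (sum_fin_three_sq_le _).trans (mul_le_mul_right (Finset.sum_le_sum fun j _ => ?_) _)
        refine ENNReal.pow_le_pow_left ((enorm_integral_le_lintegral_enorm _).trans ?_)
        refine lintegral_mono fun y => ?_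
        rw [enorm_mul, mul_comm]
    _ = 3 * ∑ j, ∫⁻ p, (∫⁻ y, ‖pd η j (p.2 - y)‖ₑ * ‖G p.1 y i j‖ₑ) ^ 2 ∂μST := by
        rw [lintegral_const_mul _ (Finset.measurable_sum _ fun j _ => mK j),
          lintegral_finsetSum _ fun j _ => mK j]
    _ ≤ 3 * ∑ j, A ^ 2 * ∫⁻ p, ‖G p.1 p.2 i j‖ₑ ^ 2 ∂μST := by
        refine mul_le_mul_right (Finset.sum_le_sum fun j _ => ?_) _
        have mG : Measurable fun p : ℝ × E3 => ‖G p.1 p.2 i j‖ₑ ^ 2 :=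
          (h.stronglyMeasurable_grad_coord i j).measurable.enorm.pow_const 2
        unfold μST
        rw [lintegral_prod _ (mK j).aemeasurable, lintegral_prod _ mG.aemeasurable,
          ← lintegral_const_mul _ mG.lintegral_prod_right']
        refine lintegral_mono fun t => ?_
        refine (lintegral_convolution_sq_le (hpd j).measurable.enorm
          (g := fun y => ‖G t y i j‖ₑ) ?_).trans ?_
        · exact ((h.stronglyMeasurable_grad_coord i j).measurable.comp
            measurable_prodMk_left).enorm
        · exact mul_le_mul_left (ENNReal.pow_le_pow_left (hA j)) _
    _ = 3 * A ^ 2 * ∑ j, ∫⁻ p, ‖G p.1 p.2 i j‖ₑ ^ 2 ∂μST := by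
        rw [← Finset.mul_sum, mul_assoc]
    _ ≤ _ := mul_le_mul_right (h.lintegral_grad_sq_le i) _

theorem mollify_sub_mollify (h : IsRegularPair n u G) (hn : n ≠ ∞) {ρ : E3 → ℝ}
    (hρ : Continuous ρ) (hρ1 : ∀ x, 1 < ‖x‖ → ρ x = 0) {ε R : ℝ} (hε : 0 < ε) (hR : 0 < R)
    (t : ℝ) (i : Fin 3) (x : E3) :
    mollify ρ ε (fun y => u t y i) x - mollify ρ R (fun y => u t y i) x
      = ∫ y, u t y i * (scaled ρ ε (x - y) - scaled ρ R (x - y)) := by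
  rw [mollify_eq, mollify_eq, ← integral_sub]
  · simp only [mul_sub]
  · exact (h.memLp_coord hn t i).integrable_mul (q := 2) (memLp_comp_sub
      (continuous_scaled hρ ε) (hasCompactSupport_scaled hρ1 hε) x)
  · exact (h.memLp_coord hn t i).integrable_mul (q := 2) (memLp_comp_sub
      (continuous_scaled hρ R) (hasCompactSupport_scaled hρ1 hR) x)

theorem stronglyMeasurable_mollify (h : IsRegularPair n u G) {ρ : E3 → ℝ} (hρ : Continuous ρ)
    (ε : ℝ) (i : Fin 3) :
    StronglyMeasurable fun p : ℝ × E3 => mollify ρ ε (fun y => u p.1 y i) p.2 := by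
  simp only [mollify_eq]
  exact stronglyMeasurable_convolution (h.stronglyMeasurable_coord i)
    (continuous_scaled hρ ε).stronglyMeasurable

theorem lintegral_sub_mollify_sq_le (h : IsRegularPair n u G) (hn : n ≠ ∞) {ρ : E3 → ℝ}
    {C : ℝ} (hρ : Continuous ρ) (hρ1 : ∀ x, 1 < ‖x‖ → ρ x = 0) (hρi : ∫ x, ρ x = 1)
    (hη : ∀ ε R : ℝ, 0 < ε → ε ≤ R → ∃ η : E3 → ℝ, ContDiff ℝ (⊤ : ℕ∞) η ∧ HasCompactSupport η ∧
      (∀ x, ∑ j, pd (pd η j) j x = ε⁻¹ ^ 3 * ρ (ε⁻¹ • x) - R⁻¹ ^ 3 * ρ (R⁻¹ • x)) ∧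
      ∀ j, ∫⁻ x, ‖pd η j x‖ₑ ≤ ENNReal.ofReal (C * R)) {R : ℝ} (hR : 0 < R) (i : Fin 3) :
    ∫⁻ p, ‖u p.1 p.2 i - mollify ρ R (fun y => u p.1 y i) p.2‖ₑ ^ 2 ∂μST
      ≤ 3 * ENNReal.ofReal (C * R) ^ 2 * n := by
  set ε : ℕ → ℝ := fun m => R / (m + 1) with hεdef
  have hε : ∀ m, 0 < ε m := fun m => by positivity
  have hεR : ∀ m, ε m ≤ R := fun m => div_le_self hR.le (by simp)
  have hε0 : Tendsto ε atTop (𝓝 0) := by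
    have := (tendsto_one_div_add_atTop_nhds_zero_nat (𝕜 := ℝ)).const_mul R
    simpa [hεdef, div_eq_mul_inv] using this
  have mm := fun r => h.stronglyMeasurable_mollify hρ r i
  have hlim : ∀ᵐ p ∂μST, Tendsto
      (fun m => mollify ρ (ε m) (fun y => u p.1 y i) p.2) atTop (𝓝 (u p.1 p.2 i)) := by
    have hset : MeasurableSet {p : ℝ × E3 | Tendsto
        (fun m => mollify ρ (ε m) (fun y => u p.1 y i) p.2) atTop (𝓝 (u p.1 p.2 i))} :=
      measurableSet_tendsto_fun (l := atTop) (fun m => (mm (ε m)).measurable)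
        (h.stronglyMeasurable_coord i).measurable
    unfold μST
    refine (Measure.ae_prod_mem_iff_ae_ae_mem hset).2 (Eventually.of_forall fun t => ?_)
    exact ae_tendsto_mollify hρ hρ1 hρi hε hε0
      ((h.memLp_coord hn t i).locallyIntegrable (by norm_num))
  have hb : ∀ m, ∫⁻ p, ‖mollify ρ (ε m) (fun y => u p.1 y i) p.2
      - mollify ρ R (fun y => u p.1 y i) p.2‖ₑ ^ 2 ∂μST ≤ 3 * ENNReal.ofReal (C * R) ^ 2 * n :=
    fun m => by
      obtain ⟨η, e1, e2, e3, e4⟩ := hη (ε m) R (hε m) (hεR m)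
      have := h.lintegral_laplacian_sq_le hn e1 e2 e4 i
      simp only [e3] at this
      simp only [h.mollify_sub_mollify hn hρ hρ1 (hε m) hR]
      exact this
  have hF := lintegral_liminf_le (μ := μST) (u := atTop) (f := fun m p =>
    ‖mollify ρ (ε m) (fun y => u p.1 y i) p.2 - mollify ρ R (fun y => u p.1 y i) p.2‖ₑ ^ 2)
    fun m => (((mm (ε m)).sub (mm R)).measurable.enorm.pow_const 2)
  refine le_trans (le_of_eq (lintegral_congr_ae ?_)) (hF.trans ?_)
  · filter_upwards [hlim] with p hp
    refine (Tendsto.liminf_eq (f := atTop) ?_).symm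
    refine ((ENNReal.continuous_pow 2).comp continuous_enorm).continuousAt.tendsto.comp ?_
    exact hp.sub_const _
  · refine liminf_le_of_le (by isBoundedDefault) fun b hb' => ?_
    obtain ⟨m, hm⟩ := Eventually.exists (f := atTop) hb'
    exact hm.trans (hb m)

end IsRegularPair

theorem pd_comm {f : E3 → ℝ} (hf : ContDiff ℝ (⊤ : ℕ∞) f) (i j : Fin 3) (x : E3) :
    pd (pd f i) j x = pd (pd f j) i x := by
  have h1 : ∀ (i j : Fin 3), pd (pd f i) j x
      = fderiv ℝ (fderiv ℝ f) x (EuclideanSpace.single j 1) (EuclideanSpace.single i 1) := by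
    intro i j
    have hd : DifferentiableAt ℝ (fderiv ℝ f) x :=
      (hf.fderiv_right (m := (⊤ : ℕ∞)) (by simp)).differentiable (by simp) x
    have h2 : HasFDerivAt (fun y => fderiv ℝ f y (EuclideanSpace.single i (1 : ℝ))) _ x :=
      hd.hasFDerivAt.clm_apply (hasFDerivAt_const (EuclideanSpace.single i (1 : ℝ)) x)
    unfold pd
    rw [h2.fderiv]
    simp
  have hs : IsSymmSndFDerivAt ℝ f x :=
    hf.contDiffAt.isSymmSndFDerivAt (by
      simpa using (mod_cast le_top : ((2 : ℕ∞) : WithTop ℕ∞) ≤ (⊤ : ℕ∞)))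
  rw [h1, h1, hs]

theorem pd_sum {f : Fin 3 → E3 → ℝ} (hf : ∀ l, Differentiable ℝ (f l)) (j : Fin 3) (x : E3) :
    pd (fun y => ∑ l, f l y) j x = ∑ l, pd (f l) j x := by
  have h : HasFDerivAt (fun y => ∑ l, f l y) (∑ l, fderiv ℝ (f l) x) x :=
    HasFDerivAt.fun_sum fun l _ => (hf l x).hasFDerivAt
  unfold pd
  rw [h.fderiv]
  simp

/-- Components of the divergence-free field `∇∂ᵢκ - Δκ eᵢ`. -/
def solenoidal (κ : E3 → ℝ) (i l : Fin 3) (y : E3) : ℝ :=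
  pd (pd κ i) l y - if l = i then ∑ j, pd (pd κ j) j y else 0

theorem contDiff_laplacian {κ : E3 → ℝ} (hκ : ContDiff ℝ (⊤ : ℕ∞) κ) :
    ContDiff ℝ (⊤ : ℕ∞) fun y => ∑ j, pd (pd κ j) j y :=
  ContDiff.sum fun j _ => contDiff_pd (contDiff_pd hκ j) j

theorem hasCompactSupport_laplacian {κ : E3 → ℝ} (hκ : HasCompactSupport κ) :
    HasCompactSupport fun y => ∑ j, pd (pd κ j) j y := by
  refine HasCompactSupport.intro hκ.isCompact fun y hy => Finset.sum_eq_zero fun j _ => ?_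
  by_contra hne
  have h1 : y ∈ tsupport (pd (pd κ j) j) := subset_tsupport _ hne
  have h2 : ∀ f : E3 → ℝ, tsupport (pd f j) ⊆ tsupport f := fun f =>
    tsupport_fderiv_apply_subset ℝ (EuclideanSpace.single j (1 : ℝ))
  exact hy (h2 _ (h2 _ h1))

theorem contDiff_solenoidal {κ : E3 → ℝ} (hκ : ContDiff ℝ (⊤ : ℕ∞) κ) (i l : Fin 3) :
    ContDiff ℝ (⊤ : ℕ∞) (solenoidal κ i l) := by
  unfold solenoidal
  refine (contDiff_pd (contDiff_pd hκ i) l).sub ?_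
  split_ifs
  · exact contDiff_laplacian hκ
  · exact contDiff_const

theorem hasCompactSupport_solenoidal {κ : E3 → ℝ} (hκ : HasCompactSupport κ) (i l : Fin 3) :
    HasCompactSupport (solenoidal κ i l) := by
  unfold solenoidal
  refine HasCompactSupport.sub ((hκ.pd i).pd l) ?_
  split_ifs
  · exact hasCompactSupport_laplacian hκ
  · exact HasCompactSupport.zero

theorem sum_pd_solenoidal {κ : E3 → ℝ} (hκ : ContDiff ℝ (⊤ : ℕ∞) κ) (i : Fin 3) (y : E3) :
    ∑ l, pd (solenoidal κ i l) l y = 0 := by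
  have hd : ∀ f : E3 → ℝ, ContDiff ℝ (⊤ : ℕ∞) f → Differentiable ℝ f := fun f hf =>
    hf.differentiable (by simp)
  have h1 : ∀ l, pd (solenoidal κ i l) l y = pd (pd (pd κ i) l) l y
      - if l = i then pd (fun y => ∑ j, pd (pd κ j) j y) l y else 0 := fun l => by
    unfold solenoidal
    by_cases hl : l = i
    · simp only [hl, if_true]
      rw [pd_sub (hd _ (contDiff_pd (contDiff_pd hκ i) i) y) (hd _ (contDiff_laplacian hκ) y)]
    · simp [hl]
  simp only [h1, Finset.sum_sub_distrib, Finset.sum_ite_eq', Finset.mem_univ, if_true]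
  rw [pd_sum (f := fun j => pd (pd κ j) j) fun j => hd _ (contDiff_pd (contDiff_pd hκ j) j),
    sub_eq_zero]
  refine Finset.sum_congr rfl fun j _ => ?_
  have h2 : pd (pd κ i) j = pd (pd κ j) i := funext fun y => pd_comm hκ i j y
  rw [h2, pd_comm (contDiff_pd hκ j)]

theorem abs_integral_mul_le {n : ℝ≥0∞} (hn : n ≠ ∞) {k : E3 → ℝ} (hk : MemLp k 2 volume) :
    ∃ B, ∀ f : E3 → ℝ, MemLp f 2 volume → eLpNorm f 2 volume ≤ n → |∫ y, f y * k y| ≤ B := by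
  refine ⟨(n * eLpNorm k 2 volume).toReal, fun f hf hfn => ?_⟩
  have h := (enorm_integral_mul_le hf.1 hk.1).trans (mul_le_mul_left hfn _)
  have h2 := ENNReal.toReal_mono (ENNReal.mul_ne_top hn hk.2.ne) h
  simpa using h2

theorem abs_integral_mul_mul_le {n : ℝ≥0∞} (hn : n ≠ ∞) {k : E3 → ℝ} (hk : Continuous k)
    (hkc : HasCompactSupport k) :
    ∃ B, ∀ f g : E3 → ℝ, MemLp f 2 volume → eLpNorm f 2 volume ≤ n →
      MemLp g 2 volume → eLpNorm g 2 volume ≤ n →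
      Integrable (fun y => f y * g y * k y) ∧ |∫ y, f y * g y * k y| ≤ B := by
  obtain ⟨M, hM⟩ := hk.bounded_above_of_compact_support hkc
  refine ⟨(n * (ENNReal.ofReal M * n)).toReal, fun f g hf hfn hg hgn => ⟨?_, ?_⟩⟩
  · exact (hf.integrable_mul hg).mul_bdd (c := M) hk.aestronglyMeasurable (Eventually.of_forall hM)
  have hgk : eLpNorm (fun y => g y * k y) 2 volume ≤ ENNReal.ofReal M * n := by
    refine (eLpNorm_le_mul_eLpNorm_of_ae_le_mul (Eventually.of_forall fun x => ?_) 2).trans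
      (mul_le_mul_right hgn _)
    rw [norm_mul, mul_comm]
    exact mul_le_mul_of_nonneg_right (hM x) (norm_nonneg _)
  have h := (enorm_integral_mul_le hf.1 (hg.1.mul hk.aestronglyMeasurable)).trans
    (mul_le_mul' hfn hgk)
  have h2 := ENNReal.toReal_mono (ENNReal.mul_ne_top hn (by finiteness)) h
  simpa [mul_assoc] using h2

theorem integrable_time_mul {f : ℝ × E3 → ℝ} (hf : Integrable f μW) {θ : ℝ → ℝ} {χ : E3 → ℝ}
    (hθ : Continuous θ) (hθc : HasCompactSupport θ) (hχ : Continuous χ)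
    (hχc : HasCompactSupport χ) :
    Integrable (fun t => θ t * ∫ y, f (t, y) * χ y) (volume.restrict (Ioi 0)) := by
  have hi := Integrable.integral_prod_left (integrable_mul_of_hasCompactSupport hf
    (b := fun p : ℝ × E3 => θ p.1 * χ p.2) (by fun_prop)
    (hasCompactSupport_prod_mul hθc hχc))
  refine hi.congr (Eventually.of_forall fun t => ?_)
  simp only
  rw [← integral_const_mul]
  congr 1
  funext y
  ring

set_option maxHeartbeats 1000000 in
theorem WeakEq.integral_prod_test {ν : ℝ} {u₀ : E3 → E3} {n : ℝ≥0∞} {u : ℝ → E3 → E3}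
    {G : ℝ → E3 → Fin 3 → Fin 3 → ℝ} (hw : WeakEq ν u₀ u) (h : IsRegularPair n u G) (hn : n ≠ ∞)
    {Ψ : Fin 3 → E3 → ℝ} (hΨ : ∀ l, ContDiff ℝ (⊤ : ℕ∞) (Ψ l))
    (hΨc : ∀ l, HasCompactSupport (Ψ l)) (hdiv : ∀ y, ∑ l, pd (Ψ l) l y = 0) {θ : ℝ → ℝ}
    (hθ : ContDiff ℝ (⊤ : ℕ∞) θ) (hθc : HasCompactSupport θ) (hθs : tsupport θ ⊆ Ioi 0) :
    ∫ t in Ioi 0, (∑ l, ∫ y, u t y l * Ψ l y) * deriv θ t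
      = - ∫ t in Ioi 0, (ν * (∑ l, ∫ y, u t y l * ∑ j, pd (pd (Ψ l) j) j y) +
          ∑ l, ∑ j, ∫ y, u t y l * u t y j * pd (Ψ l) j y) * θ t := by
  have e := hw (fun p => WithLp.toLp 2 fun l => θ p.1 * Ψ l p.2) ⟨?_, ?_, ?_⟩
  · have hθ0 : θ 0 = 0 := image_eq_zero_of_notMem_tsupport fun h0 => lt_irrefl (0 : ℝ) (mem_Ioi.1 (hθs h0))
    have hu : ∀ l, Integrable (fun p : ℝ × E3 => u p.1 p.2 l) μW := fun l =>
      (h.memLp_coord_μW hn l).integrable (by norm_num)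
    have huu : ∀ l j, Integrable (fun p : ℝ × E3 => u p.1 p.2 l * u p.1 p.2 j) μW := fun l j =>
      (h.memLp_coord_μW hn l).integrable_mul (h.memLp_coord_μW hn j)
    have hθ' : Continuous (deriv θ) := hθ.continuous_deriv (by simp)
    have hθc' : HasCompactSupport (deriv θ) := hθc.deriv
    have hΨ0 := fun l => (hΨ l).continuous
    have hL : ∀ l, Continuous fun y => ∑ j, pd (pd (Ψ l) j) j y := fun l =>
      (contDiff_laplacian (hΨ l)).continuous
    have hLc : ∀ l, HasCompactSupport fun y => ∑ j, pd (pd (Ψ l) j) j y := fun l =>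
      hasCompactSupport_laplacian (hΨc l)
    have hP : ∀ l j, Continuous (pd (Ψ l) j) := fun l j => (contDiff_pd (hΨ l) j).continuous
    have hPc : ∀ l j, HasCompactSupport (pd (Ψ l) j) := fun l j => (hΨc l).pd j
    have k1 : ∀ l, Integrable (fun p : ℝ × E3 => u p.1 p.2 l * (deriv θ p.1 * Ψ l p.2)) μST :=
      fun l => integrable_mul_of_hasCompactSupport (hu l)
        (b := fun p : ℝ × E3 => deriv θ p.1 * Ψ l p.2) (by have := hΨ0 l; fun_prop)
        (hasCompactSupport_prod_mul hθc' (hΨc l))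
    have k2 : ∀ l, Integrable (fun p : ℝ × E3 => u p.1 p.2 l *
        (θ p.1 * ∑ j, pd (pd (Ψ l) j) j p.2)) μST :=
      fun l => integrable_mul_of_hasCompactSupport (hu l)
        (b := fun p : ℝ × E3 => θ p.1 * ∑ j, pd (pd (Ψ l) j) j p.2)
        ((hθ.continuous.comp continuous_fst).mul ((hL l).comp continuous_snd))
        (hasCompactSupport_prod_mul (χ := fun y => ∑ j, pd (pd (Ψ l) j) j y) hθc (hLc l))
    have k3 : ∀ l j, Integrable (fun p : ℝ × E3 => u p.1 p.2 l * u p.1 p.2 j *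
        (θ p.1 * pd (Ψ l) j p.2)) μST :=
      fun l j => integrable_mul_of_hasCompactSupport (huu l j)
        (b := fun p : ℝ × E3 => θ p.1 * pd (Ψ l) j p.2)
        ((hθ.continuous.comp continuous_fst).mul ((hP l j).comp continuous_snd))
        (hasCompactSupport_prod_mul hθc (hPc l j))
    have t1 := fun l => integrable_time_mul (hu l) hθ' hθc' (hΨ0 l) (hΨc l)
    have t2 := fun l => integrable_time_mul (hu l) hθ.continuous hθc (hL l) (hLc l)
    have t3 := fun l j => integrable_time_mul (huu l j) hθ.continuous hθc (hP l j) (hPc l j)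
    have et : ∀ (l : Fin 3) (p : ℝ × E3), deriv (fun τ => θ τ * Ψ l p.2) p.1
        = deriv θ p.1 * Ψ l p.2 := fun l p => deriv_mul_const_field _
    simp only [timeDeriv, spaceLap, spaceGrad, et, pd_const_mul, hθ0, zero_mul, mul_zero,
      Finset.sum_const_zero, integral_zero, neg_zero] at e
    have e' : ∫ p, ((∑ l, u p.1 p.2 l * (deriv θ p.1 * Ψ l p.2)) +
        (ν * (∑ l, u p.1 p.2 l * (θ p.1 * ∑ j, pd (pd (Ψ l) j) j p.2)) +
        ∑ l, ∑ j, u p.1 p.2 l * u p.1 p.2 j * (θ p.1 * pd (Ψ l) j p.2))) ∂μST = 0 := by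
      rw [← e]
      congr 1
      funext p
      rw [← add_assoc, Finset.mul_sum, ← Finset.sum_add_distrib]
      congr 1
      refine Finset.sum_congr rfl fun l _ => ?_
      rw [← Finset.mul_sum]
      ring
    have K1 := integrable_finsetSum Finset.univ fun l _ => k1 l
    have K2 := (integrable_finsetSum Finset.univ fun l _ => k2 l).const_mul ν
    have K3 := integrable_finsetSum Finset.univ fun l _ =>
      integrable_finsetSum Finset.univ fun j _ => k3 l j
    have K23 : Integrable (fun p : ℝ × E3 =>
        ν * (∑ l, u p.1 p.2 l * (θ p.1 * ∑ j, pd (pd (Ψ l) j) j p.2)) +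
        ∑ l, ∑ j, u p.1 p.2 l * u p.1 p.2 j * (θ p.1 * pd (Ψ l) j p.2)) μST := K2.add K3
    rw [integral_add K1 K23, integral_add K2 K3, integral_const_mul,
      integral_finsetSum _ fun l _ => k1 l, integral_finsetSum _ fun l _ => k2 l,
      integral_finsetSum _ fun l _ => integrable_finsetSum Finset.univ fun j _ => k3 l j] at e'
    simp only [fun l => integral_finsetSum Finset.univ fun j _ => k3 l j,
      fun l => integral_μST_mul (hu l) hθ' hθc' (hΨ0 l) (hΨc l),
      fun l => integral_μST_mul (hu l) hθ.continuous hθc (hL l) (hLc l),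
      fun l j => integral_μST_mul (huu l j) hθ.continuous hθc (hP l j) (hPc l j)] at e'
    have s1 : ∀ t, (∑ l, ∫ y, u t y l * Ψ l y) * deriv θ t
        = ∑ l, deriv θ t * ∫ y, u t y l * Ψ l y := fun t => by rw [mul_comm, Finset.mul_sum]
    have s2 : ∀ t, (ν * (∑ l, ∫ y, u t y l * ∑ j, pd (pd (Ψ l) j) j y) +
          ∑ l, ∑ j, ∫ y, u t y l * u t y j * pd (Ψ l) j y) * θ t
        = ν * (∑ l, θ t * ∫ y, u t y l * ∑ j, pd (pd (Ψ l) j) j y) +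
          ∑ l, ∑ j, θ t * ∫ y, u t y l * u t y j * pd (Ψ l) j y := fun t => by
      simp only [← Finset.mul_sum]; ring
    simp only [s1, s2]
    have T2 := (integrable_finsetSum Finset.univ fun l _ => t2 l).const_mul ν
    have T3 := integrable_finsetSum Finset.univ fun l _ =>
      integrable_finsetSum Finset.univ fun j _ => t3 l j
    rw [integral_add T2 T3, integral_const_mul,
      integral_finsetSum _ fun l _ => t1 l, integral_finsetSum _ fun l _ => t2 l,
      integral_finsetSum _ fun l _ => integrable_finsetSum Finset.univ fun j _ => t3 l j]
    simp only [fun l => integral_finsetSum Finset.univ fun j _ => t3 l j]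
    linarith
  · rw [contDiff_euclidean]
    intro l
    exact (hθ.comp contDiff_fst).mul ((hΨ l).comp contDiff_snd)
  · have hK : IsCompact (tsupport θ ×ˢ ⋃ l, tsupport (Ψ l)) :=
      hθc.isCompact.prod (isCompact_iUnion fun l => (hΨc l).isCompact)
    refine HasCompactSupport.intro hK fun p hp => ?_
    ext l
    simp only [PiLp.zero_apply]
    by_cases h1 : p.1 ∈ tsupport θ
    · have : p.2 ∉ tsupport (Ψ l) := fun h2 => hp ⟨h1, mem_iUnion.2 ⟨l, h2⟩⟩
      rw [image_eq_zero_of_notMem_tsupport this, mul_zero]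
    · rw [image_eq_zero_of_notMem_tsupport h1, zero_mul]
  · intro p
    simp only [pd_const_mul, ← Finset.mul_sum, hdiv, mul_zero]

/-- Time derivatives of the smoothed velocity are bounded uniformly over regular pairs. -/
theorem exists_abs_sub_average_le (ν : ℝ) {n : ℝ≥0∞} (hn : n ≠ ∞) {κ : E3 → ℝ}
    (hκ : ContDiff ℝ (⊤ : ℕ∞) κ) (hκc : HasCompactSupport κ) (i : Fin 3) :
    ∃ B, ∀ (u₀ : E3 → E3) (u : ℝ → E3 → E3) (G : ℝ → E3 → Fin 3 → Fin 3 → ℝ),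
      IsRegularPair n u G → WeakEq ν u₀ u → ∀ᵐ t, 0 < t → ∀ a, 0 < a →
        |(∫ y, u t y i * ∑ j, pd (pd κ j) j y) -
          a⁻¹ * ∫ s in Ioc t (t + a), ∫ y, u s y i * ∑ j, pd (pd κ j) j y| ≤ B * a := by
  have hL : ContDiff ℝ (⊤ : ℕ∞) fun y => ∑ j, pd (pd κ j) j y := contDiff_laplacian hκ
  have hLc : HasCompactSupport fun y => ∑ j, pd (pd κ j) j y := hasCompactSupport_laplacian hκc
  have hΨ : ∀ l, ContDiff ℝ (⊤ : ℕ∞) (solenoidal κ i l) := fun l => contDiff_solenoidal hκ i l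
  have hΨc : ∀ l, HasCompactSupport (solenoidal κ i l) := fun l =>
    hasCompactSupport_solenoidal hκc i l
  obtain ⟨M, hM⟩ := abs_integral_mul_le hn
    (hL.continuous.memLp_of_hasCompactSupport (p := 2) (μ := volume) hLc)
  choose B₁ hB₁ using fun l => abs_integral_mul_le hn
    ((contDiff_laplacian (hΨ l)).continuous.memLp_of_hasCompactSupport (p := 2) (μ := volume)
      (hasCompactSupport_laplacian (hΨc l)))
  choose B₂ hB₂ using fun l j => abs_integral_mul_mul_le hn
    (contDiff_pd (hΨ l) j).continuous ((hΨc l).pd j)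
  refine ⟨|ν| * (∑ l, B₁ l) + ∑ l, ∑ j, B₂ l j, fun u₀ u G h hw => ?_⟩
  have hm := fun t l => h.memLp_coord hn t l
  have hg : ∀ t, ∫ y, u t y i * ∑ j, pd (pd κ j) j y
      = - ∑ l, ∫ y, u t y l * solenoidal κ i l y := fun t => by
    have hd := h.isDivFree t (pd κ i) (contDiff_pd hκ i) (hκc.pd i)
    have hpp : ∀ l, MemLp (pd (pd κ i) l) 2 volume := fun l =>
      (contDiff_pd (contDiff_pd hκ i) l).continuous.memLp_of_hasCompactSupport ((hκc.pd i).pd l)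
    have hi : ∀ l, Integrable (fun y => u t y l * pd (pd κ i) l y) := fun l =>
      (hm t l).integrable_mul (hpp l)
    rw [integral_finsetSum _ fun l _ => hi l] at hd
    have e : ∀ l, ∫ y, u t y l * solenoidal κ i l y = (∫ y, u t y l * pd (pd κ i) l y) -
        if l = i then ∫ y, u t y l * ∑ j, pd (pd κ j) j y else 0 := fun l => by
      unfold solenoidal
      split_ifs with hl
      · simp only [mul_sub]
        exact integral_sub (hi l) ((hm t l).integrable_mul (q := 2)
          (hL.continuous.memLp_of_hasCompactSupport hLc))
      · simp
    simp only [e, Finset.sum_sub_distrib, hd, Finset.sum_ite_eq', Finset.mem_univ, if_true]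
    simp
  refine abs_sub_average_le_of_bounded_weak_deriv (M := M)
    (b := fun t => -(ν * (∑ l, ∫ y, u t y l * ∑ j, pd (pd (solenoidal κ i l) j) j y) +
          ∑ l, ∑ j, ∫ y, u t y l * u t y j * pd (solenoidal κ i l) j y)) ?_ ?_ ?_ ?_
  · refine StronglyMeasurable.integral_prod_right' (f := fun p : ℝ × E3 =>
      u p.1 p.2 i * ∑ j, pd (pd κ j) j p.2) ((h.stronglyMeasurable_coord i).mul ?_)
    exact hL.continuous.stronglyMeasurable.comp_measurable measurable_snd
  · exact fun t => hM _ (hm t i) (h.eLpNorm_coord_le t i)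
  · intro t
    rw [abs_neg]
    refine (abs_add_le _ _).trans (add_le_add ?_ ?_)
    · rw [abs_mul]
      refine mul_le_mul_of_nonneg_left ((Finset.abs_sum_le_sum_abs _ _).trans
        (Finset.sum_le_sum fun l _ => ?_)) (abs_nonneg _)
      exact hB₁ l _ (hm t l) (h.eLpNorm_coord_le t l)
    · refine (Finset.abs_sum_le_sum_abs _ _).trans (Finset.sum_le_sum fun l _ =>
        (Finset.abs_sum_le_sum_abs _ _).trans (Finset.sum_le_sum fun j _ => ?_))
      exact (hB₂ l j _ _ (hm t l) (h.eLpNorm_coord_le t l) (hm t j) (h.eLpNorm_coord_le t j)).2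
  · intro θ hθ hθc hθs
    have := hw.integral_prod_test h hn hΨ hΨc (sum_pd_solenoidal hκ i) hθ hθc hθs
    simp only [hg, neg_mul, integral_neg, this]

theorem exists_subseq_tendsto_inner {H : Type*} [NormedAddCommGroup H] [InnerProductSpace ℝ H]
    [CompleteSpace H] [TopologicalSpace.SeparableSpace H] {x : ℕ → H} {C : ℝ}
    (hx : ∀ k, ‖x k‖ ≤ C) :
    ∃ φ : ℕ → ℕ, StrictMono φ ∧ ∃ a : H, ‖a‖ ≤ C ∧
      ∀ y, Tendsto (fun k => inner ℝ (x (φ k)) y) atTop (𝓝 (inner ℝ a y)) := by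
  obtain ⟨a, ha, φ, hφ, hlim⟩ := WeakDual.isSeqCompact_closedBall ℝ H 0 C
    (x := fun k => StrongDual.toWeakDual (InnerProductSpace.toDual ℝ H (x k))) fun k => by
      change InnerProductSpace.toDual ℝ H (x k) ∈ Metric.closedBall 0 C
      simpa using hx k
  refine ⟨φ, hφ, (InnerProductSpace.toDual ℝ H).symm (WeakDual.toStrongDual a), ?_, fun y => ?_⟩
  · rw [LinearIsometryEquiv.norm_map]
    simpa using ha
  · rw [InnerProductSpace.toDual_symm_apply]
    exact ((WeakDual.eval_continuous y).tendsto a).comp hlim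

theorem exists_subseq_tendsto_integral_mul {ι α : Type*} [Fintype ι] [MeasurableSpace α]
    [MeasurableSpace.CountablyGenerated α] {μ : Measure α} [SFinite μ]
    {f : ℕ → α → EuclideanSpace ℝ ι} {C : ℝ≥0∞} (hC : C ≠ ∞)
    (hf : ∀ k, AEStronglyMeasurable (f k) μ) (hb : ∀ k, eLpNorm (f k) 2 μ ≤ C) :
    ∃ φ : ℕ → ℕ, StrictMono φ ∧ ∃ F : α → EuclideanSpace ℝ ι, StronglyMeasurable F ∧
      eLpNorm F 2 μ ≤ C ∧ ∀ i (g : α → ℝ), MemLp g 2 μ →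
        Tendsto (fun k => ∫ x, f (φ k) x i * g x ∂μ) atTop (𝓝 (∫ x, F x i * g x ∂μ)) := by
  classical
  have hm : ∀ k, MemLp (f k) 2 μ := fun k => ⟨hf k, (hb k).trans_lt hC.lt_top⟩
  have : Fact ((2 : ℝ≥0∞) ≠ ∞) := ⟨by norm_num⟩
  have : SecondCountableTopology (Lp (EuclideanSpace ℝ ι) 2 μ) := Lp.SecondCountableTopology
  obtain ⟨φ, hφ, a, ha, hlim⟩ := exists_subseq_tendsto_inner (x := fun k => (hm k).toLp (f k))
    (C := C.toReal) fun k => by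
      rw [Lp.norm_toLp]
      exact ENNReal.toReal_mono hC (hb k)
  refine ⟨φ, hφ, a, Lp.stronglyMeasurable a, ?_, fun i g hg => ?_⟩
  · rw [← ENNReal.ofReal_toReal hC, ← ENNReal.ofReal_toReal (Lp.eLpNorm_ne_top a)]
    exact ENNReal.ofReal_le_ofReal (by simpa [Lp.norm_def] using ha)
  · have hge : MemLp (fun x => g x • EuclideanSpace.single i (1 : ℝ)) 2 μ := by
      refine MemLp.mono hg (hg.1.smul aestronglyMeasurable_const)
        (Eventually.of_forall fun x => ?_)
      simp [norm_smul]
    have key : ∀ (v : Lp (EuclideanSpace ℝ ι) 2 μ) (w : α → EuclideanSpace ℝ ι), v =ᵐ[μ] w →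
        inner ℝ v (hge.toLp _) = ∫ x, w x i * g x ∂μ := fun v w hvw => by
      rw [L2.inner_def]
      refine integral_congr_ae ?_
      filter_upwards [hge.coeFn_toLp, hvw] with x h1 h2
      rw [h1, h2, real_inner_smul_right, EuclideanSpace.inner_single_right]
      simp [mul_comm]
    have := hlim (hge.toLp _)
    rw [key a a ae_eq_rfl] at this
    simpa only [fun k => key _ _ (hm (φ k)).coeFn_toLp] using this

theorem measurableEmbedding_smul_add {F : Type*} [NormedAddCommGroup F] [NormedSpace ℝ F]
    [MeasurableSpace F] [BorelSpace F] {β : ℝ} (hβ : 0 < β) (z : F) :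
    MeasurableEmbedding fun x : F => β • x + z :=
  ((Homeomorph.smulOfNeZero β hβ.ne').trans (Homeomorph.addRight z)).measurableEmbedding

theorem map_volume_smul_add {β : ℝ} (hβ : 0 < β) (z : E3) :
    Measure.map (fun x : E3 => β • x + z) volume = ENNReal.ofReal (β⁻¹ ^ 3) • volume := by
  have h : (fun x : E3 => β • x + z) = (fun x => x + z) ∘ fun x => β • x := rfl
  rw [h, ← Measure.map_map (by fun_prop) (by fun_prop), Measure.map_addHaar_smul _ hβ.ne',
    Measure.map_smul, map_add_right_eq_self]
  simp [abs_of_pos hβ]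

theorem map_restrict_Ioi_mul {γ : ℝ} (hγ : 0 < γ) :
    Measure.map (fun t : ℝ => γ * t) (volume.restrict (Ioi 0))
      = ENNReal.ofReal γ⁻¹ • volume.restrict (Ioi 0) := by
  have h : Ioi (0 : ℝ) = (fun t : ℝ => γ * t) ⁻¹' Ioi 0 := by
    ext t; simp [hγ]
  have hm : Measurable fun t : ℝ => γ * t := by fun_prop
  conv_lhs => rw [h]
  rw [← Measure.restrict_map hm measurableSet_Ioi, Real.map_volume_mul_left hγ.ne',
    Measure.restrict_smul, abs_of_pos (inv_pos.2 hγ)]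

theorem map_μST {β γ : ℝ} (hβ : 0 < β) (hγ : 0 < γ) (z : E3) :
    Measure.map (fun p : ℝ × E3 => (γ * p.1, β • p.2 + z)) μST
      = ENNReal.ofReal (γ⁻¹ * β⁻¹ ^ 3) • μST := by
  have := Measure.map_prod_map (volume.restrict (Ioi (0 : ℝ))) (volume : Measure E3)
    (f := fun t : ℝ => γ * t) (g := fun x : E3 => β • x + z) (by fun_prop) (by fun_prop)
  rw [map_restrict_Ioi_mul hγ, map_volume_smul_add hβ, Measure.prod_smul_left,
    Measure.prod_smul_right, smul_smul, ← ENNReal.ofReal_mul (by positivity)] at this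
  exact this.symm

theorem measurableEmbedding_prod_smul_add {β γ : ℝ} (hβ : 0 < β) (hγ : 0 < γ) (z : E3) :
    MeasurableEmbedding fun p : ℝ × E3 => (γ * p.1, β • p.2 + z) :=
  ((Homeomorph.mulLeft₀ γ hγ.ne').prodCongr
    ((Homeomorph.smulOfNeZero β hβ.ne').trans (Homeomorph.addRight z))).measurableEmbedding

theorem eLpNorm_comp_smul_add {F : Type*} [NormedAddCommGroup F] (v : E3 → F) {β : ℝ} (hβ : 0 < β)
    (z : E3) (s : ℝ≥0∞) :
    eLpNorm (fun x => v (β • x + z)) s volume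
      = ENNReal.ofReal (β⁻¹ ^ 3) ^ (1 / s).toReal * eLpNorm v s volume := by
  have := (measurableEmbedding_smul_add hβ z).eLpNorm_map_measure (g := v) (p := s) (μ := volume)
  rw [map_volume_smul_add hβ, eLpNorm_smul_measure_of_ne_zero (by simp; positivity)] at this
  exact this.symm

theorem cauchySeq_of_forall_le_add {g : ℕ → ℝ} {B : ℝ} {A : ℝ → ℕ → ℝ}
    (hA : ∀ a, 0 < a → CauchySeq (A a)) (h : ∀ a, 0 < a → ∀ k, |g k - A a k| ≤ B * a) :
    CauchySeq g := by
  rw [Metric.cauchySeq_iff']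
  intro ε hε
  have hB : 0 ≤ B := by simpa using (abs_nonneg _).trans (h 1 one_pos 0)
  set a := ε / (4 * (B + 1)) with ha
  have ha0 : 0 < a := by positivity
  have hBa : B * a ≤ ε / 4 := by
    rw [ha, mul_div_assoc', div_le_div_iff₀ (by positivity) (by norm_num)]
    nlinarith
  obtain ⟨N, hN⟩ := Metric.cauchySeq_iff'.1 (hA a ha0) (ε / 2) (by positivity)
  refine ⟨N, fun k hk => ?_⟩
  have h1 := h a ha0 k
  have h2 := h a ha0 N
  have h3 := hN k hk
  rw [Real.dist_eq] at h3 ⊢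
  have e : g k - g N = (g k - A a k) + (A a k - A a N) + (A a N - g N) := by ring
  rw [e]
  rw [abs_sub_comm] at h2
  calc _ ≤ |g k - A a k| + |A a k - A a N| + |A a N - g N| := abs_add_three _ _ _
    _ < ε := by linarith

theorem exists_integral_Ioc_eq {χ : E3 → ℝ}
    (hχ : Continuous χ) (hχc : HasCompactSupport χ) {a b : ℝ} (ha : 0 ≤ a) :
    ∃ c : ℝ × E3 → ℝ, Measurable c ∧ (∃ M, ∀ p, |c p| ≤ M) ∧
      ∀ f : ℝ × E3 → ℝ, Integrable f μW →
        ∫ s in Ioc a b, ∫ y, f (s, y) * χ y = ∫ p, f p * c p ∂μW := by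
  set ψ : ℝ → ℝ := fun s => max 0 (min 1 (|a| + |b| + 1 - |s|)) with hψ
  have hψc : HasCompactSupport ψ := by
    refine HasCompactSupport.intro (isCompact_closedBall (0 : ℝ) (|a| + |b| + 1)) fun s hs => ?_
    have : |a| + |b| + 1 < |s| := by simpa using hs
    rw [hψ]
    exact max_eq_left ((min_le_right _ _).trans (by linarith))
  have hψ1 : ∀ s ∈ Ioc a b, ψ s = 1 := fun s hs => by
    have : |s| ≤ |a| + |b| := by
      rw [abs_le]
      constructor
      · linarith [neg_abs_le a, abs_nonneg b, hs.1]
      · linarith [le_abs_self b, abs_nonneg a, hs.2]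
    rw [hψ]
    simp only
    rw [min_eq_left (by linarith)]
    simp
  obtain ⟨c, hc, ⟨M, hM⟩, hcw⟩ := exists_eq_wt_mul (b := fun p : ℝ × E3 => ψ p.1 * χ p.2)
    (by rw [hψ]; fun_prop) (hasCompactSupport_prod_mul hψc hχc)
  have hS : MeasurableSet {p : ℝ × E3 | p.1 ∈ Ioc a b} := measurable_fst measurableSet_Ioc
  refine ⟨{p : ℝ × E3 | p.1 ∈ Ioc a b}.indicator c, hc.measurable.indicator hS, ⟨M, fun p => ?_⟩,
    fun f hf => ?_⟩
  · rw [indicator]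
    split_ifs
    · exact hM p
    · simpa using (abs_nonneg _).trans (hM p)
  have hcw' : ∀ p : ℝ × E3, wt p * {p : ℝ × E3 | p.1 ∈ Ioc a b}.indicator c p
      = (Ioc a b).indicator 1 p.1 * χ p.2 := fun p => by
    by_cases hp : p.1 ∈ Ioc a b
    · rw [indicator_of_mem (show p ∈ {p : ℝ × E3 | p.1 ∈ Ioc a b} from hp), indicator_of_mem hp,
        ← hcw, hψ1 _ hp]
      rfl
    · rw [indicator_of_notMem (show p ∉ {p : ℝ × E3 | p.1 ∈ Ioc a b} from hp),
        indicator_of_notMem hp]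
      simp
  have hi : Integrable (fun p => f p * ((Ioc a b).indicator 1 p.1 * χ p.2)) μST := by
    have h1 : Integrable (fun p => f p * {p : ℝ × E3 | p.1 ∈ Ioc a b}.indicator c p) μW := by
      refine hf.mul_bdd (c := M) (hc.measurable.indicator hS).aestronglyMeasurable
        (Eventually.of_forall fun p => ?_)
      rw [indicator]
      split_ifs
      · exact hM p
      · simpa using (abs_nonneg _).trans (hM p)
    rw [integrable_μW] at h1
    refine h1.congr (Eventually.of_forall fun p => ?_)
    simp only [← hcw']
    ring
  rw [integral_μW]
  have e : ∀ p, wt p * (f p * {p : ℝ × E3 | p.1 ∈ Ioc a b}.indicator c p)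
      = f p * ((Ioc a b).indicator 1 p.1 * χ p.2) := fun p => by rw [← hcw']; ring
  simp only [e]
  unfold μST at hi ⊢
  rw [integral_prod _ hi]
  have e2 : ∀ s, ∫ y, f (s, y) * ((Ioc a b).indicator 1 s * χ y)
      = (Ioc a b).indicator (fun s => ∫ y, f (s, y) * χ y) s := fun s => by
    by_cases hs : s ∈ Ioc a b <;> simp [hs]
  simp only [e2]
  rw [setIntegral_indicator measurableSet_Ioc, inter_eq_right.2
    (show Ioc a b ⊆ Ioi 0 from fun s hs => mem_Ioi.2 (ha.trans_lt hs.1))]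

theorem ae_exists_tendsto_integral_mul_laplacian {ν : ℝ} {n : ℝ≥0∞} (hn : n ≠ ∞)
    {u₀ : ℕ → E3 → E3} {u : ℕ → ℝ → E3 → E3} {G : ℕ → ℝ → E3 → Fin 3 → Fin 3 → ℝ}
    (h : ∀ k, IsRegularPair n (u k) (G k)) (hw : ∀ k, WeakEq ν (u₀ k) (u k)) {i : Fin 3}
    (hlim : ∀ g : ℝ × E3 → ℝ, MemLp g 2 μW →
      ∃ c, Tendsto (fun k => ∫ p, u k p.1 p.2 i * g p ∂μW) atTop (𝓝 c))
    {κ : E3 → ℝ} (hκ : ContDiff ℝ (⊤ : ℕ∞) κ) (hκc : HasCompactSupport κ) :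
    ∀ᵐ t ∂(volume.restrict (Ioi (0 : ℝ))),
      ∃ c, Tendsto (fun k => ∫ y, u k t y i * ∑ j, pd (pd κ j) j y) atTop (𝓝 c) := by
  obtain ⟨B, hB⟩ := exists_abs_sub_average_le ν hn hκ hκc i
  have hB' := ae_all_iff.2 fun k => hB _ _ _ (h k) (hw k)
  rw [ae_restrict_iff' measurableSet_Ioi]
  filter_upwards [hB'] with t ht ht0
  refine cauchySeq_tendsto_of_complete (cauchySeq_of_forall_le_add (B := B)
    (A := fun a k => a⁻¹ * ∫ s in Ioc t (t + a), ∫ y, u k s y i * ∑ j, pd (pd κ j) j y) ?_ ?_)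
  · intro a _
    obtain ⟨c, hc, ⟨M, hM⟩, hce⟩ := exists_integral_Ioc_eq (contDiff_laplacian hκ).continuous
      (hasCompactSupport_laplacian hκc) (a := t) (b := t + a) (le_of_lt ht0)
    have hcL : MemLp c 2 μW := MemLp.of_bound hc.aestronglyMeasurable M (Eventually.of_forall hM)
    obtain ⟨l, hl⟩ := hlim c hcL
    have e : ∀ k, ∫ s in Ioc t (t + a), ∫ y, u k s y i * ∑ j, pd (pd κ j) j y
        = ∫ p, u k p.1 p.2 i * c p ∂μW := fun k =>
      hce (fun p => u k p.1 p.2 i) (((h k).memLp_coord_μW hn i).integrable (by norm_num))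
    simp only [e]
    exact (hl.const_mul a⁻¹).cauchySeq
  · exact fun a ha k => ht k ht0 a ha

theorem tendsto_eLpNorm_two_zero {α F : Type*} [MeasurableSpace α] [NormedAddCommGroup F]
    {μ : Measure α} {f : ℕ → α → F}
    (h : Tendsto (fun k => ∫⁻ x, ‖f k x‖ₑ ^ 2 ∂μ) atTop (𝓝 0)) :
    Tendsto (fun k => eLpNorm (f k) 2 μ) atTop (𝓝 0) := by
  have h1 := ((ENNReal.continuous_rpow_const (y := (2 : ℝ)⁻¹)).tendsto 0).comp h
  rw [ENNReal.zero_rpow_of_pos (by norm_num)] at h1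
  refine h1.congr fun k => ?_
  simp only [Function.comp_apply]
  rw [← eLpNorm_two_sq, ← ENNReal.rpow_natCast, ← ENNReal.rpow_mul]
  simp

theorem exists_tendsto_eLpNorm_two_of_bounded {α : Type*} [MeasurableSpace α] {μ : Measure α}
    [IsFiniteMeasure μ] {f : ℕ → α → ℝ} (hf : ∀ k, AEStronglyMeasurable (f k) μ) {M : ℝ}
    (hM : ∀ k x, |f k x| ≤ M) (hlim : ∀ᵐ x ∂μ, ∃ c, Tendsto (fun k => f k x) atTop (𝓝 c)) :
    ∃ g, AEStronglyMeasurable g μ ∧ Tendsto (fun k => eLpNorm (f k - g) 2 μ) atTop (𝓝 0) := by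
  obtain ⟨g, hg, hgl⟩ := exists_stronglyMeasurable_limit_of_tendsto_ae hf hlim
  refine ⟨g, hg.aestronglyMeasurable, tendsto_eLpNorm_two_zero ?_⟩
  have h0 : ∫⁻ _ : α, (0 : ℝ≥0∞) ∂μ = 0 := by simp
  rw [← h0]
  refine tendsto_lintegral_of_dominated_convergence' (fun _ => ENNReal.ofReal (2 * M) ^ 2)
    (fun k => ((hf k).sub hg.aestronglyMeasurable).enorm.pow_const 2) (fun k => ?_) ?_ ?_
  · filter_upwards [hgl] with x hx
    have h1 : |g x| ≤ M := le_of_tendsto hx.abs (Eventually.of_forall fun k => hM k x)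
    refine ENNReal.pow_le_pow_left ?_
    rw [Pi.sub_apply, ← ofReal_norm, Real.norm_eq_abs]
    refine ENNReal.ofReal_le_ofReal ((abs_sub _ _).trans ?_)
    linarith [hM k x]
  · rw [lintegral_const]
    finiteness
  · filter_upwards [hgl] with x hx
    have h1 : Tendsto (fun k => f k x - g x) atTop (𝓝 0) := by simpa using hx.sub_const (g x)
    have h2 := ((ENNReal.continuous_pow 2).comp (continuous_enorm (E := ℝ))).tendsto 0 |>.comp h1
    simpa [Function.comp_def] using h2

theorem sum_pd_pd_comp_sub {η : E3 → ℝ} (hη : ContDiff ℝ (⊤ : ℕ∞) η) (x y : E3) :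
    ∑ j, pd (pd (fun z => η (x - z)) j) j y = ∑ j, pd (pd η j) j (x - y) := by
  have e1 : ∀ (f : E3 → ℝ), ContDiff ℝ (⊤ : ℕ∞) f → ∀ j,
      pd (fun z => f (x - z)) j = fun z => (-1) * pd f j (x - z) := fun f hf j => by
    funext z
    have := pd_comp_smul_add (-1) x (hf.differentiable (by simp)) j z
    simpa [← sub_eq_neg_add] using this
  refine Finset.sum_congr rfl fun j _ => ?_
  rw [e1 η hη]
  have := e1 (pd η j) (contDiff_pd hη j) j
  rw [pd_const_mul, this]
  ring

theorem abs_integral_mul_sub_le {n : ℝ≥0∞} (hn : n ≠ ∞) {f k : E3 → ℝ}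
    (hf : AEStronglyMeasurable f) (hfn : eLpNorm f 2 volume ≤ n) (hk : MemLp k 2 volume) (x : E3) :
    |∫ y, f y * k (x - y)| ≤ (n * eLpNorm k 2 volume).toReal := by
  have hmp : MeasurePreserving (fun y : E3 => x - y) volume volume :=
    Measure.measurePreserving_sub_left volume x
  have h := (enorm_integral_mul_le hf (hk.1.comp_measurePreserving hmp)).trans
    (mul_le_mul_left hfn _)
  rw [eLpNorm_comp_measurePreserving hk.1 hmp] at h
  have h2 := ENNReal.toReal_mono (ENNReal.mul_ne_top hn hk.2.ne) h
  simpa using h2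

theorem exists_tendsto_eLpNorm_laplacian {ν : ℝ} {n : ℝ≥0∞} (hn : n ≠ ∞)
    {u₀ : ℕ → E3 → E3} {u : ℕ → ℝ → E3 → E3} {G : ℕ → ℝ → E3 → Fin 3 → Fin 3 → ℝ}
    (h : ∀ k, IsRegularPair n (u k) (G k)) (hw : ∀ k, WeakEq ν (u₀ k) (u k)) {i : Fin 3}
    (hlim : ∀ g : ℝ × E3 → ℝ, MemLp g 2 μW →
      ∃ c, Tendsto (fun k => ∫ p, u k p.1 p.2 i * g p ∂μW) atTop (𝓝 c))
    {η : E3 → ℝ} (hη : ContDiff ℝ (⊤ : ℕ∞) η) (hηc : HasCompactSupport η) :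
    ∃ g, AEStronglyMeasurable g μW ∧ Tendsto (fun k => eLpNorm
      ((fun p : ℝ × E3 => ∫ y, u k p.1 y i * ∑ j, pd (pd η j) j (p.2 - y)) - g) 2 μW)
      atTop (𝓝 0) := by
  have hc : Continuous fun y => ∑ j, pd (pd η j) j y := (contDiff_laplacian hη).continuous
  have hL : MemLp (fun y => ∑ j, pd (pd η j) j y) 2 volume :=
    hc.memLp_of_hasCompactSupport (hasCompactSupport_laplacian hηc)
  have hm : ∀ k, StronglyMeasurable fun p : ℝ × E3 =>
      ∫ y, u k p.1 y i * ∑ j, pd (pd η j) j (p.2 - y) := fun k =>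
    stronglyMeasurable_convolution ((h k).stronglyMeasurable_coord i) hc.stronglyMeasurable
  refine exists_tendsto_eLpNorm_two_of_bounded (fun k => (hm k).aestronglyMeasurable)
    (M := (n * eLpNorm (fun y => ∑ j, pd (pd η j) j y) 2 volume).toReal) (fun k p => ?_) ?_
  · exact abs_integral_mul_sub_le hn ((h k).stronglyMeasurable_slice p.1 i).aestronglyMeasurable
      ((h k).eLpNorm_coord_le p.1 i) hL p.2
  · rw [ae_μW_iff]
    refine ae_μST_of_forall_ae (measurableSet_exists_tendsto fun k => (hm k).measurable)
      fun x => ?_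
    have h1 := ae_exists_tendsto_integral_mul_laplacian hn h hw hlim
      (κ := fun z => η (x - z)) (hη.comp (contDiff_const.sub contDiff_id))
      (hηc.comp_homeomorph (Homeomorph.subLeft x))
    filter_upwards [h1] with t ht
    simpa only [sum_pd_pd_comp_sub hη] using ht

theorem eLpNorm_scaled {ρ : E3 → ℝ} {R : ℝ} (hR : 0 < R) :
    eLpNorm (scaled ρ R) 2 volume
      = ENNReal.ofReal (R⁻¹ ^ 3) * (ENNReal.ofReal (R ^ 3) ^ (1 / (2 : ℝ≥0∞)).toReal *
        eLpNorm ρ 2 volume) := by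
  have h1 : scaled ρ R = (R⁻¹ ^ 3) • fun x => ρ (R⁻¹ • x + 0) := by
    funext x
    simp [scaled]
  rw [h1, eLpNorm_const_smul, eLpNorm_comp_smul_add ρ (inv_pos.2 hR), inv_inv,
    ← ofReal_norm, Real.norm_of_nonneg (by positivity)]

theorem tendsto_eLpNorm_scaled {ρ : E3 → ℝ} (hρ : MemLp ρ 2 volume) :
    Tendsto (fun R => eLpNorm (scaled ρ R) 2 volume) atTop (𝓝 0) := by
  have h1 : Tendsto (fun R : ℝ => ENNReal.ofReal ((R⁻¹ ^ 3) * (R ^ 3) ^ (1 / 2 : ℝ)) *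
      eLpNorm ρ 2 volume) atTop (𝓝 (ENNReal.ofReal 0 * eLpNorm ρ 2 volume)) := by
    refine ENNReal.Tendsto.mul_const (ENNReal.tendsto_ofReal ?_) (Or.inr hρ.2.ne)
    have h2 : Tendsto (fun R : ℝ => R ^ (-(3 / 2) : ℝ)) atTop (𝓝 0) :=
      tendsto_rpow_neg_atTop (by norm_num)
    refine h2.congr' ?_
    filter_upwards [eventually_gt_atTop 0] with R hR
    rw [inv_pow, ← Real.rpow_natCast, ← Real.rpow_neg hR.le, ← Real.rpow_mul hR.le,
      ← Real.rpow_add hR]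
    norm_num
  simp only [ENNReal.ofReal_zero, zero_mul] at h1
  refine h1.congr' ?_
  filter_upwards [eventually_gt_atTop 0] with R hR
  rw [eLpNorm_scaled hR, ENNReal.ofReal_mul (by positivity), ← mul_assoc,
    ← ENNReal.ofReal_rpow_of_nonneg (by positivity) (by norm_num)]
  simp

theorem exists_tendsto_eLpNorm_of_approx {α : Type*} [MeasurableSpace α] {μ : Measure α}
    {f : ℕ → α → ℝ} (hf : ∀ k, MemLp (f k) 2 μ)
    (happ : ∀ δ : ℝ≥0∞, 0 < δ → ∃ (h : ℕ → α → ℝ) (g : α → ℝ), (∀ k, AEStronglyMeasurable (h k) μ) ∧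
      AEStronglyMeasurable g μ ∧ (∀ k, eLpNorm (f k - h k) 2 μ ≤ δ) ∧
      Tendsto (fun k => eLpNorm (h k - g) 2 μ) atTop (𝓝 0)) :
    ∃ F, MemLp F 2 μ ∧ Tendsto (fun k => eLpNorm (f k - F) 2 μ) atTop (𝓝 0) := by
  have hc : CauchySeq fun k => (hf k).toLp (f k) := by
    rw [EMetric.cauchySeq_iff]
    intro ε hε
    have hδ : 0 < ε / 5 := ENNReal.div_pos hε.ne' (by simp)
    rcases eq_or_ne ε ∞ with rfl | hεt
    · exact ⟨0, fun m _ k _ => edist_lt_top _ _⟩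
    obtain ⟨h, g, hm, hgm, h1, h2⟩ := happ (ε / 5) hδ
    obtain ⟨N, hN⟩ := eventually_atTop.1 (h2.eventually_le_const hδ)
    refine ⟨N, fun m hmN k hkN => ?_⟩
    rw [Lp.edist_toLp_toLp]
    have e : f m - f k = ((f m - h m) + (h m - g)) - ((f k - h k) + (h k - g)) := by abel
    have b : ∀ l, N ≤ l → eLpNorm ((f l - h l) + (h l - g)) 2 μ ≤ ε / 5 + ε / 5 := fun l hl =>
      (eLpNorm_add_le ((hf l).1.sub (hm l)) ((hm l).sub hgm) (by norm_num)).trans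
        (add_le_add (h1 l) (hN l hl))
    rw [e]
    refine ((eLpNorm_sub_le (((hf m).1.sub (hm m)).add ((hm m).sub hgm))
      (((hf k).1.sub (hm k)).add ((hm k).sub hgm)) (by norm_num)).trans
      (add_le_add (b m hmN) (b k hkN))).trans_lt ?_
    have e2 : ε / 5 + ε / 5 + (ε / 5 + ε / 5) = ε * (4 / 5) := by
      simp only [div_eq_mul_inv]; ring
    rw [e2]
    calc ε * (4 / 5) < ε * 1 := by
          refine ENNReal.mul_lt_mul_right hε.ne' hεt ?_
          refine (ENNReal.div_lt_iff (by simp) (by simp)).2 ?_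
          norm_num
      _ = ε := mul_one ε
  obtain ⟨F, hF⟩ := cauchySeq_tendsto_of_complete hc
  refine ⟨F, Lp.memLp F, ?_⟩
  rw [← Lp.tendsto_Lp_iff_tendsto_eLpNorm'' f hf F (Lp.memLp F)]
  simpa using hF

theorem exists_tendsto_eLpNorm_coord {ν : ℝ} {n : ℝ≥0∞} (hn : n ≠ ∞)
    {u₀ : ℕ → E3 → E3} {u : ℕ → ℝ → E3 → E3} {G : ℕ → ℝ → E3 → Fin 3 → Fin 3 → ℝ}
    (h : ∀ k, IsRegularPair n (u k) (G k)) (hw : ∀ k, WeakEq ν (u₀ k) (u k)) {i : Fin 3}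
    (hlim : ∀ g : ℝ × E3 → ℝ, MemLp g 2 μW →
      ∃ c, Tendsto (fun k => ∫ p, u k p.1 p.2 i * g p ∂μW) atTop (𝓝 c)) :
    ∃ F, MemLp F 2 μW ∧
      Tendsto (fun k => eLpNorm ((fun p => u k p.1 p.2 i) - F) 2 μW) atTop (𝓝 0) := by
  obtain ⟨ρ, C, hρ, hρ1, hρi, hC, hη⟩ := exists_laplacian_mollifier
  have hρc : HasCompactSupport ρ := by
    have := hasCompactSupport_scaled hρ1 one_pos
    have e : scaled ρ 1 = ρ := by funext x; simp [scaled]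
    rwa [e] at this
  have hρ2 : MemLp ρ 2 volume := hρ.memLp_of_hasCompactSupport hρc
  refine exists_tendsto_eLpNorm_of_approx (fun k => (h k).memLp_coord_μW hn i) fun δ hδ => ?_
  have hδ2 : 0 < δ / 2 := ENNReal.div_pos hδ.ne' (by simp)
  obtain ⟨ε, hε, hεδ⟩ : ∃ ε : ℝ, 0 < ε ∧ 3 * ENNReal.ofReal (C * ε) ^ 2 * n ≤ (δ / 2) ^ 2 := by
    have h1 : Tendsto (fun ε : ℝ => 3 * ENNReal.ofReal (C * ε) ^ 2 * n) (𝓝[>] 0)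
        (𝓝 (3 * ENNReal.ofReal (C * 0) ^ 2 * n)) := by
      refine Tendsto.mono_left ?_ nhdsWithin_le_nhds
      refine ENNReal.Tendsto.mul_const (ENNReal.Tendsto.const_mul ?_ (Or.inr (by simp)))
        (Or.inr hn)
      exact (ENNReal.continuous_pow 2).tendsto _ |>.comp
        (ENNReal.tendsto_ofReal (tendsto_const_nhds.mul tendsto_id))
    have h2 : 3 * ENNReal.ofReal (C * 0) ^ 2 * n = 0 := by simp
    rw [h2] at h1
    have h3 := (h1.eventually_le_const (pos_iff_ne_zero.2 (pow_ne_zero 2 hδ2.ne'))).and self_mem_nhdsWithin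
    obtain ⟨ε, hε⟩ := h3.exists
    exact ⟨ε, hε.2, hε.1⟩
  obtain ⟨R, hεR, hRδ⟩ : ∃ R : ℝ, ε ≤ R ∧ ∀ k,
      eLpNorm (fun p : ℝ × E3 => mollify ρ R (fun y => u k p.1 y i) p.2) 2 μW ≤ δ / 2 := by
    have h1 : Tendsto (fun R => (μW univ) ^ (1 / 2 : ℝ) * (n * eLpNorm (scaled ρ R) 2 volume)) atTop
        (𝓝 ((μW univ) ^ (1 / 2 : ℝ) * (n * 0))) :=
      ENNReal.Tendsto.const_mul (ENNReal.Tendsto.const_mul (tendsto_eLpNorm_scaled hρ2)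
        (Or.inr hn)) (Or.inr (by finiteness))
    rw [mul_zero, mul_zero] at h1
    obtain ⟨R, hR⟩ := ((h1.eventually_le_const hδ2).and (eventually_ge_atTop ε)).exists
    refine ⟨R, hR.2, fun k => le_trans ?_ hR.1⟩
    have hsc : MemLp (scaled ρ R) 2 volume := (continuous_scaled hρ R).memLp_of_hasCompactSupport
      (hasCompactSupport_scaled hρ1 (hε.trans_le hR.2))
    have hb : ∀ p : ℝ × E3, ‖mollify ρ R (fun y => u k p.1 y i) p.2‖ₑ
        ≤ n * eLpNorm (scaled ρ R) 2 volume := fun p => by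
      rw [mollify_eq, ← ofReal_norm, Real.norm_eq_abs]
      exact ENNReal.ofReal_le_of_le_toReal
        (abs_integral_mul_sub_le hn ((h k).stronglyMeasurable_slice p.1 i).aestronglyMeasurable
        ((h k).eLpNorm_coord_le p.1 i) hsc p.2)
    refine (eLpNorm_le_of_ae_enorm_bound (Eventually.of_forall hb)).trans ?_
    simp [mul_comm]
  have hR := hε.trans_le hεR
  obtain ⟨η, hηs, hηc, hηL, -⟩ := hη ε R hε hεR
  obtain ⟨g, hg, hgl⟩ := exists_tendsto_eLpNorm_laplacian hn h hw hlim hηs hηc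
  refine ⟨fun k p => ∫ y, u k p.1 y i * ∑ j, pd (pd η j) j (p.2 - y), g, fun k => ?_, hg,
    fun k => ?_, hgl⟩
  · exact (stronglyMeasurable_convolution ((h k).stronglyMeasurable_coord i)
      (contDiff_laplacian hηs).continuous.stronglyMeasurable).aestronglyMeasurable
  · have e : (fun p => u k p.1 p.2 i) - (fun p : ℝ × E3 =>
        ∫ y, u k p.1 y i * ∑ j, pd (pd η j) j (p.2 - y))
        = (fun p => u k p.1 p.2 i - mollify ρ ε (fun y => u k p.1 y i) p.2)
          + fun p => mollify ρ R (fun y => u k p.1 y i) p.2 := by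
      funext p
      have h1 := (h k).mollify_sub_mollify hn hρ hρ1 hε hR p.1 i p.2
      simp only [Pi.sub_apply, Pi.add_apply, hηL]
      simp only [scaled] at h1
      rw [← h1]
      ring
    rw [e]
    refine (eLpNorm_add_le ?_ ?_ (by norm_num)).trans ?_
    · exact (((h k).stronglyMeasurable_coord i).sub
        ((h k).stronglyMeasurable_mollify hρ ε i)).aestronglyMeasurable
    · exact ((h k).stronglyMeasurable_mollify hρ R i).aestronglyMeasurable
    rw [← ENNReal.add_halves δ]
    refine add_le_add ?_ (hRδ k)
    refine eLpNorm_two_le_iff.2 (le_trans (lintegral_mono' μW_le le_rfl) ?_)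
    exact ((h k).lintegral_sub_mollify_sq_le hn hρ hρ1 hρi hη hε i).trans hεδ

theorem enorm_sq_euclidean {ι : Type*} [Fintype ι] (v : EuclideanSpace ℝ ι) :
    ‖v‖ₑ ^ 2 = ∑ i, ‖v i‖ₑ ^ 2 := by
  rw [← ofReal_norm, ← ENNReal.ofReal_pow (norm_nonneg _), EuclideanSpace.real_norm_sq_eq,
    ENNReal.ofReal_sum_of_nonneg fun i _ => sq_nonneg _]
  simp only [enorm_sq_eq_ofReal]

theorem measurable_eLpNorm_slice {u : ℝ → E3 → E3} (hu : StronglyMeasurable (Function.uncurry u))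
    (s : ℝ≥0∞) : Measurable fun t => eLpNorm (u t) s volume := by
  have hm : Measurable fun p : ℝ × E3 => ‖u p.1 p.2‖ₑ := hu.enorm
  rcases eq_or_ne s 0 with rfl | hs0
  · simp
  rcases eq_or_ne s ∞ with rfl | hs
  · refine measurable_of_Iic fun c => ?_
    have e : (fun t => eLpNorm (u t) ∞ volume) ⁻¹' Iic c
        = (fun t => volume (Prod.mk t ⁻¹' {p : ℝ × E3 | c < ‖u p.1 p.2‖ₑ})) ⁻¹' {0} := by
      ext t
      simp only [mem_preimage, mem_Iic, mem_singleton_iff, eLpNorm_exponent_top, eLpNormEssSup]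
      have e1 : Prod.mk t ⁻¹' {p : ℝ × E3 | c < ‖u p.1 p.2‖ₑ} = {x | ¬ ‖u t x‖ₑ ≤ c} := by
        ext x; simp
      rw [e1, ← ae_iff]
      exact ⟨fun h => (ae_le_essSup fun x => ‖u t x‖ₑ).mono fun x hx => hx.trans h,
        fun h => essSup_le_of_ae_le c h⟩
    rw [e]
    exact measurable_measure_prodMk_left (measurableSet_lt measurable_const hm)
      (measurableSet_singleton 0)
  · simp only [eLpNorm_eq_lintegral_rpow_enorm_toReal hs0 hs]
    exact (Measurable.lintegral_prod_right' (f := fun p : ℝ × E3 => ‖u p.1 p.2‖ₑ ^ s.toReal)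
      (hm.pow_const _)).pow_const _

theorem mixedNorm_le_of_tendsto {r s N : ℝ≥0∞} (hr : r ≠ 0) {u : ℕ → ℝ → E3 → E3}
    {U : ℝ → E3 → E3}
    (hu : ∀ k, StronglyMeasurable (Function.uncurry (u k)))
    (hlim : ∀ᵐ p ∂μST, Tendsto (fun k => u k p.1 p.2) atTop (𝓝 (U p.1 p.2)))
    (hN : ∀ k, mixedNorm r s (Ioi 0) (u k) ≤ N) : mixedNorm r s (Ioi 0) U ≤ N := by
  have h1 : ∀ᵐ t ∂(volume.restrict (Ioi (0 : ℝ))),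
      eLpNorm (U t) s volume ≤ atTop.liminf fun k => eLpNorm (u k t) s volume := by
    filter_upwards [Measure.ae_ae_of_ae_prod hlim] with t ht
    exact Lp.eLpNorm_lim_le_liminf_eLpNorm
      (fun k => ((hu k).comp_measurable measurable_prodMk_left).aestronglyMeasurable) _ ht
  rcases eq_or_ne r ∞ with rfl | hrt
  · rw [mixedNorm_top_le_iff]
    have h2 := ae_all_iff.2 fun k => mixedNorm_top_le_iff.1 (hN k)
    filter_upwards [h1, h2] with t ht1 ht2
    exact ht1.trans (liminf_le_of_le (by isBoundedDefault) fun b hb =>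
      (hb.exists.choose_spec).trans (ht2 _))
  · have hr' : 0 < r.toReal := ENNReal.toReal_pos hr hrt
    simp only [mixedNorm, hrt, if_false] at hN ⊢
    have key : ∀ a : ℝ≥0∞, a ^ (1 / r.toReal) ≤ N ↔ a ≤ N ^ r.toReal := fun a => by
      rw [one_div, ENNReal.rpow_inv_le_iff hr']
    simp only [key] at hN ⊢
    calc ∫⁻ t in Ioi 0, eLpNorm (U t) s volume ^ r.toReal
        ≤ ∫⁻ t in Ioi 0, atTop.liminf fun k => eLpNorm (u k t) s volume ^ r.toReal := by
          refine lintegral_mono_ae ?_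
          filter_upwards [h1] with t ht
          refine (ENNReal.rpow_le_rpow ht hr'.le).trans ?_
          exact ((ENNReal.monotone_rpow_of_nonneg hr'.le).map_liminf_of_continuousAt _
            ENNReal.continuous_rpow_const.continuousAt (by isBoundedDefault)
            (by isBoundedDefault)).le
      _ ≤ atTop.liminf fun k => ∫⁻ t in Ioi 0, eLpNorm (u k t) s volume ^ r.toReal :=
          lintegral_liminf_le (u := atTop) fun k => (measurable_eLpNorm_slice (hu k) s).pow_const _
      _ ≤ N ^ r.toReal := liminf_le_of_le (by isBoundedDefault) fun b hb =>
          (hb.exists.choose_spec).trans (hN _)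

theorem hasFDerivAt_slice {f : ℝ × E3 → ℝ} (hf : Differentiable ℝ f) (p : ℝ × E3) :
    HasFDerivAt (fun y => f (p.1, y)) ((fderiv ℝ f p).comp (ContinuousLinearMap.inr ℝ ℝ E3)) p.2 :=
  (hf p).hasFDerivAt.comp p.2 (hasFDerivAt_prodMk_right p.1 p.2)

theorem pd_slice {f : ℝ × E3 → ℝ} (hf : Differentiable ℝ f) (j : Fin 3) (p : ℝ × E3) :
    pd (fun y => f (p.1, y)) j p.2 = fderiv ℝ f p (0, EuclideanSpace.single j 1) := by
  rw [pd, (hasFDerivAt_slice hf p).fderiv]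
  simp

theorem deriv_slice {f : ℝ × E3 → ℝ} (hf : Differentiable ℝ f) (p : ℝ × E3) :
    deriv (fun τ => f (τ, p.2)) p.1 = fderiv ℝ f p (1, 0) := by
  have h : HasFDerivAt (fun τ => f (τ, p.2)) _ p.1 :=
    (hf p).hasFDerivAt.comp p.1 (hasFDerivAt_prodMk_left p.1 p.2)
  rw [← fderiv_apply_one_eq_deriv, h.fderiv]
  simp

theorem contDiff_fderiv_apply_const {f : ℝ × E3 → ℝ} (hf : ContDiff ℝ (⊤ : ℕ∞) f) (v : ℝ × E3) :
    ContDiff ℝ (⊤ : ℕ∞) fun p => fderiv ℝ f p v :=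
  (hf.fderiv_right (m := (⊤ : ℕ∞)) (by simp)).clm_apply contDiff_const

theorem contDiff_pd_slice {f : ℝ × E3 → ℝ} (hf : ContDiff ℝ (⊤ : ℕ∞) f) (j : Fin 3) :
    ContDiff ℝ (⊤ : ℕ∞) fun p : ℝ × E3 => pd (fun y => f (p.1, y)) j p.2 := by
  simp only [pd_slice (hf.differentiable (by simp))]
  exact contDiff_fderiv_apply_const hf _

theorem hasCompactSupport_pd_slice {f : ℝ × E3 → ℝ} (hf : ContDiff ℝ (⊤ : ℕ∞) f)
    (hfc : HasCompactSupport f) (j : Fin 3) :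
    HasCompactSupport fun p : ℝ × E3 => pd (fun y => f (p.1, y)) j p.2 := by
  simp only [pd_slice (hf.differentiable (by simp))]
  exact hfc.fderiv_apply ℝ _

theorem contDiff_deriv_slice {f : ℝ × E3 → ℝ} (hf : ContDiff ℝ (⊤ : ℕ∞) f) :
    ContDiff ℝ (⊤ : ℕ∞) fun p : ℝ × E3 => deriv (fun τ => f (τ, p.2)) p.1 := by
  simp only [deriv_slice (hf.differentiable (by simp))]
  exact contDiff_fderiv_apply_const hf _

theorem hasCompactSupport_deriv_slice {f : ℝ × E3 → ℝ} (hf : ContDiff ℝ (⊤ : ℕ∞) f)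
    (hfc : HasCompactSupport f) :
    HasCompactSupport fun p : ℝ × E3 => deriv (fun τ => f (τ, p.2)) p.1 := by
  simp only [deriv_slice (hf.differentiable (by simp))]
  exact hfc.fderiv_apply ℝ _

namespace IsTest

variable {φ : ℝ × E3 → E3}

theorem contDiff_coord (h : IsTest φ) (i : Fin 3) : ContDiff ℝ (⊤ : ℕ∞) fun p => φ p i :=
  contDiff_euclidean.1 h.1 i

theorem hasCompactSupport_coord (h : IsTest φ) (i : Fin 3) : HasCompactSupport fun p => φ p i :=
  h.2.1.comp_left (g := fun v : E3 => v i) rfl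

theorem continuous_timeDeriv (h : IsTest φ) (i : Fin 3) : Continuous fun p => timeDeriv φ p i :=
  (contDiff_deriv_slice (f := fun p => φ p i) (h.contDiff_coord i)).continuous

theorem hasCompactSupport_timeDeriv (h : IsTest φ) (i : Fin 3) :
    HasCompactSupport fun p => timeDeriv φ p i :=
  hasCompactSupport_deriv_slice (f := fun p => φ p i) (h.contDiff_coord i) (h.hasCompactSupport_coord i)

theorem continuous_spaceGrad (h : IsTest φ) (i j : Fin 3) :
    Continuous fun p => spaceGrad φ p i j :=
  (contDiff_pd_slice (f := fun p => φ p i) (h.contDiff_coord i) j).continuous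

theorem hasCompactSupport_spaceGrad (h : IsTest φ) (i j : Fin 3) :
    HasCompactSupport fun p => spaceGrad φ p i j :=
  hasCompactSupport_pd_slice (f := fun p => φ p i) (h.contDiff_coord i) (h.hasCompactSupport_coord i) j

theorem continuous_spaceLap (h : IsTest φ) (i : Fin 3) : Continuous fun p => spaceLap φ p i :=
  continuous_finsetSum _ fun j _ =>
    (contDiff_pd_slice (f := fun p => spaceGrad φ p i j)
      (contDiff_pd_slice (f := fun p => φ p i) (h.contDiff_coord i) j) j).continuous

theorem hasCompactSupport_spaceLap (h : IsTest φ) (i : Fin 3) :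
    HasCompactSupport fun p => spaceLap φ p i := by
  have h1 : ∀ j, HasCompactSupport fun p : ℝ × E3 =>
      pd (fun y => spaceGrad φ (p.1, y) i j) j p.2 := fun j =>
    hasCompactSupport_pd_slice (f := fun p => spaceGrad φ p i j)
      (contDiff_pd_slice (f := fun p => φ p i) (h.contDiff_coord i) j) (h.hasCompactSupport_spaceGrad i j) j
  refine HasCompactSupport.intro (isCompact_iUnion fun j => (h1 j).isCompact)
    fun p hp => Finset.sum_eq_zero fun j _ => ?_
  exact image_eq_zero_of_notMem_tsupport (f := fun p : ℝ × E3 =>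
      pd (fun y => spaceGrad φ (p.1, y) i j) j p.2) fun h2 => hp (mem_iUnion.2 ⟨j, h2⟩)

end IsTest

theorem tendsto_integral_mul_mul_test {f g : ℝ × E3 → ℝ} {fk gk : ℕ → ℝ × E3 → ℝ}
    {b : ℝ × E3 → ℝ} (hf : MemLp f 2 μW) (hg : MemLp g 2 μW) (hfk : ∀ k, MemLp (fk k) 2 μW)
    (hgk : ∀ k, MemLp (gk k) 2 μW) (hb : Continuous b) (hbc : HasCompactSupport b)
    (hft : Tendsto (fun k => eLpNorm (fk k - f) 2 μW) atTop (𝓝 0))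
    (hgt : Tendsto (fun k => eLpNorm (gk k - g) 2 μW) atTop (𝓝 0)) :
    Tendsto (fun k => ∫ p, fk k p * gk k p * b p ∂μST) atTop (𝓝 (∫ p, f p * g p * b p ∂μST)) := by
  obtain ⟨c, hc, ⟨M, hM⟩, hbw⟩ := exists_eq_wt_mul hb hbc
  have e : ∀ F : ℝ × E3 → ℝ, ∫ p, F p * b p ∂μST = ∫ p, F p * c p ∂μW := fun F => by
    rw [integral_μW]
    refine integral_congr_ae (Eventually.of_forall fun p => ?_)
    simp only [hbw]
    ring
  rw [e]
  simp only [fun k => e fun p => fk k p * gk k p]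
  exact tendsto_integral_mul_mul hf hg hfk hgk hc.aestronglyMeasurable hM hft hgt

theorem tendsto_integral_mul_test {f : ℝ × E3 → ℝ} {fk : ℕ → ℝ × E3 → ℝ}
    {b : ℝ × E3 → ℝ} (hf : MemLp f 2 μW) (hfk : ∀ k, MemLp (fk k) 2 μW)
    (hb : Continuous b) (hbc : HasCompactSupport b)
    (hft : Tendsto (fun k => eLpNorm (fk k - f) 2 μW) atTop (𝓝 0)) :
    Tendsto (fun k => ∫ p, fk k p * b p ∂μST) atTop (𝓝 (∫ p, f p * b p ∂μST)) := by
  have h1 : MemLp (fun _ : ℝ × E3 => (1 : ℝ)) 2 μW := memLp_const 1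
  have := tendsto_integral_mul_mul_test hf h1 hfk (fun _ => h1) hb hbc hft (by simp)
  simpa using this

theorem ae_isDivFree_of_tendsto {u : ℕ → ℝ → E3 → E3} {U : ℝ → E3 → E3}
    (hu : ∀ k, StronglyMeasurable (Function.uncurry (u k)))
    (hU : StronglyMeasurable (Function.uncurry U)) (hdiv : ∀ k t, IsDivFree (u k t))
    (hu2 : ∀ k t i, MemLp (fun x => u k t x i) 2 volume)
    (hU2 : ∀ᵐ t ∂(volume.restrict (Ioi (0 : ℝ))), ∀ i, MemLp (fun x => U t x i) 2 volume)
    (hlim : ∀ i, Tendsto (fun k => eLpNorm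
      ((fun p : ℝ × E3 => u k p.1 p.2 i) - fun p => U p.1 p.2 i) 2 μW) atTop (𝓝 0)) :
    ∀ᵐ t ∂(volume.restrict (Ioi (0 : ℝ))), IsDivFree (U t) := by
  have hm : ∀ k i, Measurable fun p : ℝ × E3 =>
      ‖u k p.1 p.2 i - U p.1 p.2 i‖ₑ ^ 2 * ENNReal.ofReal (wt p) := fun k i =>
    ((((EuclideanSpace.proj i).continuous.comp_stronglyMeasurable (hu k)).sub
      ((EuclideanSpace.proj i).continuous.comp_stronglyMeasurable hU)).enorm.pow_const
        2).mul measurable_ofReal_wt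
  set a : ℕ → ℝ → ℝ≥0∞ := fun k t =>
    ∑ i, ∫⁻ x, ‖u k t x i - U t x i‖ₑ ^ 2 * ENNReal.ofReal (wt (t, x)) with ha
  have ham : ∀ k, Measurable (a k) := fun k =>
    Finset.measurable_fun_sum _ fun i _ => (hm k i).lintegral_prod_right'
  have hai : Tendsto (fun k => ∫⁻ t in Ioi (0 : ℝ), a k t) atTop (𝓝 0) := by
    have e : ∀ k, ∫⁻ t in Ioi (0 : ℝ), a k t = ∑ i, eLpNorm
        ((fun p : ℝ × E3 => u k p.1 p.2 i) - fun p => U p.1 p.2 i) 2 μW ^ 2 := fun k => by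
      rw [ha, lintegral_finsetSum _ fun i _ => (hm k i).lintegral_prod_right']
      refine Finset.sum_congr rfl fun i _ => ?_
      rw [eLpNorm_two_sq, μW, lintegral_withDensity_eq_lintegral_mul₀' measurable_ofReal_wt.aemeasurable,
        μST, lintegral_prod]
      · simp only [Pi.mul_apply, Pi.sub_apply, mul_comm]
      · refine ((hm k i).aemeasurable).congr (Eventually.of_forall fun p => ?_)
        simp only [Pi.mul_apply, Pi.sub_apply, mul_comm]
      · exact ((((EuclideanSpace.proj i).continuous.comp_stronglyMeasurable (hu k)).sub
          ((EuclideanSpace.proj i).continuous.comp_stronglyMeasurable hU)).enorm.pow_const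
          2).aemeasurable
    simp only [e]
    have h1 : Tendsto (fun k => ∑ i, eLpNorm
        ((fun p : ℝ × E3 => u k p.1 p.2 i) - fun p => U p.1 p.2 i) 2 μW ^ 2) atTop
        (𝓝 (∑ _i : Fin 3, 0 ^ 2)) :=
      tendsto_finsetSum _ fun i _ => ((ENNReal.continuous_pow 2).tendsto 0).comp (hlim i)
    simpa using h1
  have hl : ∀ᵐ t ∂(volume.restrict (Ioi (0 : ℝ))), atTop.liminf (fun k => a k t) = 0 := by
    have h1 := lintegral_liminf_le (u := atTop) (μ := volume.restrict (Ioi (0 : ℝ))) ham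
    rw [hai.liminf_eq] at h1
    exact (lintegral_eq_zero_iff (Measurable.liminf ham)).1 (le_antisymm h1 bot_le)
  filter_upwards [hl, hU2] with t ht htU φ hφ hφc
  have hp : ∀ i, Continuous (pd φ i) := fun i => (contDiff_pd hφ i).continuous
  have hpc : ∀ i, HasCompactSupport (pd φ i) := fun i => hφc.pd i
  have hwc : Continuous fun x : E3 => Real.sqrt (wt (t, x)) :=
    Real.continuous_sqrt.comp (continuous_wt.comp (by fun_prop))
  have hw0 : ∀ x : E3, Real.sqrt (wt (t, x)) ≠ 0 := fun x => (Real.sqrt_pos.2 (wt_pos _)).ne'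
  have hq : ∀ i, MemLp (fun x => pd φ i x * (Real.sqrt (wt (t, x)))⁻¹) 2 volume := fun i =>
    ((hp i).mul (hwc.inv₀ hw0)).memLp_of_hasCompactSupport ((hpc i).mul_right)
  set M : Fin 3 → ℝ≥0∞ := fun i => eLpNorm (fun x => pd φ i x * (Real.sqrt (wt (t, x)))⁻¹) 2 volume
  have hpi : ∀ i, MemLp (pd φ i) 2 volume := fun i => (hp i).memLp_of_hasCompactSupport (hpc i)
  have hi : ∀ i, Integrable (fun x => U t x i * pd φ i x) := fun i =>
    (htU i).integrable_mul (hpi i)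
  have hik : ∀ k i, Integrable (fun x => u k t x i * pd φ i x) := fun k i =>
    (hu2 k t i).integrable_mul (hpi i)
  have hest : ∀ k, ‖∫ x, ∑ i, U t x i * pd φ i x‖ₑ ^ 2 ≤ (3 * ∑ i, M i ^ 2) * a k t := by
    intro k
    have h0 := hdiv k t φ hφ hφc
    rw [integral_finsetSum _ fun i _ => hik k i] at h0
    have h1 : ∫ x, ∑ i, U t x i * pd φ i x
        = ∑ i, ∫ x, ((U t x i - u k t x i) * Real.sqrt (wt (t, x))) *
          (pd φ i x * (Real.sqrt (wt (t, x)))⁻¹) := by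
      rw [integral_finsetSum _ fun i _ => hi i, ← sub_zero (∑ i, ∫ x, U t x i * pd φ i x), ← h0,
        ← Finset.sum_sub_distrib]
      refine Finset.sum_congr rfl fun i _ => ?_
      rw [← integral_sub (hi i) (hik k i)]
      refine integral_congr_ae (Eventually.of_forall fun x => ?_)
      have := hw0 x
      simp only
      field_simp
    rw [h1]
    refine (ENNReal.pow_le_pow_left (enorm_sum_le _ _)).trans
      ((sum_fin_three_sq_le _).trans ?_)
    rw [mul_assoc, Finset.sum_mul]
    refine mul_le_mul_right (Finset.sum_le_sum fun i _ => ?_) _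
    have h2 := enorm_integral_mul_le
      (((htU i).1.sub (hu2 k t i).1).mul hwc.aestronglyMeasurable) (hq i).1
    refine (ENNReal.pow_le_pow_left h2).trans ?_
    rw [mul_pow, mul_comm]
    refine mul_le_mul_right ?_ _
    rw [eLpNorm_two_sq]
    refine le_trans (le_of_eq ?_) (Finset.single_le_sum (f := fun i =>
      ∫⁻ x, ‖u k t x i - U t x i‖ₑ ^ 2 * ENNReal.ofReal (wt (t, x))) (fun _ _ => bot_le)
      (Finset.mem_univ i))
    refine lintegral_congr fun x => ?_
    simp only [Pi.mul_apply, Pi.sub_apply]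
    rw [enorm_mul, mul_pow, enorm_sq_eq_ofReal (Real.sqrt _), Real.sq_sqrt (wt_pos _).le,
      ← enorm_neg, neg_sub]
  have hfin : 3 * ∑ i, M i ^ 2 ≠ ∞ :=
    ENNReal.mul_ne_top (by simp) (ENNReal.sum_ne_top.2 fun i _ => ENNReal.pow_ne_top (hq i).2.ne)
  have hz : ‖∫ x, ∑ i, U t x i * pd φ i x‖ₑ ^ 2 / (3 * ∑ i, M i ^ 2) ≤ 0 := by
    rw [← ht]
    exact le_liminf_of_le (by isBoundedDefault) (Eventually.of_forall fun k =>
      ENNReal.div_le_of_le_mul' (hest k))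
  rw [nonpos_iff_eq_zero, ENNReal.div_eq_zero_iff] at hz
  simpa [hfin] using hz

theorem stronglyMeasurable_toLp {ι α : Type*} [Fintype ι] [MeasurableSpace α] {f : ι → α → ℝ}
    (hf : ∀ i, Measurable (f i)) :
    StronglyMeasurable fun p => (WithLp.toLp 2 fun i => f i p : EuclideanSpace ℝ ι) :=
  ((PiLp.continuous_toLp 2 fun _ : ι => ℝ).measurable.comp
    (measurable_pi_lambda _ hf)).stronglyMeasurable

theorem eLpNorm_two_sq_euclidean {ι α : Type*} [Fintype ι] [MeasurableSpace α] {μ : Measure α}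
    {f : α → EuclideanSpace ℝ ι} (hf : ∀ i, AEMeasurable (fun x => f x i) μ) :
    eLpNorm f 2 μ ^ 2 = ∑ i, eLpNorm (fun x => f x i) 2 μ ^ 2 := by
  simp only [eLpNorm_two_sq, enorm_sq_euclidean]
  exact lintegral_finsetSum' _ fun i _ => (hf i).enorm.pow_const 2

theorem exists_subseq_tendsto {ν : ℝ} {n : ℝ≥0∞} (hn : n ≠ ∞)
    {u₀ : ℕ → E3 → E3} {u : ℕ → ℝ → E3 → E3} {G : ℕ → ℝ → E3 → Fin 3 → Fin 3 → ℝ}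
    (h : ∀ k, IsRegularPair n (u k) (G k)) (hw : ∀ k, WeakEq ν (u₀ k) (u k)) :
    ∃ φ : ℕ → ℕ, StrictMono φ ∧ ∃ (U : ℝ → E3 → E3) (Γ : ℝ → E3 → Fin 3 → Fin 3 → ℝ),
      StronglyMeasurable (Function.uncurry U) ∧ StronglyMeasurable (Function.uncurry Γ) ∧
      (∀ᵐ p ∂μST, Tendsto (fun k => u (φ k) p.1 p.2) atTop (𝓝 (U p.1 p.2))) ∧
      (∀ i, MemLp (fun p : ℝ × E3 => U p.1 p.2 i) 2 μW) ∧
      (∀ i, Tendsto (fun k => eLpNorm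
        ((fun p : ℝ × E3 => u (φ k) p.1 p.2 i) - fun p => U p.1 p.2 i) 2 μW) atTop (𝓝 0)) ∧
      ∫⁻ p, ∑ i, ∑ j, ENNReal.ofReal (Γ p.1 p.2 i j ^ 2) ∂μST ≤ n ∧
      ∀ i j (g : ℝ × E3 → ℝ), MemLp g 2 μST →
        Tendsto (fun k => ∫ p, G (φ k) p.1 p.2 i j * g p ∂μST) atTop
          (𝓝 (∫ p, Γ p.1 p.2 i j * g p ∂μST)) := by
  obtain ⟨φ₁, hφ₁, F₀, -, -, hF₀⟩ := exists_subseq_tendsto_integral_mul (ι := Fin 3) (μ := μW)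
    (f := fun k p => u k p.1 p.2) (C := 3 * n) (ENNReal.mul_ne_top (by simp) hn)
    (fun k => (h k).stronglyMeasurable.aestronglyMeasurable) fun k => by
      refine (ENNReal.pow_le_pow_left_iff two_ne_zero).1 ?_
      rw [eLpNorm_two_sq_euclidean fun i => ((h k).stronglyMeasurable_coord i).aemeasurable]
      refine (Finset.sum_le_sum fun i _ =>
        ENNReal.pow_le_pow_left ((h k).eLpNorm_coord_μW_le i)).trans ?_
      rw [Finset.sum_const, Finset.card_univ, Fintype.card_fin, nsmul_eq_mul, mul_pow]
      exact mul_le_mul_left (by norm_num) _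
  have hc := fun i => exists_tendsto_eLpNorm_coord hn (fun k => h (φ₁ k)) (fun k => hw (φ₁ k))
    (i := i) fun g hg => ⟨_, hF₀ i g hg⟩
  choose F hF hFl using hc
  obtain ⟨φ₂, hφ₂, Γ, hΓ, hΓn, hΓl⟩ := exists_subseq_tendsto_integral_mul (ι := Fin 3 × Fin 3)
    (μ := μST) (C := n ^ (1 / 2 : ℝ)) (f := fun k p =>
      WithLp.toLp 2 fun q : Fin 3 × Fin 3 => G (φ₁ k) p.1 p.2 q.1 q.2) (by finiteness)
    (fun k => (stronglyMeasurable_toLp fun q : Fin 3 × Fin 3 => ((h (φ₁ k)).stronglyMeasurable_grad_coord q.1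
      q.2).measurable).aestronglyMeasurable) fun k => by
      rw [eLpNorm_two_le_iff, ← ENNReal.rpow_natCast, ← ENNReal.rpow_mul]
      refine le_of_eq_of_le ?_ (((h (φ₁ k)).lintegral_grad_le).trans_eq (by norm_num))
      simp only [enorm_sq_euclidean, enorm_sq_eq_ofReal, Fintype.sum_prod_type]
  set U : ℝ → E3 → E3 := fun t x => WithLp.toLp 2 fun i => (hF i).1.mk (F i) (t, x) with hUdef
  have hUm : StronglyMeasurable (Function.uncurry U) :=
    stronglyMeasurable_toLp fun i => (hF i).1.stronglyMeasurable_mk.measurable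
  have hUF : ∀ i, F i =ᵐ[μW] fun p => U p.1 p.2 i := fun i => (hF i).1.ae_eq_mk
  have hUl : ∀ i, Tendsto (fun k => eLpNorm ((fun p : ℝ × E3 => u (φ₁ k) p.1 p.2 i) -
      fun p => U p.1 p.2 i) 2 μW) atTop (𝓝 0) := fun i =>
    (hFl i).congr fun k => eLpNorm_congr_ae ((ae_eq_refl _).sub (hUF i))
  have hvec : Tendsto (fun k => eLpNorm ((fun p : ℝ × E3 => u (φ₁ (φ₂ k)) p.1 p.2) -
      Function.uncurry U) 2 μW) atTop (𝓝 0) := by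
    refine tendsto_eLpNorm_two_zero ?_
    have h1 : Tendsto (fun k => ∑ i, eLpNorm ((fun p : ℝ × E3 => u (φ₁ (φ₂ k)) p.1 p.2 i) -
      fun p => U p.1 p.2 i) 2 μW ^ 2) atTop (𝓝 (∑ _i : Fin 3, 0 ^ 2)) :=
      tendsto_finsetSum _ fun i _ => ((ENNReal.continuous_pow 2).tendsto 0).comp
        ((hUl i).comp hφ₂.tendsto_atTop)
    have e : ∑ _i : Fin 3, (0 : ℝ≥0∞) ^ 2 = 0 := by simp
    rw [e] at h1
    refine h1.congr fun k => ?_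
    rw [← eLpNorm_two_sq, eLpNorm_two_sq_euclidean]
    · rfl
    · exact fun i => (((h _).stronglyMeasurable_coord i).sub
        ((EuclideanSpace.proj i).continuous.comp_stronglyMeasurable hUm)).aemeasurable
  obtain ⟨φ₃, hφ₃, hae⟩ := (tendstoInMeasure_of_tendsto_eLpNorm two_ne_zero
    (fun k => ((h (φ₁ (φ₂ k))).stronglyMeasurable.aestronglyMeasurable (μ := μW)))
    hUm.aestronglyMeasurable hvec).exists_seq_tendsto_ae
  refine ⟨fun k => φ₁ (φ₂ (φ₃ k)), hφ₁.comp (hφ₂.comp hφ₃), U,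
    fun t x i j => Γ (t, x) (i, j), hUm, ?_, ae_μW_iff.1 hae,
    fun i => (memLp_congr_ae (hUF i)).1 (hF i),
    fun i => (hUl i).comp (hφ₂.comp hφ₃).tendsto_atTop, ?_, fun i j g hg => ?_⟩
  · refine Measurable.stronglyMeasurable ?_
    exact measurable_pi_lambda _ fun i => measurable_pi_lambda _ fun j =>
      ((EuclideanSpace.proj (i, j)).continuous.comp_stronglyMeasurable hΓ).measurable
  · rw [eLpNorm_two_le_iff, ← ENNReal.rpow_natCast, ← ENNReal.rpow_mul] at hΓn
    simpa [enorm_sq_euclidean, enorm_sq_eq_ofReal, Fintype.sum_prod_type] using hΓn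
  · exact (hΓl (i, j) g hg).comp hφ₃.tendsto_atTop

/-- Existence of a weak solution whose norms are all bounded by `n`. -/
def HasBoundedSolution (r s : ℝ≥0∞) (ν : ℝ) (n : ℝ≥0∞) (u₀ : E3 → E3) : Prop :=
  ∃ u G, IsWeakNS ν u₀ u G ∧ mixedNorm ∞ 2 (Ioi 0) u ≤ n ∧
    ∫⁻ t in Ioi (0 : ℝ), gradSq G t ≤ n ∧ mixedNorm r s (Ioi 0) u ≤ n

theorem weakEq_of_tendsto {ν : ℝ} {u₀ : ℕ → E3 → E3} {w : E3 → E3} {u : ℕ → ℝ → E3 → E3}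
    {U : ℝ → E3 → E3} (hw : ∀ k, WeakEq ν (u₀ k) (u k))
    (h0 : ∀ Φ : E3 → E3, Continuous Φ → HasCompactSupport Φ →
      Tendsto (fun k => ∫ x, ∑ i, u₀ k x i * Φ x i) atTop (𝓝 (∫ x, ∑ i, w x i * Φ x i)))
    (hu2 : ∀ k i, MemLp (fun p : ℝ × E3 => u k p.1 p.2 i) 2 μW)
    (hU2 : ∀ i, MemLp (fun p : ℝ × E3 => U p.1 p.2 i) 2 μW)
    (hlim : ∀ i, Tendsto (fun k => eLpNorm
        ((fun p : ℝ × E3 => u k p.1 p.2 i) - fun p => U p.1 p.2 i) 2 μW) atTop (𝓝 0)) :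
    WeakEq ν w U := by
  intro φ hφ
  have hb : ∀ i, Continuous fun p => timeDeriv φ p i + ν * spaceLap φ p i := fun i =>
    (hφ.continuous_timeDeriv i).add (continuous_const.mul (hφ.continuous_spaceLap i))
  have hbc : ∀ i, HasCompactSupport fun p => timeDeriv φ p i + ν * spaceLap φ p i := fun i =>
    (hφ.hasCompactSupport_timeDeriv i).add ((hφ.hasCompactSupport_spaceLap i).mul_left
      (f := fun _ => ν))
  have hi : ∀ v : ℝ → E3 → E3, (∀ i, MemLp (fun p : ℝ × E3 => v p.1 p.2 i) 2 μW) →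
      (∫ p, ((∑ i, v p.1 p.2 i * (timeDeriv φ p i + ν * spaceLap φ p i)) +
         ∑ i, ∑ j, v p.1 p.2 i * v p.1 p.2 j * spaceGrad φ p i j) ∂μST)
      = (∑ i, ∫ p, v p.1 p.2 i * (timeDeriv φ p i + ν * spaceLap φ p i) ∂μST) +
         ∑ i, ∑ j, ∫ p, v p.1 p.2 i * v p.1 p.2 j * spaceGrad φ p i j ∂μST := by
    intro v hv
    have k1 : ∀ i, Integrable (fun p : ℝ × E3 =>
        v p.1 p.2 i * (timeDeriv φ p i + ν * spaceLap φ p i)) μST := fun i =>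
      MemLp.integrable_mul_of_hasCompactSupport' (hv i) (hb i) (hbc i)
    have k2 : ∀ i j, Integrable (fun p : ℝ × E3 =>
        v p.1 p.2 i * v p.1 p.2 j * spaceGrad φ p i j) μST := fun i j =>
      MemLp.integrable_mul_of_hasCompactSupport (hv i) (hv j) (hφ.continuous_spaceGrad i j)
        (hφ.hasCompactSupport_spaceGrad i j)
    rw [integral_add (integrable_finsetSum _ fun i _ => k1 i)
      (integrable_finsetSum _ fun i _ => integrable_finsetSum _ fun j _ => k2 i j),
      integral_finsetSum _ fun i _ => k1 i,
      integral_finsetSum _ fun i _ => integrable_finsetSum _ fun j _ => k2 i j]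
    simp only [fun i => integral_finsetSum Finset.univ fun j _ => k2 i j]
  have h1 : Tendsto (fun k => (∑ i, ∫ p, u k p.1 p.2 i *
        (timeDeriv φ p i + ν * spaceLap φ p i) ∂μST) +
         ∑ i, ∑ j, ∫ p, u k p.1 p.2 i * u k p.1 p.2 j * spaceGrad φ p i j ∂μST) atTop
      (𝓝 ((∑ i, ∫ p, U p.1 p.2 i * (timeDeriv φ p i + ν * spaceLap φ p i) ∂μST) +
         ∑ i, ∑ j, ∫ p, U p.1 p.2 i * U p.1 p.2 j * spaceGrad φ p i j ∂μST)) :=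
    (tendsto_finsetSum _ fun i _ => tendsto_integral_mul_test (hU2 i) (fun k => hu2 k i) (hb i)
      (hbc i) (hlim i)).add (tendsto_finsetSum _ fun i _ => tendsto_finsetSum _ fun j _ =>
      tendsto_integral_mul_mul_test (hU2 i) (hU2 j) (fun k => hu2 k i) (fun k => hu2 k j)
      (hφ.continuous_spaceGrad i j) (hφ.hasCompactSupport_spaceGrad i j) (hlim i) (hlim j))
  have hc0 : Continuous fun x : E3 => φ (0, x) := hφ.1.continuous.comp (by fun_prop)
  have hcc : HasCompactSupport fun x : E3 => φ (0, x) :=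
    HasCompactSupport.intro (hφ.2.1.isCompact.image continuous_snd) fun x hx =>
      image_eq_zero_of_notMem_tsupport fun h => hx ⟨(0, x), h, rfl⟩
  have h2 := (h0 _ hc0 hcc).neg
  rw [hi U hU2]
  refine tendsto_nhds_unique h1 (h2.congr fun k => ?_)
  rw [← hw k φ hφ, hi (u k) (hu2 k)]

theorem isDistGrad_of_tendsto {u : ℕ → ℝ → E3 → E3} {G : ℕ → ℝ → E3 → Fin 3 → Fin 3 → ℝ}
    {U : ℝ → E3 → E3} {Γ : ℝ → E3 → Fin 3 → Fin 3 → ℝ} (h : ∀ k, IsDistGrad (u k) (G k))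
    (hu2 : ∀ k i, MemLp (fun p : ℝ × E3 => u k p.1 p.2 i) 2 μW)
    (hU2 : ∀ i, MemLp (fun p : ℝ × E3 => U p.1 p.2 i) 2 μW)
    (hlim : ∀ i, Tendsto (fun k => eLpNorm
        ((fun p : ℝ × E3 => u k p.1 p.2 i) - fun p => U p.1 p.2 i) 2 μW) atTop (𝓝 0))
    (hG : ∀ i j (g : ℝ × E3 → ℝ), MemLp g 2 μST →
        Tendsto (fun k => ∫ p, G k p.1 p.2 i j * g p ∂μST) atTop
          (𝓝 (∫ p, Γ p.1 p.2 i j * g p ∂μST))) : IsDistGrad U Γ := by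
  intro ψ hψ hψc hψs i j
  have h1 := tendsto_integral_mul_test (hU2 i) (fun k => hu2 k i)
    (contDiff_pd_slice hψ j).continuous (hasCompactSupport_pd_slice hψ hψc j) (hlim i)
  have : IsFiniteMeasureOnCompacts μST := by unfold μST; infer_instance
  have h2 := (hG i j ψ (hψ.continuous.memLp_of_hasCompactSupport hψc)).neg
  exact tendsto_nhds_unique h1 (h2.congr fun k => (h k ψ hψ hψc hψs i j).symm)

theorem HasBoundedSolution.of_tendsto {r s n : ℝ≥0∞} {ν : ℝ} (hr : r ≠ 0) (hn : n ≠ ∞)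
    {u₀ : ℕ → E3 → E3} {w : E3 → E3} (h : ∀ k, HasBoundedSolution r s ν n (u₀ k))
    (h0 : ∀ Φ : E3 → E3, Continuous Φ → HasCompactSupport Φ →
      Tendsto (fun k => ∫ x, ∑ i, u₀ k x i * Φ x i) atTop (𝓝 (∫ x, ∑ i, w x i * Φ x i))) :
    HasBoundedSolution r s ν n w := by
  have h' : ∀ k, ∃ v H, IsRegularPair n v H ∧ WeakEq ν (u₀ k) v ∧
      mixedNorm r s (Ioi 0) v ≤ n := fun k => by
    obtain ⟨u, G, hu, hn2, hG, hrs⟩ := h k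
    obtain ⟨v, H, h1, h2, h3⟩ := hu.exists_isRegularPair hn2 hG r s
    exact ⟨v, H, h1, h2, h3.trans_le hrs⟩
  choose u G hreg hw hrs using h'
  obtain ⟨φ, hφ, U, Γ, hUm, hΓm, hae, hU2, hlim, hΓn, hΓl⟩ := exists_subseq_tendsto hn hreg hw
  have hm := fun k => (hreg (φ k)).stronglyMeasurable
  have h2 : mixedNorm ∞ 2 (Ioi 0) U ≤ n := mixedNorm_le_of_tendsto (by simp) hm hae fun k =>
    mixedNorm_top_le_iff.2 (Eventually.of_forall (hreg (φ k)).eLpNorm_le)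
  have hΓ2 : ∫⁻ t in Ioi (0 : ℝ), gradSq Γ t ≤ n := by
    rwa [lintegral_gradSq hΓm.aestronglyMeasurable]
  have hu2 := fun k => (hreg (φ k)).memLp_coord_μW hn
  refine ⟨U, Γ, ⟨hUm.aestronglyMeasurable, h2.trans_lt hn.lt_top, ?_, hΓm.aestronglyMeasurable,
    hΓ2.trans_lt hn.lt_top, isDistGrad_of_tendsto (fun k => (hreg (φ k)).isDistGrad) hu2 hU2 hlim
    hΓl, weakEq_of_tendsto (fun k => hw (φ k))
    (fun Φ hΦ hΦc => (h0 Φ hΦ hΦc).comp hφ.tendsto_atTop) hu2 hU2 hlim⟩, h2, hΓ2,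
    mixedNorm_le_of_tendsto hr hm hae fun k => hrs (φ k)⟩
  refine ae_isDivFree_of_tendsto hm hUm (fun k => (hreg (φ k)).isDivFree)
    (fun k => (hreg (φ k)).memLp_coord hn) ?_ hlim
  filter_upwards [mixedNorm_top_le_iff.1 h2] with t ht i
  refine ⟨((EuclideanSpace.proj i).continuous.comp_stronglyMeasurable
    (hUm.comp_measurable measurable_prodMk_left)).aestronglyMeasurable,
    ((eLpNorm_mono_enorm fun x => enorm_coord_le _ i).trans ht).trans_lt hn.lt_top⟩

theorem integral_comp_prod_smul_add {β γ : ℝ} (hβ : 0 < β) (hγ : 0 < γ) (z : E3)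
    (F : ℝ × E3 → ℝ) :
    ∫ p, F (γ * p.1, β • p.2 + z) ∂μST = γ⁻¹ * β⁻¹ ^ 3 * ∫ p, F p ∂μST := by
  have := (measurableEmbedding_prod_smul_add hβ hγ z).integral_map (μ := μST) F
  rw [map_μST hβ hγ, integral_smul_measure, ENNReal.toReal_ofReal (by positivity),
    smul_eq_mul] at this
  exact this.symm

theorem lintegral_comp_prod_smul_add {β γ : ℝ} (hβ : 0 < β) (hγ : 0 < γ) (z : E3)
    (F : ℝ × E3 → ℝ≥0∞) :
    ∫⁻ p, F (γ * p.1, β • p.2 + z) ∂μST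
      = ENNReal.ofReal (γ⁻¹ * β⁻¹ ^ 3) * ∫⁻ p, F p ∂μST := by
  have := (measurableEmbedding_prod_smul_add hβ hγ z).lintegral_map (μ := μST) F
  rw [map_μST hβ hγ, lintegral_smul_measure, smul_eq_mul] at this
  exact this.symm

theorem integral_comp_smul_add {β : ℝ} (hβ : 0 < β) (z : E3) (F : E3 → ℝ) :
    ∫ x, F (β • x + z) = β⁻¹ ^ 3 * ∫ x, F x := by
  have := (measurableEmbedding_smul_add hβ z).integral_map (μ := volume) F
  rw [map_volume_smul_add hβ, integral_smul_measure, ENNReal.toReal_ofReal (by positivity),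
    smul_eq_mul] at this
  exact this.symm

theorem quasiMeasurePreserving_smul_add {β : ℝ} (hβ : 0 < β) (z : E3) :
    Measure.QuasiMeasurePreserving (fun x : E3 => β • x + z) volume volume :=
  ⟨(measurableEmbedding_smul_add hβ z).measurable, by
    rw [map_volume_smul_add hβ]; exact Measure.smul_absolutelyContinuous⟩

theorem quasiMeasurePreserving_mul_Ioi {γ : ℝ} (hγ : 0 < γ) :
    Measure.QuasiMeasurePreserving (fun t : ℝ => γ * t) (volume.restrict (Ioi 0))
      (volume.restrict (Ioi 0)) :=
  ⟨by fun_prop, by rw [map_restrict_Ioi_mul hγ]; exact Measure.smul_absolutelyContinuous⟩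

theorem quasiMeasurePreserving_prod_smul_add {β γ : ℝ} (hβ : 0 < β) (hγ : 0 < γ) (z : E3) :
    Measure.QuasiMeasurePreserving (fun p : ℝ × E3 => (γ * p.1, β • p.2 + z)) μST μST :=
  ⟨(measurableEmbedding_prod_smul_add hβ hγ z).measurable, by
    rw [map_μST hβ hγ]; exact Measure.smul_absolutelyContinuous⟩

theorem inv_smul_smul_add {β : ℝ} (hβ : 0 < β) (z x : E3) :
    β⁻¹ • (β • x + z) + -(β⁻¹ • z) = x := by
  rw [smul_add, inv_smul_smul₀ hβ.ne', add_neg_cancel_right]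

theorem HasCompactSupport.comp_prod_smul_add {F : Type*} [Zero F] {f : ℝ × E3 → F}
    (hf : HasCompactSupport f) {β γ : ℝ} (hβ : 0 < β) (hγ : 0 < γ) (z : E3) :
    HasCompactSupport fun p : ℝ × E3 => f (γ⁻¹ * p.1, β⁻¹ • p.2 + -(β⁻¹ • z)) :=
  hf.comp_homeomorph ((Homeomorph.mulLeft₀ γ⁻¹ (inv_pos.2 hγ).ne').prodCongr
    ((Homeomorph.smulOfNeZero β⁻¹ (inv_pos.2 hβ).ne').trans (Homeomorph.addRight (-(β⁻¹ • z)))))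

theorem IsDivFree.comp_smul_add {v : E3 → E3} (h : IsDivFree v) (a : ℝ) {β : ℝ} (hβ : 0 < β)
    (z : E3) : IsDivFree fun x => a • v (β • x + z) := by
  intro φ hφ hφc
  have hψ : ContDiff ℝ (⊤ : ℕ∞) fun y : E3 => φ (β⁻¹ • y + -(β⁻¹ • z)) :=
    hφ.comp ((contDiff_id.const_smul _).add contDiff_const)
  have hψc : HasCompactSupport fun y : E3 => φ (β⁻¹ • y + -(β⁻¹ • z)) :=
    hφc.comp_homeomorph ((Homeomorph.smulOfNeZero β⁻¹ (inv_pos.2 hβ).ne').trans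
      (Homeomorph.addRight (-(β⁻¹ • z))))
  have hd : Differentiable ℝ φ := hφ.differentiable (by simp)
  have key := integral_comp_smul_add hβ z
    (fun y => ∑ i, v y i * pd (fun y : E3 => φ (β⁻¹ • y + -(β⁻¹ • z))) i y)
  rw [h _ hψ hψc, mul_zero] at key
  have : ∫ x, ∑ i, (a • v (β • x + z)) i * pd φ i x = a * β *
      ∫ x, ∑ i, v (β • x + z) i * pd (fun y : E3 => φ (β⁻¹ • y + -(β⁻¹ • z))) i (β • x + z) := by
    rw [← integral_const_mul]
    congr 1 with x
    rw [Finset.mul_sum]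
    refine Finset.sum_congr rfl fun i _ => ?_
    rw [pd_comp_smul_add _ _ hd, inv_smul_smul_add hβ, PiLp.smul_apply, smul_eq_mul]
    field_simp
  rw [this, key, mul_zero]

theorem IsTest.comp_prod_smul_add {φ : ℝ × E3 → E3} (h : IsTest φ) {β γ : ℝ} (hβ : 0 < β)
    (hγ : 0 < γ) (z : E3) :
    IsTest fun p : ℝ × E3 => φ (γ⁻¹ * p.1, β⁻¹ • p.2 + -(β⁻¹ • z)) := by
  refine ⟨h.1.comp ((contDiff_const.mul contDiff_fst).prodMk
    ((contDiff_snd.const_smul _).add contDiff_const)), h.2.1.comp_prod_smul_add hβ hγ z, ?_⟩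
  intro p
  have hd : ∀ i, Differentiable ℝ fun y => φ (γ⁻¹ * p.1, y) i := fun i =>
    ((h.contDiff_coord i).comp (contDiff_const.prodMk contDiff_id)).differentiable (by simp)
  have : ∀ i, pd (fun y : E3 => φ (γ⁻¹ * p.1, β⁻¹ • y + -(β⁻¹ • z)) i) i p.2
      = β⁻¹ * pd (fun y => φ (γ⁻¹ * p.1, y) i) i (β⁻¹ • p.2 + -(β⁻¹ • z)) := fun i =>
    pd_comp_smul_add β⁻¹ (-(β⁻¹ • z)) (hd i) i p.2
  simp only [this]
  rw [← Finset.mul_sum, h.2.2 (γ⁻¹ * p.1, β⁻¹ • p.2 + -(β⁻¹ • z)), mul_zero]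

theorem WeakEq.comp_smul_add {ν₀ : ℝ} {v₀ : E3 → E3} {v : ℝ → E3 → E3} (h : WeakEq ν₀ v₀ v)
    {A β : ℝ} (hA : 0 < A) (hβ : 0 < β) (z : E3) :
    WeakEq (ν₀ * A / β) (fun x => A • v₀ (β • x + z))
      fun t x => A • v (A * β * t) (β • x + z) := by
  intro φ hφ
  have hγ : 0 < A * β := mul_pos hA hβ
  set γ := A * β with hγd
  set φ' : ℝ × E3 → E3 := fun p => φ (γ⁻¹ * p.1, β⁻¹ • p.2 + -(β⁻¹ • z)) with hφ'
  have hT : ∀ p : ℝ × E3, (γ⁻¹ * (γ * p.1), β⁻¹ • (β • p.2 + z) + -(β⁻¹ • z)) = p := fun p => by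
    rw [inv_mul_cancel_left₀ hγ.ne', inv_smul_smul_add hβ]
  have hd : ∀ i t, Differentiable ℝ fun y => φ (t, y) i := fun i t =>
    ((hφ.contDiff_coord i).comp (contDiff_const.prodMk contDiff_id)).differentiable (by simp)
  have hd2 : ∀ i j t, Differentiable ℝ fun y => pd (fun z => φ (t, z) i) j y := fun i j t =>
    (contDiff_pd ((hφ.contDiff_coord i).comp (contDiff_const.prodMk contDiff_id))
      j).differentiable (by simp)
  have e1 : ∀ (p : ℝ × E3) i, timeDeriv φ p i
      = γ * timeDeriv φ' (γ * p.1, β • p.2 + z) i := by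
    intro p i
    have := deriv_comp_mul_left γ⁻¹
      (fun τ => φ (τ, β⁻¹ • (β • p.2 + z) + -(β⁻¹ • z)) i) (γ * p.1)
    simp only [timeDeriv, hφ']
    rw [this, inv_mul_cancel_left₀ hγ.ne', smul_eq_mul, mul_inv_cancel_left₀ hγ.ne',
      inv_smul_smul_add hβ]
  have e2' : ∀ (t : ℝ) (y : E3) i j, pd (fun y => φ' (γ * t, y) i) j y
      = β⁻¹ * pd (fun y => φ (t, y) i) j (β⁻¹ • y + -(β⁻¹ • z)) := by
    intro t y i j
    simp only [hφ', inv_mul_cancel_left₀ hγ.ne']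
    exact pd_comp_smul_add β⁻¹ (-(β⁻¹ • z)) (hd i t) j y
  have e2 : ∀ (p : ℝ × E3) i j, spaceGrad φ p i j
      = β * spaceGrad φ' (γ * p.1, β • p.2 + z) i j := by
    intro p i j
    simp only [spaceGrad]
    rw [e2', inv_smul_smul_add hβ, mul_inv_cancel_left₀ hβ.ne']
  have e3 : ∀ (p : ℝ × E3) i, spaceLap φ p i
      = β ^ 2 * spaceLap φ' (γ * p.1, β • p.2 + z) i := by
    intro p i
    simp only [spaceLap, e2']
    rw [Finset.mul_sum]
    refine Finset.sum_congr rfl fun j _ => ?_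
    rw [pd_const_mul, pd_comp_smul_add β⁻¹ (-(β⁻¹ • z)) (hd2 i j p.1) j, inv_smul_smul_add hβ]
    field_simp
  have key := h φ' (hφ.comp_prod_smul_add hβ hγ z)
  set F : ℝ × E3 → ℝ := fun p => (∑ i, v p.1 p.2 i * (timeDeriv φ' p i + ν₀ * spaceLap φ' p i)) +
    ∑ i, ∑ j, v p.1 p.2 i * v p.1 p.2 j * spaceGrad φ' p i j with hF
  have hL : ∀ p : ℝ × E3,
      ((∑ i, (A • v (γ * p.1) (β • p.2 + z)) i *
          (timeDeriv φ p i + ν₀ * A / β * spaceLap φ p i)) +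
        ∑ i, ∑ j, (A • v (γ * p.1) (β • p.2 + z)) i * (A • v (γ * p.1) (β • p.2 + z)) j *
          spaceGrad φ p i j) = A * γ * F (γ * p.1, β • p.2 + z) := by
    intro p
    simp only [hF, mul_add, Finset.mul_sum, e1, e2, e3, PiLp.smul_apply, smul_eq_mul]
    congr 1
    · refine Finset.sum_congr rfl fun i _ => ?_
      rw [hγd]
      field_simp
    · refine Finset.sum_congr rfl fun i _ => Finset.sum_congr rfl fun j _ => ?_
      rw [hγd]
      ring
  have hR := integral_comp_smul_add hβ z fun y => ∑ i, v₀ y i * φ' (0, y) i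
  have hR' : ∫ x, ∑ i, (A • v₀ (β • x + z)) i * φ (0, x) i
      = A * ∫ x, ∑ i, v₀ (β • x + z) i * φ' (0, β • x + z) i := by
    rw [← integral_const_mul]
    congr 1 with x
    simp only [hφ', mul_zero, inv_smul_smul_add hβ, Finset.mul_sum, PiLp.smul_apply, smul_eq_mul,
      mul_assoc]
  rw [integral_congr_ae (.of_forall hL), integral_const_mul,
    integral_comp_prod_smul_add hβ hγ z F, key, hR', hR]
  field_simp

theorem IsDistGrad.comp_smul_add {v : ℝ → E3 → E3} {G : ℝ → E3 → Fin 3 → Fin 3 → ℝ}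
    (h : IsDistGrad v G) (A : ℝ) {β γ : ℝ} (hβ : 0 < β) (hγ : 0 < γ) (z : E3) :
    IsDistGrad (fun t x => A • v (γ * t) (β • x + z))
      fun t x i j => A * β * G (γ * t) (β • x + z) i j := by
  intro ψ hψ hψc hψs i j
  set ψ' : ℝ × E3 → ℝ := fun p => ψ (γ⁻¹ * p.1, β⁻¹ • p.2 + -(β⁻¹ • z)) with hψ'
  have hψ'd : ContDiff ℝ (⊤ : ℕ∞) ψ' := hψ.comp ((contDiff_const.mul contDiff_fst).prodMk
    ((contDiff_snd.const_smul _).add contDiff_const))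
  have hψ's : tsupport ψ' ⊆ {p | 0 < p.1} := by
    intro p hp
    have hc : Continuous fun p : ℝ × E3 => (γ⁻¹ * p.1, β⁻¹ • p.2 + -(β⁻¹ • z)) := by fun_prop
    have := hψs (tsupport_comp_subset_preimage ψ hc hp)
    exact (pos_iff_pos_of_mul_pos this).1 (inv_pos.2 hγ)
  have hd : ∀ t, Differentiable ℝ fun y => ψ (t, y) := fun t =>
    (hψ.comp (contDiff_const.prodMk contDiff_id)).differentiable (by simp)
  have e : ∀ p : ℝ × E3, pd (fun y => ψ (p.1, y)) j p.2
      = β * pd (fun y => ψ' (γ * p.1, y)) j (β • p.2 + z) := by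
    intro p
    simp only [hψ', inv_mul_cancel_left₀ hγ.ne']
    rw [pd_comp_smul_add β⁻¹ (-(β⁻¹ • z)) (hd p.1) j, inv_smul_smul_add hβ,
      mul_inv_cancel_left₀ hβ.ne']
  have e' : ∀ p : ℝ × E3, ψ p = ψ' (γ * p.1, β • p.2 + z) := by
    intro p
    simp only [hψ', inv_mul_cancel_left₀ hγ.ne', inv_smul_smul_add hβ]
  have key := h ψ' hψ'd (hψc.comp_prod_smul_add hβ hγ z) hψ's i j
  have hL : ∀ p : ℝ × E3, (A • v (γ * p.1) (β • p.2 + z)) i * pd (fun y => ψ (p.1, y)) j p.2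
      = A * β * (fun q : ℝ × E3 => v q.1 q.2 i * pd (fun y => ψ' (q.1, y)) j q.2)
        (γ * p.1, β • p.2 + z) := by
    intro p
    rw [e p, PiLp.smul_apply, smul_eq_mul]
    ring
  have hR : ∀ p : ℝ × E3, A * β * G (γ * p.1) (β • p.2 + z) i j * ψ p
      = A * β * (fun q : ℝ × E3 => G q.1 q.2 i j * ψ' q) (γ * p.1, β • p.2 + z) := by
    intro p
    rw [e' p]
    ring
  rw [integral_congr_ae (.of_forall hL), integral_congr_ae (.of_forall hR), integral_const_mul,
    integral_const_mul,
    integral_comp_prod_smul_add hβ hγ z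
      fun q : ℝ × E3 => v q.1 q.2 i * pd (fun y => ψ' (q.1, y)) j q.2,
    integral_comp_prod_smul_add hβ hγ z fun q : ℝ × E3 => G q.1 q.2 i j * ψ' q, key]
  ring

theorem mixedNorm_comp_smul_add {r : ℝ≥0∞} (hr0 : r ≠ 0) (s : ℝ≥0∞) (v : ℝ → E3 → E3) {A β γ : ℝ} (hA : 0 < A)
    (hβ : 0 < β) (hγ : 0 < γ) (z : E3) :
    mixedNorm r s (Ioi 0) (fun t x => A • v (γ * t) (β • x + z))
      ≤ ENNReal.ofReal A * ENNReal.ofReal (β⁻¹ ^ 3) ^ (1 / s).toReal *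
        ENNReal.ofReal γ⁻¹ ^ (1 / r).toReal * mixedNorm r s (Ioi 0) v := by
  obtain ⟨K, hK⟩ : ∃ K, K = ENNReal.ofReal A * ENNReal.ofReal (β⁻¹ ^ 3) ^ (1 / s).toReal :=
    ⟨_, rfl⟩
  rw [← hK]
  have hKt : K ≠ ∞ := hK ▸ ENNReal.mul_ne_top ENNReal.ofReal_ne_top
    (ENNReal.rpow_ne_top_of_nonneg ENNReal.toReal_nonneg ENNReal.ofReal_ne_top)
  have e : ∀ t, eLpNorm (fun x => A • v (γ * t) (β • x + z)) s volume
      = K * eLpNorm (v (γ * t)) s volume := by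
    intro t
    have h1 := eLpNorm_const_smul A (fun x => v (γ * t) (β • x + z)) s (volume : Measure E3)
    have h2 : A • (fun x => v (γ * t) (β • x + z)) = fun x => A • v (γ * t) (β • x + z) := rfl
    rw [h2] at h1
    rw [h1, eLpNorm_comp_smul_add _ hβ, ← mul_assoc, Real.enorm_eq_ofReal hA.le, hK]
  by_cases hr : r = ∞
  · subst hr
    rw [mixedNorm_top_le_iff]
    have h1 := (mixedNorm_top_le_iff (s := s) (I := Ioi 0) (u := v)).1 le_rfl
    filter_upwards [(quasiMeasurePreserving_mul_Ioi hγ).ae h1] with t ht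
    rw [e]
    simp only [ENNReal.div_top, ENNReal.toReal_zero, ENNReal.rpow_zero, mul_one]
    gcongr
  · have hrp : 0 < r.toReal := ENNReal.toReal_pos hr0 hr
    unfold mixedNorm
    rw [if_neg hr, if_neg hr]
    have hm : MeasurableEmbedding fun t : ℝ => γ * t :=
      (Homeomorph.mulLeft₀ γ hγ.ne').measurableEmbedding
    have h2 := hm.lintegral_map (μ := volume.restrict (Ioi 0))
      (fun t => eLpNorm (v t) s volume ^ r.toReal)
    rw [map_restrict_Ioi_mul hγ, lintegral_smul_measure, smul_eq_mul] at h2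
    simp only [e, ENNReal.mul_rpow_of_nonneg _ _ hrp.le]
    rw [lintegral_const_mul' _ _ (ENNReal.rpow_ne_top_of_nonneg hrp.le hKt), ← h2,
      ENNReal.mul_rpow_of_nonneg _ _ (by positivity), ENNReal.mul_rpow_of_nonneg _ _ (by positivity),
      ← ENNReal.rpow_mul, mul_one_div_cancel hrp.ne', ENNReal.rpow_one, ENNReal.toReal_div,
      ENNReal.toReal_one, mul_assoc]

theorem lintegral_gradSq_comp_smul_add {G : ℝ → E3 → Fin 3 → Fin 3 → ℝ}
    (hG : AEStronglyMeasurable (Function.uncurry G) μST) (c : ℝ) {β γ : ℝ}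
    (hβ : 0 < β) (hγ : 0 < γ) (z : E3) :
    ∫⁻ t in Ioi (0 : ℝ), gradSq (fun t x i j => c * G (γ * t) (β • x + z) i j) t
      = ENNReal.ofReal (c ^ 2 * (γ⁻¹ * β⁻¹ ^ 3)) * ∫⁻ t in Ioi (0 : ℝ), gradSq G t := by
  have hm : AEStronglyMeasurable (Function.uncurry fun t x i j => c * G (γ * t) (β • x + z) i j)
      μST :=
    (hG.comp_quasiMeasurePreserving (quasiMeasurePreserving_prod_smul_add hβ hγ z)).const_smul c
  rw [lintegral_gradSq hm, lintegral_gradSq hG, ENNReal.ofReal_mul (sq_nonneg c), mul_assoc,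
    ← lintegral_comp_prod_smul_add hβ hγ z, ← lintegral_const_mul' _ _ ENNReal.ofReal_ne_top]
  congr 1 with p
  simp only [Finset.mul_sum, mul_pow, ENNReal.ofReal_mul (sq_nonneg c)]

theorem IsWeakNS.comp_smul_add {ν₀ : ℝ} {v₀ : E3 → E3} {v : ℝ → E3 → E3}
    {G : ℝ → E3 → Fin 3 → Fin 3 → ℝ} (h : IsWeakNS ν₀ v₀ v G)
    {A β : ℝ} (hA : 0 < A) (hβ : 0 < β) (z : E3) :
    IsWeakNS (ν₀ * A / β) (fun x => A • v₀ (β • x + z))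
      (fun t x => A • v (A * β * t) (β • x + z))
      (fun t x i j => A * β * G (A * β * t) (β • x + z) i j) := by
  obtain ⟨h1, h2, h3, h4, h5, h6, h7⟩ := h
  have hγ : 0 < A * β := mul_pos hA hβ
  have hq := quasiMeasurePreserving_prod_smul_add hβ hγ z
  refine ⟨(h1.comp_quasiMeasurePreserving hq).const_smul A, ?_, ?_,
    (h4.comp_quasiMeasurePreserving hq).const_smul (A * β), ?_,
    h6.comp_smul_add A hβ hγ z, WeakEq.comp_smul_add h7 hA hβ z⟩
  · refine (mixedNorm_comp_smul_add ENNReal.top_ne_zero 2 v hA hβ hγ z).trans_lt ?_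
    refine ENNReal.mul_lt_top (ENNReal.mul_lt_top (ENNReal.mul_lt_top ENNReal.ofReal_lt_top ?_) ?_)
      h2 <;> exact ENNReal.rpow_lt_top_of_nonneg ENNReal.toReal_nonneg ENNReal.ofReal_ne_top
  · filter_upwards [(quasiMeasurePreserving_mul_Ioi hγ).ae h3] with t ht
    exact ht.comp_smul_add A hβ z
  · rw [lintegral_gradSq_comp_smul_add h4 _ hβ hγ]
    exact ENNReal.mul_lt_top ENNReal.ofReal_lt_top h5

theorem tendsto_eLpNorm_two_indicator {f : E3 → ℝ} (hf : MemLp f 2 volume) {a : ℕ → ℝ}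
    (ha : Tendsto a atTop atTop) :
    Tendsto (fun k => eLpNorm ({x : E3 | a k ≤ ‖x‖}.indicator f) 2 volume) atTop (𝓝 0) := by
  have hms : ∀ k, MeasurableSet {x : E3 | a k ≤ ‖x‖} := fun k =>
    measurableSet_le measurable_const measurable_norm
  have hsq : Tendsto (fun k => eLpNorm ({x : E3 | a k ≤ ‖x‖}.indicator f) 2 volume ^ 2) atTop
      (𝓝 0) := by
    simp only [eLpNorm_two_sq]
    have hfin : ∫⁻ x, ‖f x‖ₑ ^ 2 ≠ ∞ := by
      rw [← eLpNorm_two_sq]; exact ENNReal.pow_ne_top hf.2.ne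
    have := tendsto_lintegral_of_dominated_convergence' (μ := (volume : Measure E3))
      (F := fun k x => ‖{x : E3 | a k ≤ ‖x‖}.indicator f x‖ₑ ^ 2) (f := fun _ => 0)
      (fun x => ‖f x‖ₑ ^ 2) (fun k => ((hf.1.indicator (hms k)).enorm.pow_const 2))
      (fun k => .of_forall fun x => by
        simp only
        gcongr
        by_cases hx : x ∈ {x : E3 | a k ≤ ‖x‖} <;> simp [hx]) hfin
      (.of_forall fun x => by
        refine tendsto_const_nhds.congr' ?_
        filter_upwards [ha.eventually_gt_atTop ‖x‖] with k hk
        rw [indicator_of_notMem (by simpa using hk)]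
        simp)
    simpa using this
  have := hsq.ennrpow_const (1 / 2)
  rw [ENNReal.zero_rpow_of_pos (by norm_num)] at this
  refine this.congr fun k => ?_
  rw [← ENNReal.rpow_natCast, ← ENNReal.rpow_mul]
  norm_num

theorem tendsto_integral_translate_mul {f φ : E3 → ℝ} (hf : MemLp f 2 volume)
    (hφ : Continuous φ) (hφc : HasCompactSupport φ) {z : ℕ → E3}
    (hz : Tendsto (fun k => ‖z k‖) atTop atTop) :
    Tendsto (fun k => ∫ x, f (x + z k) * φ x) atTop (𝓝 0) := by
  obtain ⟨R, hR⟩ := hφc.isCompact.isBounded.exists_norm_le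
  have hφ2 : MemLp φ 2 volume := hφ.memLp_of_hasCompactSupport hφc
  have ha : Tendsto (fun k => ‖z k‖ - R) atTop atTop := tendsto_atTop_add_const_right _ _ hz
  have hms : ∀ k, MeasurableSet {x : E3 | ‖z k‖ - R ≤ ‖x‖} := fun k =>
    measurableSet_le measurable_const measurable_norm
  have hlim := ENNReal.Tendsto.mul_const (b := eLpNorm φ 2 volume)
    (tendsto_eLpNorm_two_indicator hf ha) (Or.inr hφ2.2.ne)
  rw [zero_mul] at hlim
  rw [tendsto_zero_iff_enorm_tendsto_zero]
  refine tendsto_of_tendsto_of_tendsto_of_le_of_le tendsto_const_nhds hlim (fun _ => zero_le)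
    fun k => ?_
  set g := {x : E3 | ‖z k‖ - R ≤ ‖x‖}.indicator f with hg
  have hgm : AEStronglyMeasurable g volume := hf.1.indicator (hms k)
  have e : ∫ x, f (x + z k) * φ x = ∫ x, g (x + z k) * φ x := by
    congr 1 with x
    by_cases hx : x ∈ tsupport φ
    · have h1 := hR x hx
      have h2 := norm_sub_le (x + z k) x
      rw [add_sub_cancel_left] at h2
      have h3 : x + z k ∈ {x : E3 | ‖z k‖ - R ≤ ‖x‖} := by
        rw [mem_ofPred_eq]
        linarith
      rw [hg, indicator_of_mem h3]
    · rw [image_eq_zero_of_notMem_tsupport hx, mul_zero, mul_zero]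
  have hmp := measurePreserving_add_right (volume : Measure E3) (z k)
  simp only
  rw [e, ← eLpNorm_comp_measurePreserving hgm hmp]
  exact enorm_integral_mul_le (hgm.comp_measurePreserving hmp) hφ2.1

/-- Integration against a continuous compactly supported field is an inner product in `L²`. -/
theorem exists_inner_eq_integral {Φ : E3 → E3} (hΦ : Continuous Φ) (hΦc : HasCompactSupport Φ) :
    ∃ g : Lp E3 2 (volume : Measure E3), ∀ f : Lp E3 2 (volume : Measure E3),
      ∫ x, ∑ i, f x i * Φ x i = inner ℝ g f := by
  have h2 : MemLp Φ 2 volume := hΦ.memLp_of_hasCompactSupport hΦc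
  refine ⟨h2.toLp Φ, fun f => ?_⟩
  rw [L2.inner_def]
  refine integral_congr_ae ?_
  filter_upwards [h2.coeFn_toLp] with x hx
  rw [hx, PiLp.inner_apply]
  simp

theorem L2σ_add {f g : Lp E3 2 (volume : Measure E3)} (hf : f ∈ L2σ) (hg : g ∈ L2σ) :
    f + g ∈ L2σ := by
  intro φ hφ hφc
  have hc : ∀ i, Continuous (pd φ i) := fun i => (contDiff_pd hφ i).continuous
  have hΦ : Continuous fun x => (WithLp.toLp 2 fun i => pd φ i x : E3) := by fun_prop
  have hΦc : HasCompactSupport fun x => (WithLp.toLp 2 fun i => pd φ i x : E3) := by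
    refine HasCompactSupport.intro hφc.isCompact fun x hx => ?_
    ext i
    exact image_eq_zero_of_notMem_tsupport (f := pd φ i)
      fun h => hx (tsupport_fderiv_apply_subset ℝ _ h)
  obtain ⟨G, hG⟩ := exists_inner_eq_integral hΦ hΦc
  have h1 := hf φ hφ hφc
  have h2 := hg φ hφ hφc
  have h3 := hG (f + g)
  rw [inner_add_right, ← hG f, ← hG g] at h3
  exact h3.trans (by rw [h1, h2, add_zero])

theorem tendsto_integral_of_tendsto_Lp {u : ℕ → Lp E3 2 (volume : Measure E3)}
    {w : Lp E3 2 (volume : Measure E3)} (h : Tendsto u atTop (𝓝 w)) {Φ : E3 → E3}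
    (hΦ : Continuous Φ) (hΦc : HasCompactSupport Φ) :
    Tendsto (fun k => ∫ x, ∑ i, u k x i * Φ x i) atTop (𝓝 (∫ x, ∑ i, w x i * Φ x i)) := by
  obtain ⟨G, hG⟩ := exists_inner_eq_integral hΦ hΦc
  simp only [hG]
  exact tendsto_const_nhds.inner h

namespace HasBoundedSolution

variable {r s n : ℝ≥0∞} {ν : ℝ}

theorem congr {u₀ v₀ : E3 → E3} (h : HasBoundedSolution r s ν n u₀) (h0 : u₀ =ᵐ[volume] v₀) :
    HasBoundedSolution r s ν n v₀ := by
  obtain ⟨u, G, ⟨h1, h2, h3, h4, h5, h6, h7⟩, hn⟩ := h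
  exact ⟨u, G, ⟨h1, h2, h3, h4, h5, h6, WeakEq.congr h7 (.of_forall fun _ => rfl) h0⟩, hn⟩

theorem translate (hr : r ≠ 0) {u₀ : E3 → E3} (h : HasBoundedSolution r s ν n u₀) (z : E3) :
    HasBoundedSolution r s ν n fun x => u₀ (x + z) := by
  obtain ⟨u, G, hu, h1, h2, h3⟩ := h
  have key := hu.comp_smul_add one_pos one_pos z
  have n1 := mixedNorm_comp_smul_add ENNReal.top_ne_zero 2 u one_pos one_pos one_pos z
  have n2 := mixedNorm_comp_smul_add hr s u one_pos one_pos one_pos z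
  have n3 := lintegral_gradSq_comp_smul_add hu.2.2.2.1 1 one_pos one_pos z
  simp only [one_smul, one_mul, mul_one, div_one, inv_one, one_pow, ENNReal.ofReal_one,
    ENNReal.one_rpow] at key n1 n2 n3
  exact ⟨_, _, key, n1.trans h1, n3.le.trans h2, n2.trans h3⟩

end HasBoundedSolution

theorem isClosed_hasBoundedSolution {r s n : ℝ≥0∞} (hr : r ≠ 0) (hn : n ≠ ∞) (ν : ℝ) :
    IsClosed {u₀ : L2σ | HasBoundedSolution r s ν n (u₀ : Lp E3 2 (volume : Measure E3))} := by
  refine IsSeqClosed.isClosed fun u w hu huw => ?_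
  refine HasBoundedSolution.of_tendsto hr hn hu fun Φ hΦ hΦc => ?_
  exact tendsto_integral_of_tendsto_Lp ((continuous_subtype_val.tendsto w).comp huw) hΦ hΦc

/-- The uniform bound near one datum moves to a neighbourhood of the origin: add the datum at
infinity and translate back. -/
theorem hasBoundedSolution_of_ball {r s n : ℝ≥0∞} (hr : r ≠ 0) (hn : n ≠ ∞) {ν ε : ℝ}
    (v₀ : L2σ) (hball : ∀ u₀ : L2σ, dist u₀ v₀ < ε →
      HasBoundedSolution r s ν n (u₀ : Lp E3 2 (volume : Measure E3)))
    {w : E3 → E3} (hw : MemLp w 2 volume) (hwd : IsDivFree w)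
    (hwε : eLpNorm w 2 volume < ENNReal.ofReal ε) : HasBoundedSolution r s ν n w := by
  set z : ℕ → E3 := fun k => EuclideanSpace.single 0 (k : ℝ) with hzd
  have hz : Tendsto (fun k => ‖z k‖) atTop atTop := by
    simpa [hzd] using tendsto_natCast_atTop_atTop (R := ℝ)
  set V : Lp E3 2 (volume : Measure E3) := v₀.1 with hV
  have hVm : MemLp V 2 volume := Lp.memLp V
  refine HasBoundedSolution.of_tendsto (u₀ := fun k x => V (x + z k) + w x) hr hn (fun k => ?_) ?_
  · have hmp := measurePreserving_add_right (volume : Measure E3) (-z k)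
    have hwk : MemLp (fun x => w (x + -z k)) 2 volume := hw.comp_measurePreserving hmp
    have hwkσ : hwk.toLp _ ∈ L2σ := by
      have := hwd.comp_smul_add 1 one_pos (-z k)
      simp only [one_smul] at this
      exact this.congr hwk.coeFn_toLp.symm
    have h1 := hball ⟨V + hwk.toLp _, L2σ_add v₀.2 hwkσ⟩ (by
      rw [Subtype.dist_eq, dist_eq_norm, ← hV, add_sub_cancel_left, Lp.norm_toLp,
        show eLpNorm (fun x => w (x + -z k)) 2 volume = eLpNorm w 2 volume from
          eLpNorm_comp_measurePreserving hw.1 hmp]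
      exact ENNReal.toReal_lt_of_lt_ofReal hwε)
    refine (h1.translate hr (z k)).congr ?_
    have h2 : ∀ᵐ x, (V + hwk.toLp _ : Lp E3 2 (volume : Measure E3)) x = V x + w (x + -z k) := by
      filter_upwards [Lp.coeFn_add V (hwk.toLp _), hwk.coeFn_toLp] with x e1 e2
      rw [e1, Pi.add_apply, e2]
    filter_upwards [(measurePreserving_add_right (volume : Measure E3)
      (z k)).quasiMeasurePreserving.ae h2] with x hx
    rw [hx, add_neg_cancel_right]
  · intro Φ hΦ hΦc
    have hΦi : ∀ i, Continuous fun x => Φ x i := fun i => by fun_prop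
    have hΦci : ∀ i, HasCompactSupport fun x => Φ x i := fun i =>
      hΦc.comp_left (g := fun v : E3 => v i) rfl
    have hΦ2 : ∀ i, MemLp (fun x => Φ x i) 2 volume := fun i =>
      (hΦi i).memLp_of_hasCompactSupport (hΦci i)
    have hc : ∀ {f : E3 → E3}, MemLp f 2 volume → ∀ i, MemLp (fun x => f x i) 2 volume :=
      fun hf i => (EuclideanSpace.proj (𝕜 := ℝ) i).comp_memLp' hf
    have hVk : ∀ k, MemLp (fun x => V (x + z k)) 2 volume := fun k =>
      hVm.comp_measurePreserving (measurePreserving_add_right (volume : Measure E3) (z k))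
    have i1 : ∀ k i, Integrable fun x => V (x + z k) i * Φ x i := fun k i =>
      (hc (hVk k) i).integrable_mul (hΦ2 i)
    have i2 : ∀ i, Integrable fun x => w x i * Φ x i := fun i =>
      (hc hw i).integrable_mul (hΦ2 i)
    have e : ∀ k, ∫ x, ∑ i, (V (x + z k) + w x) i * Φ x i
        = ∑ i, ((∫ x, V (x + z k) i * Φ x i) + ∫ x, w x i * Φ x i) := by
      intro k
      have i3 : ∀ i, Integrable fun x => V (x + z k) i * Φ x i + w x i * Φ x i := fun i =>
        (i1 k i).add (i2 i)
      simp only [PiLp.add_apply, add_mul]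
      rw [integral_finsetSum _ fun i _ => i3 i]
      exact Finset.sum_congr rfl fun i _ => integral_add (i1 k i) (i2 i)
    simp only [e]
    rw [integral_finsetSum _ fun i _ => i2 i]
    refine tendsto_finsetSum _ fun i _ => ?_
    simpa using (tendsto_integral_translate_mul (hc hVm i) (hΦi i) (hΦci i) hz).add_const
      (∫ x, w x i * Φ x i)

theorem exists_uniform_bound {r s : ℝ≥0∞} (hr : r ≠ 0) {ν : ℝ}
    (h : ¬ IsMeagre {u₀ : L2σ | ∃ u G,
        IsWeakNS ν ((u₀ : Lp E3 2 (volume : Measure E3)) : E3 → E3) u G ∧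
        mixedNorm r s (Ioi 0) u < ∞}) :
    ∃ (n : ℕ) (ε : ℝ), 0 < ε ∧ ∀ w : E3 → E3, MemLp w 2 volume → IsDivFree w →
      eLpNorm w 2 volume < ENNReal.ofReal ε → HasBoundedSolution r s ν n w := by
  have hcl : ∀ n : ℕ, IsClosed {u₀ : L2σ | HasBoundedSolution r s ν n
      (u₀ : Lp E3 2 (volume : Measure E3))} := fun n =>
    isClosed_hasBoundedSolution hr (ENNReal.natCast_ne_top n) ν
  obtain ⟨n, hn⟩ : ∃ n : ℕ, (interior {u₀ : L2σ | HasBoundedSolution r s ν n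
      (u₀ : Lp E3 2 (volume : Measure E3))}).Nonempty := by
    by_contra! hc
    refine h (IsMeagre.mono ?_ (isMeagre_iUnion fun n : ℕ =>
      ((hcl n).isNowhereDense_iff.2 (hc n)).isMeagre))
    rintro u₀ ⟨u, G, hu, hrs⟩
    obtain ⟨n, hn⟩ := ENNReal.exists_nat_gt (max_lt (max_lt hu.2.1 hu.2.2.2.2.1) hrs).ne
    rw [max_lt_iff, max_lt_iff] at hn
    exact mem_iUnion.2 ⟨n, u, G, hu, hn.1.1.le, hn.1.2.le, hn.2.le⟩
  obtain ⟨v₀, hv₀⟩ := hn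
  obtain ⟨ε, hε, hb⟩ := Metric.mem_nhds_iff.1 (mem_interior_iff_mem_nhds.1 hv₀)
  exact ⟨n, ε, hε, fun w hw hwd hwε => hasBoundedSolution_of_ball hr (ENNReal.natCast_ne_top n) v₀
    (fun u₀ hu₀ => hb hu₀) hw hwd hwε⟩

theorem scaling_factor_eq {ν ν₀ δ N : ℝ} (hν : 0 < ν) (hν₀ : 0 < ν₀) (hδ : 0 < δ) (hN : 0 < N)
    (ρ σ : ℝ) :
    ν * (δ * ν / (ν₀ * N)) ^ 2 / ν₀ * (((δ * ν / (ν₀ * N)) ^ 2)⁻¹ ^ 3) ^ σ *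
        (ν * (δ * ν / (ν₀ * N)) ^ 2 / ν₀ * (δ * ν / (ν₀ * N)) ^ 2)⁻¹ ^ ρ
      = ν₀ ^ (5 * ρ + 6 * σ - 3) * δ ^ (2 - 4 * ρ - 6 * σ) *
        ν ^ (-(3 : ℝ) * (5 / 3 * ρ + 2 * σ - 1)) * N ^ ((2 : ℝ) * (2 * ρ + 3 * σ - 1)) := by
  obtain ⟨a, rfl⟩ : ∃ a, Real.exp a = ν := ⟨_, Real.exp_log hν⟩
  obtain ⟨b, rfl⟩ : ∃ a, Real.exp a = ν₀ := ⟨_, Real.exp_log hν₀⟩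
  obtain ⟨d, rfl⟩ : ∃ a, Real.exp a = δ := ⟨_, Real.exp_log hδ⟩
  obtain ⟨m, rfl⟩ : ∃ a, Real.exp a = N := ⟨_, Real.exp_log hN⟩
  simp only [← Real.exp_add, ← Real.exp_sub, ← Real.exp_mul, ← Real.exp_neg, ← Real.exp_nat_mul]
  congr 1
  push_cast
  ring

theorem mixedNorm_zero {r : ℝ≥0∞} (hr : r ≠ 0) (s : ℝ≥0∞) : mixedNorm r s (Ioi 0) 0 = 0 := by
  by_cases hr' : r = ∞
  · subst hr'
    exact nonpos_iff_eq_zero.1 (mixedNorm_top_le_iff.2 (.of_forall fun t => by simp))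
  · have := ENNReal.toReal_pos hr hr'
    simp [mixedNorm, hr', this]

theorem isWeakNS_zero (ν : ℝ) : IsWeakNS ν 0 0 0 := by
  refine ⟨aestronglyMeasurable_zero, ?_, .of_forall fun _ => isDivFree_zero,
    aestronglyMeasurable_zero, ?_, ?_, ?_⟩
  · rw [mixedNorm_zero ENNReal.top_ne_zero]
    exact ENNReal.zero_lt_top
  · simp [gradSq]
  · intro ψ _ _ _ i j
    simp
  · intro φ _
    simp

theorem exists_bounds_of_uniform_bound {r s : ℝ≥0∞} (hr : r ≠ 0) {ν₀ ε : ℝ} {n : ℕ}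
    (hν₀ : 0 < ν₀) (hε : 0 < ε)
    (h : ∀ w : E3 → E3, MemLp w 2 volume → IsDivFree w →
      eLpNorm w 2 volume < ENNReal.ofReal ε → HasBoundedSolution r s ν₀ n w) :
    ∃ C : ℝ, 0 < C ∧ ∀ ν : ℝ, 0 < ν → ∀ u₀ : L2σ, ∃ u G,
      IsWeakNS ν ((u₀ : Lp E3 2 (volume : Measure E3)) : E3 → E3) u G ∧
      mixedNorm ∞ 2 (Ioi 0) u + ENNReal.ofReal (Real.sqrt ν) * gradL2 G
        ≤ ENNReal.ofReal (C * ‖(u₀ : Lp E3 2 (volume : Measure E3))‖) ∧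
      mixedNorm r s (Ioi 0) u
        ≤ ENNReal.ofReal (C * ν ^ (-(3 : ℝ) * (5 / 3 * (1 / r).toReal + 2 * (1 / s).toReal - 1)) *
            ‖(u₀ : Lp E3 2 (volume : Measure E3))‖ ^
              ((2 : ℝ) * (2 * (1 / r).toReal + 3 * (1 / s).toReal - 1))) := by
  set ρ := (1 / r).toReal with hρ
  set σ := (1 / s).toReal with hσ
  set δ := ε / 2 with hδd
  have hδ : 0 < δ := half_pos hε
  set K := ν₀ ^ (5 * ρ + 6 * σ - 3) * δ ^ (2 - 4 * ρ - 6 * σ) with hK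
  have hK0 : 0 < K := by positivity
  refine ⟨n / δ + √(ν₀ * n) / δ + K * n + 1, by positivity, fun ν hν u₀ => ?_⟩
  set C := n / δ + √(ν₀ * n) / δ + K * n + 1 with hC
  set U : Lp E3 2 (volume : Measure E3) := u₀.1 with hU
  have hUm : MemLp U 2 volume := Lp.memLp U
  by_cases hU0 : U = 0
  · have h0 : (0 : E3 → E3) =ᵐ[volume] U := by
      rw [hU0]; exact (Lp.coeFn_zero E3 2 volume).symm
    obtain ⟨h1, h2, h3, h4, h5, h6, h7⟩ := isWeakNS_zero ν
    refine ⟨0, 0, ⟨h1, h2, h3, h4, h5, h6, WeakEq.congr h7 (.of_forall fun _ => rfl) h0⟩, ?_, ?_⟩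
    · have e : gradL2 0 = 0 := by simp [gradL2, gradSq]
      simp [mixedNorm_zero ENNReal.top_ne_zero, e]
    · rw [mixedNorm_zero hr]
      exact zero_le
  have hN : 0 < ‖U‖ := norm_pos_iff.2 hU0
  set N := ‖U‖ with hNd
  have hUN : eLpNorm U 2 volume = ENNReal.ofReal N := by
    rw [hNd, Lp.norm_def, ENNReal.ofReal_toReal hUm.2.ne]
  have hscal := scaling_factor_eq hν hν₀ hδ hN ρ σ
  set q := δ * ν / (ν₀ * N) with hq
  have hq0 : 0 < q := by positivity
  have hβ : 0 < q ^ 2 := by positivity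
  set A := ν * q ^ 2 / ν₀ with hA
  have hA0 : 0 < A := by positivity
  have hsqrt : ∀ x : ℝ, 0 < x →
      ENNReal.ofReal ((x ^ 2) ^ 3) ^ (1 / (2 : ℝ≥0∞)).toReal = ENNReal.ofReal (x ^ 3) := by
    intro x hx
    have e : (1 / (2 : ℝ≥0∞)).toReal = 1 / 2 := by simp
    rw [e, ENNReal.ofReal_rpow_of_pos (by positivity), ← Real.sqrt_eq_rpow,
      show (x ^ 2) ^ 3 = (x ^ 3) ^ 2 by ring, Real.sqrt_sq (by positivity)]
  set w : E3 → E3 := fun x => A⁻¹ • U ((q ^ 2)⁻¹ • x + 0) with hw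
  have hβ' : 0 < (q ^ 2)⁻¹ := inv_pos.2 hβ
  have hw2 : eLpNorm w 2 volume = ENNReal.ofReal δ := by
    have h1 := eLpNorm_const_smul A⁻¹ (fun x => U ((q ^ 2)⁻¹ • x + 0)) 2 (volume : Measure E3)
    have h2 : A⁻¹ • (fun x => U ((q ^ 2)⁻¹ • x + 0)) = w := rfl
    rw [h2] at h1
    rw [h1, eLpNorm_comp_smul_add _ hβ', inv_inv, hsqrt q hq0, hUN,
      Real.enorm_eq_ofReal (inv_pos.2 hA0).le, ← ENNReal.ofReal_mul (by positivity),
      ← ENNReal.ofReal_mul (by positivity)]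
    congr 1
    rw [hA, hq]
    field_simp
  have hwm : MemLp w 2 volume :=
    ⟨(hUm.1.comp_quasiMeasurePreserving (quasiMeasurePreserving_smul_add hβ' 0)).const_smul A⁻¹,
      by rw [hw2]; exact ENNReal.ofReal_lt_top⟩
  have hwd : IsDivFree w := IsDivFree.comp_smul_add u₀.2 A⁻¹ hβ' 0
  obtain ⟨v, G, hv, hv2, hvG, hvrs⟩ := h w hwm hwd (by
    rw [hw2]; exact (ENNReal.ofReal_lt_ofReal_iff hε).2 (half_lt_self hε))
  have hsol := hv.comp_smul_add hA0 hβ 0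
  have hν' : ν₀ * A / q ^ 2 = ν := by
    rw [hA]
    field_simp
  have hw' : (fun x => A • w (q ^ 2 • x + 0)) = U := by
    ext1 x
    simp only [hw, add_zero]
    rw [inv_smul_smul₀ hβ.ne', smul_inv_smul₀ hA0.ne']
  rw [hν', hw'] at hsol
  have hγ : 0 < A * q ^ 2 := mul_pos hA0 hβ
  refine ⟨_, _, hsol, ?_, ?_⟩
  · have n1 := mixedNorm_comp_smul_add ENNReal.top_ne_zero 2 v hA0 hβ hγ 0
    have n2 := lintegral_gradSq_comp_smul_add hv.2.2.2.1 (A * q ^ 2) hβ hγ 0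
    have b1 : mixedNorm ∞ 2 (Ioi 0) (fun t x => A • v (A * q ^ 2 * t) (q ^ 2 • x + 0))
        ≤ ENNReal.ofReal (n / δ * N) := by
      refine n1.trans ?_
      rw [← inv_pow q 2, hsqrt q⁻¹ (inv_pos.2 hq0), ENNReal.div_top, ENNReal.toReal_zero,
        ENNReal.rpow_zero, mul_one, ← ENNReal.ofReal_mul hA0.le]
      refine (mul_le_mul_right hv2 _).trans (le_of_eq ?_)
      rw [← ENNReal.ofReal_natCast, ← ENNReal.ofReal_mul (by positivity)]
      congr 1
      rw [hA, hq]
      field_simp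
    have b2 : ENNReal.ofReal √ν *
        gradL2 (fun t x i j => A * q ^ 2 * G (A * q ^ 2 * t) (q ^ 2 • x + 0) i j)
        ≤ ENNReal.ofReal (√(ν₀ * n) / δ * N) := by
      unfold gradL2
      rw [n2]
      calc _ ≤ ENNReal.ofReal √ν * (ENNReal.ofReal
              ((A * q ^ 2) ^ 2 * ((A * q ^ 2)⁻¹ * (q ^ 2)⁻¹ ^ 3)) * (n : ℝ≥0∞)) ^ (1 / 2 : ℝ) := by
            gcongr
        _ = ENNReal.ofReal (√ν * √((A * q ^ 2) ^ 2 * ((A * q ^ 2)⁻¹ * (q ^ 2)⁻¹ ^ 3) * n)) := by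
            rw [← ENNReal.ofReal_natCast, ← ENNReal.ofReal_mul (by positivity),
              ENNReal.ofReal_rpow_of_nonneg (by positivity) (by norm_num),
              ← ENNReal.ofReal_mul (by positivity), ← Real.sqrt_eq_rpow]
        _ = ENNReal.ofReal (√(ν₀ * n) / δ * N) := by
            congr 1
            rw [← Real.sqrt_mul hν.le, show √(ν₀ * n) / δ * N = √(ν₀ * n) * (N / δ) by ring,
              ← Real.sqrt_sq (show 0 ≤ N / δ by positivity), ← Real.sqrt_mul (by positivity)]
            congr 1
            rw [hA, hq]
            field_simp
    refine (add_le_add b1 b2).trans ?_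
    rw [← ENNReal.ofReal_add (by positivity) (by positivity), ← add_mul]
    refine ENNReal.ofReal_le_ofReal (mul_le_mul_of_nonneg_right ?_ hN.le)
    have : 0 ≤ K * n := by positivity
    linarith
  · refine (mixedNorm_comp_smul_add hr s v hA0 hβ hγ 0).trans ?_
    rw [← hρ, ← hσ, ENNReal.ofReal_rpow_of_pos (by positivity),
      ENNReal.ofReal_rpow_of_pos (by positivity), ← ENNReal.ofReal_mul (by positivity),
      ← ENNReal.ofReal_mul (by positivity), hscal]
    refine (mul_le_mul_right hvrs _).trans ?_
    rw [← ENNReal.ofReal_natCast, ← ENNReal.ofReal_mul (by positivity)]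
    refine ENNReal.ofReal_le_ofReal ?_
    have hX : 0 < ν ^ (-(3 : ℝ) * (5 / 3 * ρ + 2 * σ - 1)) *
      N ^ ((2 : ℝ) * (2 * ρ + 3 * σ - 1)) := by positivity
    have hKC : K * n ≤ C := by
      have : 0 ≤ (n : ℝ) / δ + √(ν₀ * n) / δ := by positivity
      linarith
    have := mul_le_mul_of_nonneg_right hKC hX.le
    linarith only [this]

/-- Implication (i) ⇒ (ii) of the main theorem, for `X = L^s(ℝ³;ℝ³)`, `Z = L²_σ`:
if for some viscosity a non-meagre set of `L²_σ` data admits a weak solution in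
`L^r(0,∞;L^s)`, then the a priori estimates hold for all viscosities and all data. -/
theorem stmt_3 (r s : ℝ≥0∞) (hr : 4/3 < r) (hs : 4/3 < s)
    (h1 : 1 < 2/r + 3/s) (h2 : 2/r + 3/s < 3/2)
    (hyp : ∃ ν : ℝ, 0 < ν ∧
      ¬ IsMeagre {u₀ : L2σ | ∃ u G,
        IsWeakNS ν ((u₀ : Lp E3 2 (volume : Measure E3)) : E3 → E3) u G ∧
        mixedNorm r s (Ioi 0) u < ∞}) :
    ∃ C : ℝ, 0 < C ∧ ∀ ν : ℝ, 0 < ν → ∀ u₀ : L2σ, ∃ u G,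
      IsWeakNS ν ((u₀ : Lp E3 2 (volume : Measure E3)) : E3 → E3) u G ∧
      mixedNorm ∞ 2 (Ioi 0) u + ENNReal.ofReal (Real.sqrt ν) * gradL2 G
        ≤ ENNReal.ofReal (C * ‖(u₀ : Lp E3 2 (volume : Measure E3))‖) ∧
      mixedNorm r s (Ioi 0) u
        ≤ ENNReal.ofReal (C * ν ^ (-(3:ℝ) * ((5/(3*r) + 2/s).toReal - 1)) *
            ‖(u₀ : Lp E3 2 (volume : Measure E3))‖ ^ ((2:ℝ) * ((2/r + 3/s).toReal - 1))) := by
  obtain ⟨ν₀, hν₀, hm⟩ := hyp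
  have hr0 : r ≠ 0 := ne_bot_of_gt hr
  have hs0 : s ≠ 0 := ne_bot_of_gt hs
  obtain ⟨n, ε, hε, hb⟩ := exists_uniform_bound hr0 hm
  have hdiv : ∀ {t : ℝ≥0∞}, t ≠ 0 → ∀ c : ℝ≥0∞, (c / t).toReal = c.toReal * (1 / t).toReal := by
    intro t _ c
    rw [← ENNReal.toReal_mul, mul_one_div]
  have e1 : (2 / r + 3 / s).toReal = 2 * (1 / r).toReal + 3 * (1 / s).toReal := by
    rw [ENNReal.toReal_add (ENNReal.div_ne_top (by simp) hr0) (ENNReal.div_ne_top (by simp) hs0),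
      hdiv hr0, hdiv hs0]
    simp
  have e2 : (5 / (3 * r) + 2 / s).toReal = 5 / 3 * (1 / r).toReal + 2 * (1 / s).toReal := by
    have h3r : 3 * r ≠ 0 := mul_ne_zero (by simp) hr0
    rw [ENNReal.toReal_add (ENNReal.div_ne_top (by simp) h3r) (ENNReal.div_ne_top (by simp) hs0),
      hdiv h3r, hdiv hs0]
    simp
    ring
  rw [e1, e2]
  exact exists_bounds_of_uniform_bound hr0 hν₀ hε hb
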